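/- arXiv:0811.0103 — 2 statements merged into one kernel-verified Lean document; each statement's English description precedes it below -/
import Mathlib

section
/- Fix finite nonempty sets SP₀, SQ₀, SP₁, SQ₁ ⊂ ℕ with 0 ∈ SP₀ ∪ SQ₀, 0 ∈ SP₁ ∪ SQ₁, gcd of the nonzero elements of SP₀ ∪ SQ₀ ∪ SP₁ ∪ SQ₁ equal to 1, and set a₀n = max(SP₀ ∪ SQ₀) ≥ 1 and a₁m = max(SP₁ ∪ SQ₁) ≥ 1. Suppose SQ₀ ⊄ SP₀ and SQ₁ ⊄ SP₁. Then for generic coefficients the following holds for every irreducible φ ∈ ℂ[x,y] with φ(P₀/Q₀, P₁/Q₁) = 0 in ℂ(t): φ has a monomial not involving x, and the smallest j such that (0,j) ∈ supp(φ) equals [0 ∈ SQ₁ \ SP₁]·(min SP₀) + [a₁m ∈ SQ₁ \ SP₁]·(a₀n − max SP₀). -/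
open Polynomial

/-- The univariate polynomial with support `S` and coefficient vector `c`. -/
noncomputable def polyOfCoeffs (S : Finset ℕ) (c : {s // s ∈ S} → ℂ) : Polynomial ℂ :=
  ∑ s ∈ S.attach, Polynomial.C (c s) * Polynomial.X ^ (s : ℕ)

/-- The image of that polynomial in the field of rational functions `ℂ(t)`. -/
noncomputable def ratFuncOf (S : Finset ℕ) (c : {s // s ∈ S} → ℂ) : RatFunc ℂ :=
  algebraMap (Polynomial ℂ) (RatFunc ℂ) (polyOfCoeffs S c)

/-- The Newton polygon of a bivariate polynomial: the convex hull in `ℝ²` of its support. -/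
noncomputable def newtonPolygon (φ : MvPolynomial (Fin 2) ℂ) : Set (ℝ × ℝ) :=
  convexHull ℝ ((fun d : Fin 2 →₀ ℕ => ((d 0 : ℝ), (d 1 : ℝ))) '' ↑φ.support)

/-- `φ(P₀/Q₀, P₁/Q₁) = 0` in `ℂ(t)`, where `P₀, Q₀, P₁, Q₁` have supports
`SS 0, SS 1, SS 2, SS 3` and coefficient vector `c`. -/
def vanishesDiff (SS : Fin 4 → Finset ℕ)
    (c : (Σ i : Fin 4, {s // s ∈ SS i}) → ℂ) (φ : MvPolynomial (Fin 2) ℂ) : Prop :=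
  MvPolynomial.aeval
    ![ratFuncOf (SS 0) (fun s => c ⟨0, s⟩) / ratFuncOf (SS 1) (fun s => c ⟨1, s⟩),
      ratFuncOf (SS 2) (fun s => c ⟨2, s⟩) / ratFuncOf (SS 3) (fun s => c ⟨3, s⟩)] φ = 0


/-- Resultant formula with a split constant-coefficient left argument. -/
lemma res_formula {K : Type*} [Field K] (f : K[X]) (hf : f.Splits) (n m : ℕ)
    (hn : f.natDegree ≤ n) (g : K[X][X]) (hg : g.natDegree ≤ m) :
    resultant (f.map C) g n m =
      (-1) ^ (m * (n - f.natDegree)) * g.coeff m ^ (n - f.natDegree) *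
        (C f.leadingCoeff ^ m * (f.roots.map (fun τ => g.eval (C τ))).prod) := by
  obtain ⟨k, rfl⟩ := Nat.exists_eq_add_of_le hn
  have hd : (f.map (C : K →+* K[X])).natDegree = f.natDegree :=
    natDegree_map_eq_of_injective C_injective f
  rw [resultant_add_left_deg _ _ _ _ _ hd.le]
  conv_lhs => rw [← hd]
  rw [resultant_eq_prod_eval _ _ _ hg (hf.map C), hf.roots_map_of_injective C_injective,
    leadingCoeff_map_of_injective C_injective]
  simp

lemma dvd_of_vanish {L : Type*} [Field L] [Algebra ℂ L] (x y : L) (hx : Transcendental ℂ x)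
    (Φ Ψ : ℂ[X][X]) (hΦ : Irreducible Φ)
    (h1 : eval₂ (aeval x : ℂ[X] →ₐ[ℂ] L).toRingHom y Φ = 0)
    (h2 : eval₂ (aeval x : ℂ[X] →ₐ[ℂ] L).toRingHom y Ψ = 0) : Φ ∣ Ψ := by
  have hinj : Function.Injective (aeval x : ℂ[X] →ₐ[ℂ] L).toRingHom :=
    transcendental_iff_injective.mp hx
  have hdeg : Φ.natDegree ≠ 0 := by
    intro h
    rw [eq_C_of_natDegree_eq_zero h, eval₂_C] at h1
    have := hinj (h1.trans (map_zero _).symm)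
    apply hΦ.ne_zero
    rw [eq_C_of_natDegree_eq_zero h, this, C_0]
  have hirr : Irreducible (Φ.map (algebraMap ℂ[X] (RatFunc ℂ))) :=
    (IsPrimitive.irreducible_iff_irreducible_map_fraction_map (hΦ.isPrimitive hdeg)).mp hΦ
  let l : RatFunc ℂ →+* L := IsFractionRing.lift hinj
  have hl : ∀ p : ℂ[X][X], eval₂ l y (p.map (algebraMap ℂ[X] (RatFunc ℂ))) =
      eval₂ (aeval x : ℂ[X] →ₐ[ℂ] L).toRingHom y p := by
    intro p
    rw [eval₂_map]
    congr 1
    exact RingHom.ext fun a => IsFractionRing.lift_algebraMap hinj a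
  rcases hirr.isCoprime_or_dvd (Ψ.map (algebraMap ℂ[X] (RatFunc ℂ))) with h | ⟨u, hu⟩
  · obtain ⟨a, b, hab⟩ := h
    have := congrArg (eval₂ l y) hab
    rw [eval₂_add, eval₂_mul, eval₂_mul, hl, hl, h1, h2] at this
    simp at this
  · obtain ⟨b, hb, hb'⟩ := IsLocalization.integerNormalization_spec (nonZeroDivisors ℂ[X]) u
    set U := IsLocalization.integerNormalization (nonZeroDivisors ℂ[X]) u
    have key : C b * Ψ = Φ * U := by
      apply Polynomial.map_injective _ (IsFractionRing.injective ℂ[X] (RatFunc ℂ))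
      rw [Polynomial.map_mul, Polynomial.map_mul, hb', hu, map_C]
      rw [← algebraMap_smul (RatFunc ℂ) b u, smul_eq_C_mul]
      ring
    have hp : Prime Φ := hΦ.prime
    rcases hp.dvd_or_dvd (Dvd.intro _ key.symm) with h | h
    · exfalso
      have := natDegree_le_of_dvd h (C_ne_zero.mpr (nonZeroDivisors.ne_zero hb))
      simp at this
      exact hdeg this
    · exact h

/-- multiples -/
lemma natDegree_ge (x y : RatFunc ℂ) (hx : ¬∃ c, x = RatFunc.C c)
    (hp : ∀ N : IntermediateField ℂ (RatFunc ℂ), x ∈ N → y ∈ N → (RatFunc.X : RatFunc ℂ) ∈ N)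
    (Φ : ℂ[X][X]) (hΦ : Φ ≠ 0)
    (h1 : eval₂ (aeval x : ℂ[X] →ₐ[ℂ] RatFunc ℂ).toRingHom y Φ = 0) :
    max x.num.natDegree x.denom.natDegree ≤ Φ.natDegree := by
  rw [← RatFunc.finrank_eq_max_natDegree]
  let E := IntermediateField.adjoin ℂ {x}
  let g : E := ⟨x, IntermediateField.mem_adjoin_simple_self ℂ x⟩
  let ψ : ℂ[X] →+* E := (aeval g : ℂ[X] →ₐ[ℂ] E).toRingHom
  have hcomp : (algebraMap E (RatFunc ℂ)).comp ψ = (aeval x : ℂ[X] →ₐ[ℂ] RatFunc ℂ).toRingHom := by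
    ext <;> simp [ψ, g]
  have hinj : Function.Injective (aeval x : ℂ[X] →ₐ[ℂ] RatFunc ℂ).toRingHom :=
    transcendental_iff_injective.mp (RatFunc.transcendental_of_ne_C x hx)
  have hψ : Function.Injective ψ := by
    rw [← hcomp] at hinj
    exact Function.Injective.of_comp (f := algebraMap E (RatFunc ℂ)) hinj
  have h0 : Φ.map ψ ≠ 0 := (Polynomial.map_ne_zero_iff hψ).mpr hΦ
  have haev : aeval y (Φ.map ψ) = 0 := by
    rw [aeval_def, eval₂_map, hcomp, h1]
  have hIntegral : IsIntegral E y := by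
    apply IsAlgebraic.isIntegral
    exact ⟨_, h0, haev⟩
  have htop : IntermediateField.adjoin E {y} = ⊤ := by
    rw [← IntermediateField.restrictScalars_eq_top_iff (K := ℂ), eq_top_iff, ← RatFunc.adjoin_X,
      IntermediateField.adjoin_simple_le_iff]
    apply hp
    · rw [IntermediateField.mem_restrictScalars]
      exact (IntermediateField.adjoin E {y}).algebraMap_mem g
    · rw [IntermediateField.mem_restrictScalars]
      exact IntermediateField.mem_adjoin_simple_self E y
  have hfin : Module.finrank E (RatFunc ℂ) = (minpoly E y).natDegree := by
    rw [← IntermediateField.adjoin.finrank hIntegral, htop, IntermediateField.finrank_top']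
  change Module.finrank E (RatFunc ℂ) ≤ _
  rw [hfin, ← natDegree_map_eq_of_injective hψ Φ]
  exact natDegree_le_natDegree (minpoly.degree_le_of_ne_zero E y h0 haev)

/-- The difference polynomial `P(T) Q(t) - P(t) Q(T)` divided by `T - t`. -/
noncomputable def Apt {R : Type*} [CommRing R] (P Q : R[X]) (t : R) : R[X] :=
  P * C (Q.eval t) - C (P.eval t) * Q

noncomputable def Ahat {R : Type*} [CommRing R] (P Q : R[X]) (t : R) : R[X] :=
  Apt P Q t /ₘ (X - C t)

lemma Ahat_mul {R : Type*} [CommRing R] (P Q : R[X]) (t : R) :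
    (X - C t) * Ahat P Q t = Apt P Q t := by
  rw [Ahat, mul_divByMonic_eq_iff_isRoot]
  simp [Apt, mul_comm]

lemma Ahat_map {R S : Type*} [CommRing R] [CommRing S] (f : R →+* S) (P Q : R[X]) (t : R) :
    (Ahat P Q t).map f = Ahat (P.map f) (Q.map f) (f t) := by
  rw [Ahat, Ahat, map_divByMonic _ (monic_X_sub_C t)]
  simp [Apt, eval_map_apply]

lemma natDegree_Apt {R : Type*} [CommRing R] (P Q : R[X]) (t : R) (n : ℕ)
    (hP : P.natDegree ≤ n) (hQ : Q.natDegree ≤ n) : (Apt P Q t).natDegree ≤ n := by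
  refine (natDegree_sub_le _ _).trans (max_le ?_ ?_)
  · exact (natDegree_mul_C_le _ _).trans hP
  · exact (natDegree_C_mul_le _ _).trans hQ

lemma natDegree_Ahat {R : Type*} [CommRing R] [Nontrivial R] (P Q : R[X]) (t : R) (n : ℕ)
    (hP : P.natDegree ≤ n) (hQ : Q.natDegree ≤ n) : (Ahat P Q t).natDegree ≤ n - 1 := by
  rw [Ahat, natDegree_divByMonic _ (monic_X_sub_C t), natDegree_X_sub_C]
  exact Nat.sub_le_sub_right (natDegree_Apt P Q t n hP hQ) 1

lemma proper_of_res (P₀ Q₀ P₁ Q₁ : ℂ[X]) (n m : ℕ) (hm : 1 ≤ m)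
    (hP0 : P₀.natDegree ≤ n) (hQ0 : Q₀.natDegree ≤ n)
    (hP1 : P₁.natDegree ≤ m) (hQ1 : Q₁.natDegree ≤ m) (hq0 : Q₀ ≠ 0) (hq1 : Q₁ ≠ 0)
    (hres : resultant (Ahat P₀ Q₀ 1) (Ahat P₁ Q₁ 1) (n - 1) m ≠ 0)
    (N : IntermediateField ℂ (RatFunc ℂ))
    (hx : algebraMap ℂ[X] (RatFunc ℂ) P₀ / algebraMap ℂ[X] (RatFunc ℂ) Q₀ ∈ N)
    (hy : algebraMap ℂ[X] (RatFunc ℂ) P₁ / algebraMap ℂ[X] (RatFunc ℂ) Q₁ ∈ N) :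
    (RatFunc.X : RatFunc ℂ) ∈ N := by
  let i : ℂ →+* RatFunc ℂ := algebraMap ℂ (RatFunc ℂ)
  let j : ℂ[X] →+* RatFunc ℂ := algebraMap ℂ[X] (RatFunc ℂ)
  have hji : j.comp C = i := by ext; simp [i, j]
  have hev : ∀ p : ℂ[X], (p.map i).eval RatFunc.X = j p := by
    intro p
    simp only [i, j]
    rw [eval_map_algebraMap, RatFunc.aeval_X_left_eq_algebraMap]
  let D : ℂ[X] := resultant (Ahat (P₀.map C) (Q₀.map C) X) (Ahat (P₁.map C) (Q₁.map C) X) (n - 1) m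
  have hD : D ≠ 0 := by
    intro h
    apply hres
    have hc : (evalRingHom (1:ℂ)).comp C = RingHom.id ℂ := by ext; simp
    have := congrArg (evalRingHom (1 : ℂ)) h
    simp only [D] at this
    rw [← resultant_map_map, Ahat_map, Ahat_map, Polynomial.map_map, Polynomial.map_map,
      Polynomial.map_map, Polynomial.map_map, hc, Polynomial.map_id, Polynomial.map_id,
      Polynomial.map_id, Polynomial.map_id, coe_evalRingHom, eval_X, eval_zero] at this
    exact this
  have hD' : resultant (Ahat (P₀.map i) (Q₀.map i) RatFunc.X) (Ahat (P₁.map i) (Q₁.map i) RatFunc.X)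
      (n - 1) m = j D := by
    simp only [D]
    rw [← resultant_map_map, Ahat_map, Ahat_map, Polynomial.map_map, Polynomial.map_map,
      Polynomial.map_map, Polynomial.map_map, hji]
    simp [j]
  have hjD : j D ≠ 0 := by
    simpa [j] using hD
  obtain ⟨p, q, -, -, hpq⟩ := exists_mul_add_mul_eq_C_resultant
    (m := n - 1) (n := m)
    (Ahat (P₀.map i) (Q₀.map i) RatFunc.X) (Ahat (P₁.map i) (Q₁.map i) RatFunc.X)
    (natDegree_Ahat _ _ _ _ (natDegree_map_le.trans hP0) (natDegree_map_le.trans hQ0))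
    ((natDegree_Ahat _ _ _ _ (natDegree_map_le.trans hP1) (natDegree_map_le.trans hQ1)).trans
      (Nat.sub_le _ _)) (Or.inr (by omega))
  rw [hD'] at hpq
  have hk : Apt (P₀.map i) (Q₀.map i) RatFunc.X * p + Apt (P₁.map i) (Q₁.map i) RatFunc.X * q =
      (X - C RatFunc.X) * C (j D) := by
    rw [← hpq, ← Ahat_mul, ← Ahat_mul]; ring
  have hdvd : ∀ P Q : ℂ[X], Q ≠ 0 → j P / j Q ∈ N →
      (minpoly N (RatFunc.X : RatFunc ℂ)).map (algebraMap N (RatFunc ℂ)) ∣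
        Apt (P.map i) (Q.map i) RatFunc.X := by
    intro P Q hQ hz
    let z : N := ⟨_, hz⟩
    have hjQ : j Q ≠ 0 := by simpa [j] using hQ
    let A : N[X] := P.map (algebraMap ℂ N) - C z * Q.map (algebraMap ℂ N)
    have hA : A.map (algebraMap N (RatFunc ℂ)) = P.map i - C (j P / j Q) * Q.map i := by
      simp only [A, Polynomial.map_sub, Polynomial.map_mul, Polynomial.map_map, map_C,
        ← IsScalarTower.algebraMap_eq]
      rfl
    have hroot : aeval (RatFunc.X : RatFunc ℂ) A = 0 := by
      rw [← eval_map_algebraMap, hA]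
      simp only [eval_sub, eval_mul, eval_C, hev]
      field_simp
      ring
    have h1 : Apt (P.map i) (Q.map i) RatFunc.X = C (j Q) * A.map (algebraMap N (RatFunc ℂ)) := by
      rw [hA, Apt, hev, hev, mul_sub, ← mul_assoc, ← C_mul, mul_div_cancel₀ _ hjQ]
      ring
    rw [h1]
    exact Dvd.dvd.mul_left (Polynomial.map_dvd _ (minpoly.dvd N _ hroot)) _
  have hd : (minpoly N (RatFunc.X : RatFunc ℂ)).map (algebraMap N (RatFunc ℂ)) ∣
      (X - C RatFunc.X) * C (j D) := by
    rw [← hk]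
    exact dvd_add (Dvd.dvd.mul_right (hdvd _ _ hq0 hx) _) (Dvd.dvd.mul_right (hdvd _ _ hq1 hy) _)
  have hne : (X - C (RatFunc.X : RatFunc ℂ)) * C (j D) ≠ 0 :=
    mul_ne_zero (X_sub_C_ne_zero _) (C_ne_zero.mpr hjD)
  have hle := natDegree_le_of_dvd hd hne
  rw [natDegree_map, natDegree_mul (X_sub_C_ne_zero _) (C_ne_zero.mpr hjD), natDegree_X_sub_C,
    natDegree_C] at hle
  have hIntegral : IsIntegral N (RatFunc.X : RatFunc ℂ) := by
    by_contra h
    rw [minpoly.eq_zero h, Polynomial.map_zero, zero_dvd_iff] at hd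
    exact hne hd
  have h1 : (minpoly N (RatFunc.X : RatFunc ℂ)).natDegree = 1 :=
    le_antisymm hle (minpoly.natDegree_pos hIntegral)
  obtain ⟨z, hz⟩ := minpoly.natDegree_eq_one_iff.mp h1
  rw [← hz]
  exact z.2

lemma max_num_denom (P Q : ℂ[X]) (hP : P ≠ 0) (hQ : Q ≠ 0) (h : IsCoprime P Q) :
    max (algebraMap ℂ[X] (RatFunc ℂ) P / algebraMap ℂ[X] (RatFunc ℂ) Q).num.natDegree
      (algebraMap ℂ[X] (RatFunc ℂ) P / algebraMap ℂ[X] (RatFunc ℂ) Q).denom.natDegree =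
    max P.natDegree Q.natDegree := by
  set x := algebraMap ℂ[X] (RatFunc ℂ) P / algebraMap ℂ[X] (RatFunc ℂ) Q with hx
  have hx0 : x ≠ 0 := div_ne_zero (by simpa using hP) (by simpa using hQ)
  have e : x.num * Q = P * x.denom := (RatFunc.num_mul_eq_mul_denom_iff hQ).mpr hx
  have c := RatFunc.isCoprime_num_denom x
  have d1 : x.num ∣ P := c.dvd_of_dvd_mul_right (Dvd.intro _ e)
  have d2 : P ∣ x.num := h.dvd_of_dvd_mul_right (Dvd.intro _ e.symm)
  have d3 : x.denom ∣ Q := c.symm.dvd_of_dvd_mul_left (Dvd.intro_left _ e.symm)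
  have d4 : Q ∣ x.denom := h.symm.dvd_of_dvd_mul_left (Dvd.intro_left _ e)
  rw [le_antisymm (natDegree_le_of_dvd d1 hP) (natDegree_le_of_dvd d2 (RatFunc.num_ne_zero hx0)),
    le_antisymm (natDegree_le_of_dvd d3 hQ) (natDegree_le_of_dvd d4 x.denom_ne_zero)]

noncomputable def polyF (P Q : ℂ[X]) : ℂ[X][X][X] :=
  P.map (C.comp C) - C (C X) * Q.map (C.comp C)

noncomputable def polyG (P Q : ℂ[X]) : ℂ[X][X][X] :=
  P.map (C.comp C) - C X * Q.map (C.comp C)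

lemma natDegree_polyF (P Q : ℂ[X]) (n : ℕ) (hP : P.natDegree ≤ n) (hQ : Q.natDegree ≤ n) :
    (polyF P Q).natDegree ≤ n :=
  (natDegree_sub_le _ _).trans (max_le (natDegree_map_le.trans hP)
    ((natDegree_C_mul_le _ _).trans (natDegree_map_le.trans hQ)))

lemma natDegree_polyG (P Q : ℂ[X]) (n : ℕ) (hP : P.natDegree ≤ n) (hQ : Q.natDegree ≤ n) :
    (polyG P Q).natDegree ≤ n :=
  (natDegree_sub_le _ _).trans (max_le (natDegree_map_le.trans hP)
    ((natDegree_C_mul_le _ _).trans (natDegree_map_le.trans hQ)))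

lemma res_vanish (P₀ Q₀ P₁ Q₁ : ℂ[X]) (n m : ℕ) (hm : 1 ≤ m)
    (hP0 : P₀.natDegree ≤ n) (hQ0 : Q₀.natDegree ≤ n)
    (hP1 : P₁.natDegree ≤ m) (hQ1 : Q₁.natDegree ≤ m) (hq0 : Q₀ ≠ 0) (hq1 : Q₁ ≠ 0) :
    eval₂ (aeval (algebraMap ℂ[X] (RatFunc ℂ) P₀ / algebraMap ℂ[X] (RatFunc ℂ) Q₀) :
      ℂ[X] →ₐ[ℂ] RatFunc ℂ).toRingHom
      (algebraMap ℂ[X] (RatFunc ℂ) P₁ / algebraMap ℂ[X] (RatFunc ℂ) Q₁)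
      (resultant (polyF P₀ Q₀) (polyG P₁ Q₁) n m) = 0 := by
  set x := algebraMap ℂ[X] (RatFunc ℂ) P₀ / algebraMap ℂ[X] (RatFunc ℂ) Q₀ with hx
  set y := algebraMap ℂ[X] (RatFunc ℂ) P₁ / algebraMap ℂ[X] (RatFunc ℂ) Q₁ with hy
  let θ : ℂ[X][X] →+* RatFunc ℂ := eval₂RingHom (aeval x : ℂ[X] →ₐ[ℂ] RatFunc ℂ).toRingHom y
  have hθ : θ.comp (C.comp C) = algebraMap ℂ (RatFunc ℂ) := by ext; simp [θ]
  have hθx : θ (C X) = x := by simp [θ]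
  have hθy : θ X = y := by simp [θ]
  have hev : ∀ p : ℂ[X], (p.map (algebraMap ℂ (RatFunc ℂ))).eval RatFunc.X =
      algebraMap ℂ[X] (RatFunc ℂ) p := by
    intro p
    rw [eval_map_algebraMap, RatFunc.aeval_X_left_eq_algebraMap]
  obtain ⟨p, q, -, -, hpq⟩ := exists_mul_add_mul_eq_C_resultant (m := n) (n := m)
    (polyF P₀ Q₀) (polyG P₁ Q₁) (natDegree_polyF _ _ _ hP0 hQ0) (natDegree_polyG _ _ _ hP1 hQ1)
    (Or.inr (by omega))
  have h := congrArg (eval₂ θ RatFunc.X) hpq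
  have hq0' : algebraMap ℂ[X] (RatFunc ℂ) Q₀ ≠ 0 := by simpa using hq0
  have hq1' : algebraMap ℂ[X] (RatFunc ℂ) Q₁ ≠ 0 := by simpa using hq1
  have e1 : eval₂ θ RatFunc.X (polyF P₀ Q₀) = 0 := by
    rw [polyF, eval₂_sub, eval₂_mul, eval₂_C, hθx, eval₂_map, eval₂_map, hθ, ← eval_map, ← eval_map,
      hev, hev, hx, div_mul_cancel₀ _ hq0', sub_self]
  have e2 : eval₂ θ RatFunc.X (polyG P₁ Q₁) = 0 := by
    rw [polyG, eval₂_sub, eval₂_mul, eval₂_C, hθy, eval₂_map, eval₂_map, hθ, ← eval_map, ← eval_map,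
      hev, hev, hy, div_mul_cancel₀ _ hq1', sub_self]
  rw [eval₂_add, eval₂_mul, eval₂_mul, e1, e2, eval₂_C] at h
  simpa [θ] using h.symm

lemma res_natDegree (P₀ Q₀ P₁ Q₁ : ℂ[X]) (n m : ℕ)
    (hP0 : P₀.natDegree ≤ n) (hQ0 : Q₀.natDegree ≤ n)
    (hP1 : P₁.natDegree ≤ m) (hQ1 : Q₁.natDegree ≤ m) :
    (resultant (polyF P₀ Q₀) (polyG P₁ Q₁) n m).natDegree ≤ n := by
  let M := AlgebraicClosure (RatFunc ℂ)
  let ρ : ℂ[X] →+* M := (algebraMap (RatFunc ℂ) M).comp (algebraMap ℂ[X] (RatFunc ℂ))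
  have hρ : Function.Injective ρ :=
    (algebraMap (RatFunc ℂ) M).injective.comp (RatFunc.algebraMap_injective ℂ)
  rw [← natDegree_map_eq_of_injective hρ]
  change (mapRingHom ρ _).natDegree ≤ n
  rw [← resultant_map_map]
  let f : M[X] := P₀.map (ρ.comp C) - C (ρ X) * Q₀.map (ρ.comp C)
  have hc : (mapRingHom ρ).comp (C.comp C) = C.comp (ρ.comp C) := by ext; simp
  have hF : (polyF P₀ Q₀).map (mapRingHom ρ) = f.map C := by
    simp only [polyF, f, Polynomial.map_sub, Polynomial.map_mul, Polynomial.map_map, hc, map_C]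
    simp
  rw [hF]
  have hfd : f.natDegree ≤ n :=
    (natDegree_sub_le _ _).trans (max_le (natDegree_map_le.trans hP0)
      ((natDegree_C_mul_le _ _).trans (natDegree_map_le.trans hQ0)))
  rw [res_formula f (IsAlgClosed.splits f) n m hfd _
    (natDegree_map_le.trans (natDegree_polyG _ _ _ hP1 hQ1))]
  have hG : (polyG P₁ Q₁).map (mapRingHom ρ) =
      (P₁.map (ρ.comp C)).map C - C X * (Q₁.map (ρ.comp C)).map C := by
    simp only [polyG, Polynomial.map_sub, Polynomial.map_mul, Polynomial.map_map, hc, map_C]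
    simp
  rw [hG]
  have hlin : ∀ a b : M, (C a - X * C b).natDegree ≤ 1 := by
    intro a b
    refine (natDegree_sub_le _ _).trans (max_le (by simp) ?_)
    exact (natDegree_mul_C_le _ _).trans natDegree_X_le
  have h1 : (((P₁.map (ρ.comp C)).map C - C X * (Q₁.map (ρ.comp C)).map C : M[X][X]).coeff m).natDegree
      ≤ 1 := by
    simp only [coeff_sub, coeff_C_mul, coeff_map]
    exact hlin _ _
  have h2 : (f.roots.map (fun τ => ((P₁.map (ρ.comp C)).map C - C X * (Q₁.map (ρ.comp C)).map C :
      M[X][X]).eval (C τ))).prod.natDegree ≤ f.natDegree := by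
    refine (natDegree_multiset_prod_le _).trans ?_
    rw [Multiset.map_map]
    refine (Multiset.sum_le_card_nsmul _ 1 ?_).trans ?_
    · intro z hz
      obtain ⟨τ, -, rfl⟩ := Multiset.mem_map.mp hz
      simp only [Function.comp, eval_sub, eval_mul, eval_C, eval_map_apply]
      exact hlin _ _
    · simpa using card_roots' f
  calc _ ≤ (0 + (n - f.natDegree) * 1) + (0 + f.natDegree) := by
        refine natDegree_mul_le.trans (add_le_add (natDegree_mul_le.trans (add_le_add ?_ ?_))
          (natDegree_mul_le.trans (add_le_add ?_ h2)))
        · have : ((-1 : M[X]) ^ (m * (n - f.natDegree))) = C ((-1) ^ (m * (n - f.natDegree))) := by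
            simp
          rw [this, natDegree_C]
        · exact natDegree_pow_le_of_le _ h1
        · rw [← C_pow, natDegree_C]
    _ = n := by omega

lemma res_at_zero (P₀ Q₀ P₁ Q₁ : ℂ[X]) (n m : ℕ)
    (hP0 : P₀.natDegree ≤ n)
    (hP1 : P₁.natDegree ≤ m) (hQ1 : Q₁.natDegree ≤ m) (hp0 : P₀ ≠ 0)
    (hcom : ∀ τ, τ ≠ 0 → P₀.eval τ = 0 → P₁.eval τ ≠ 0)
    (h0 : P₁.coeff 0 = 0 → Q₁.coeff 0 ≠ 0) (hinf : P₁.coeff m = 0 → Q₁.coeff m ≠ 0) :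
    ∃ W : ℂ[X], W.coeff 0 ≠ 0 ∧
      (resultant (polyF P₀ Q₀) (polyG P₁ Q₁) n m).map (evalRingHom 0) =
      X ^ ((if P₁.coeff 0 = 0 then P₀.natTrailingDegree else 0) +
        (if P₁.coeff m = 0 then n - P₀.natDegree else 0)) * W := by
  change ∃ W : ℂ[X], W.coeff 0 ≠ 0 ∧ mapRingHom (evalRingHom 0) _ = _
  rw [← resultant_map_map]
  have hc : (mapRingHom (evalRingHom (0 : ℂ))).comp (C.comp C) = C := by ext; simp
  have hF : (polyF P₀ Q₀).map (mapRingHom (evalRingHom (0 : ℂ))) = P₀.map C := by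
    simp only [polyF, Polynomial.map_sub, Polynomial.map_mul, Polynomial.map_map, hc, map_C]
    simp
  have hG : (polyG P₁ Q₁).map (mapRingHom (evalRingHom (0 : ℂ))) =
      P₁.map C - C X * Q₁.map C := by
    simp only [polyG, Polynomial.map_sub, Polynomial.map_mul, Polynomial.map_map, hc, map_C]
    simp
  have hGd := natDegree_map_le (f := mapRingHom (evalRingHom (0 : ℂ))).trans
    (natDegree_polyG P₁ Q₁ m hP1 hQ1)
  rw [hG] at hGd
  rw [hF, hG, res_formula _ (IsAlgClosed.splits _) n m hP0 _ hGd]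
  have hroots : P₀.roots = Multiset.replicate P₀.natTrailingDegree 0 +
      P₀.roots.filter (fun τ => ¬ (τ = 0)) := by
    conv_lhs => rw [← Multiset.filter_add_not (fun τ => τ = 0) P₀.roots]
    rw [Multiset.filter_eq', count_roots, rootMultiplicity_eq_natTrailingDegree']
  have hlin : ∀ (a b : ℂ) (k : ℕ), (a = 0 → b ≠ 0) → ∃ W : ℂ[X], W.coeff 0 ≠ 0 ∧
      (C a - X * C b) ^ k = X ^ (if a = 0 then k else 0) * W := by
    intro a b k hab
    by_cases ha : a = 0
    · refine ⟨C ((-b) ^ k), by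
        rw [coeff_C_zero]; exact pow_ne_zero _ (neg_ne_zero.mpr (hab ha)), ?_⟩
      rw [if_pos ha, ha, C_pow, ← mul_pow]
      simp
    · refine ⟨(C a - X * C b) ^ k, ?_, by simp [ha]⟩
      rw [coeff_zero_eq_eval_zero]
      simp [ha]
  obtain ⟨W1, hW1, e1⟩ := hlin (P₁.coeff 0) (Q₁.coeff 0) P₀.natTrailingDegree h0
  obtain ⟨W2, hW2, e2⟩ := hlin (P₁.coeff m) (Q₁.coeff m) (n - P₀.natDegree) hinf
  set g : ℂ[X][X] := P₁.map C - C X * Q₁.map C with hg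
  have hgev : ∀ τ : ℂ, g.eval (C τ) = C (P₁.eval τ) - X * C (Q₁.eval τ) := by
    intro τ
    simp only [hg, eval_sub, eval_mul, eval_C, eval_map_apply]
  have hgm : g.coeff m = C (P₁.coeff m) - X * C (Q₁.coeff m) := by
    simp only [hg, coeff_sub, coeff_C_mul, coeff_map]
  let W3 := ((P₀.roots.filter (fun τ => ¬ (τ = 0))).map (fun τ => g.eval (C τ))).prod
  have hW3 : W3.coeff 0 ≠ 0 := by
    rw [coeff_zero_eq_eval_zero]
    change evalRingHom (0 : ℂ) W3 ≠ 0
    simp only [W3]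
    rw [map_multiset_prod, Multiset.map_map]
    apply Multiset.prod_ne_zero
    intro hz
    obtain ⟨τ, hτ, hτ'⟩ := Multiset.mem_map.mp hz
    rw [Multiset.mem_filter, mem_roots hp0] at hτ
    simp only [Function.comp, hgev] at hτ'
    apply hcom τ hτ.2 hτ.1
    simpa using hτ'
  refine ⟨C ((-1) ^ (m * (n - P₀.natDegree)) * P₀.leadingCoeff ^ m) * W1 * W2 * W3, ?_, ?_⟩
  · rw [mul_coeff_zero, mul_coeff_zero, mul_coeff_zero, coeff_C_zero]
    simp [hW1, hW2, hW3, hp0]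
  · rw [hgm, e2, hroots, Multiset.map_add, Multiset.prod_add, Multiset.map_replicate,
      Multiset.prod_replicate, hgev, ← coeff_zero_eq_eval_zero, ← coeff_zero_eq_eval_zero, e1]
    simp only [W3, C_mul, C_pow, C_neg, C_1, pow_add]
    ring

lemma core (P₀ Q₀ P₁ Q₁ : ℂ[X]) (n m : ℕ) (hn : 1 ≤ n) (hm : 1 ≤ m)
    (hmax : max P₀.natDegree Q₀.natDegree = n)
    (hP1 : P₁.natDegree ≤ m) (hQ1 : Q₁.natDegree ≤ m)
    (hp0 : P₀ ≠ 0) (hq0 : Q₀ ≠ 0) (hq1 : Q₁ ≠ 0)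
    (hcop : IsCoprime P₀ Q₀)
    (hcom : ∀ τ, τ ≠ 0 → P₀.eval τ = 0 → P₁.eval τ ≠ 0)
    (h0 : P₁.coeff 0 = 0 → Q₁.coeff 0 ≠ 0) (hinf : P₁.coeff m = 0 → Q₁.coeff m ≠ 0)
    (hres : resultant (Ahat P₀ Q₀ 1) (Ahat P₁ Q₁ 1) (n - 1) m ≠ 0)
    (Φ : ℂ[X][X]) (hΦ : Irreducible Φ)
    (hvan : eval₂ (aeval (algebraMap ℂ[X] (RatFunc ℂ) P₀ / algebraMap ℂ[X] (RatFunc ℂ) Q₀) :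
      ℂ[X] →ₐ[ℂ] RatFunc ℂ).toRingHom
      (algebraMap ℂ[X] (RatFunc ℂ) P₁ / algebraMap ℂ[X] (RatFunc ℂ) Q₁) Φ = 0) :
    ∃ W : ℂ[X], W.coeff 0 ≠ 0 ∧
      Φ.map (evalRingHom 0) =
      X ^ ((if P₁.coeff 0 = 0 then P₀.natTrailingDegree else 0) +
        (if P₁.coeff m = 0 then n - P₀.natDegree else 0)) * W := by
  have hP0 : P₀.natDegree ≤ n := hmax ▸ le_max_left _ _
  have hQ0 : Q₀.natDegree ≤ n := hmax ▸ le_max_right _ _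
  have hmx := max_num_denom P₀ Q₀ hp0 hq0 hcop
  have hv := res_vanish P₀ Q₀ P₁ Q₁ n m hm hP0 hQ0 hP1 hQ1 hq0 hq1
  have hprop := proper_of_res P₀ Q₀ P₁ Q₁ n m hm hP0 hQ0 hP1 hQ1 hq0 hq1 hres
  set x := algebraMap ℂ[X] (RatFunc ℂ) P₀ / algebraMap ℂ[X] (RatFunc ℂ) Q₀ with hx
  set y := algebraMap ℂ[X] (RatFunc ℂ) P₁ / algebraMap ℂ[X] (RatFunc ℂ) Q₁ with hy
  have hxC : ¬∃ c, x = RatFunc.C c := by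
    rw [x.eq_C_iff]
    omega
  have hge := natDegree_ge x y hxC hprop Φ hΦ.ne_zero hvan
  have hdeg := res_natDegree P₀ Q₀ P₁ Q₁ n m hP0 hQ0 hP1 hQ1
  obtain ⟨W, hW, hRW⟩ := res_at_zero P₀ Q₀ P₁ Q₁ n m hP0 hP1 hQ1 hp0 hcom h0 hinf
  obtain ⟨H, hH⟩ := dvd_of_vanish x y (RatFunc.transcendental_of_ne_C x hxC) Φ _ hΦ hvan hv
  set R := resultant (polyF P₀ Q₀) (polyG P₁ Q₁) n m with hR
  have hR0 : R ≠ 0 := by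
    intro h
    rw [h, Polynomial.map_zero] at hRW
    have hWne : W ≠ 0 := by rintro rfl; simp at hW
    exact mul_ne_zero (pow_ne_zero _ X_ne_zero) hWne hRW.symm
  have hH0 : H ≠ 0 := by
    rintro rfl
    exact hR0 (by rw [hH, mul_zero])
  have hHd : H.natDegree = 0 := by
    rw [hH, natDegree_mul hΦ.ne_zero hH0] at hdeg
    omega
  obtain ⟨h, rfl⟩ : ∃ h : ℂ[X], H = C h := ⟨_, eq_C_of_natDegree_eq_zero hHd⟩
  rw [hH, Polynomial.map_mul, map_C] at hRW
  have hc : evalRingHom (0 : ℂ) h ≠ 0 := by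
    intro hz
    rw [hz, C_0, mul_zero] at hRW
    have hWne : W ≠ 0 := by rintro rfl; simp at hW
    exact mul_ne_zero (pow_ne_zero _ X_ne_zero) hWne hRW.symm
  refine ⟨W * C (evalRingHom (0 : ℂ) h)⁻¹, ?_, ?_⟩
  · rw [coeff_mul_C]
    exact mul_ne_zero hW (inv_ne_zero hc)
  · rw [← mul_assoc, ← hRW, mul_assoc, ← C_mul, mul_inv_cancel₀ hc, C_1, mul_one]

/-- Identification of `MvPolynomial (Fin 2) ℂ` with `ℂ[X][Y]`. -/
noncomputable def toBiv : MvPolynomial (Fin 2) ℂ →ₐ[ℂ] ℂ[X][X] :=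
  MvPolynomial.aeval ![C X, X]

noncomputable def bivEquiv : MvPolynomial (Fin 2) ℂ ≃ₐ[ℂ] ℂ[X][X] :=
  AlgEquiv.ofAlgHom toBiv
    (aevalAeval (MvPolynomial.X 0 : MvPolynomial (Fin 2) ℂ) (MvPolynomial.X 1))
    (by ext <;> simp [toBiv])
    (by ext i; fin_cases i <;> simp [toBiv])

lemma toBiv_irreducible {φ : MvPolynomial (Fin 2) ℂ} (h : Irreducible φ) :
    Irreducible (toBiv φ) :=
  (MulEquiv.irreducible_iff bivEquiv.toMulEquiv).mpr h

lemma toBiv_eval (x y : RatFunc ℂ) (φ : MvPolynomial (Fin 2) ℂ) :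
    eval₂ (aeval x : ℂ[X] →ₐ[ℂ] RatFunc ℂ).toRingHom y (toBiv φ) =
      MvPolynomial.aeval ![x, y] φ := by
  induction φ using MvPolynomial.induction_on with
  | C a => simp [toBiv]
  | add p q hp hq => rw [map_add, eval₂_add, hp, hq, map_add]
  | mul_X p i hp =>
    rw [map_mul, eval₂_mul, hp, map_mul]
    fin_cases i <;> simp [toBiv]

lemma toBiv_coeff (φ : MvPolynomial (Fin 2) ℂ) (j : ℕ) :
    ((toBiv φ).map (evalRingHom 0)).coeff j = φ.coeff (Finsupp.single 1 j) := by
  induction φ using MvPolynomial.induction_on' with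
  | monomial u a =>
    have h : (toBiv (MvPolynomial.monomial u a)) = C (C a) * ((C X) ^ (u 0) * X ^ (u 1)) := by
      rw [toBiv, MvPolynomial.aeval_monomial, Finsupp.prod_fintype _ _ (by simp),
        Fin.prod_univ_two]
      rfl
    rw [h, MvPolynomial.coeff_monomial]
    simp only [Polynomial.map_mul, Polynomial.map_pow, map_C, map_X, coe_evalRingHom, eval_C,
      eval_X]
    rw [← C_pow, ← mul_assoc, ← C_mul, coeff_C_mul, coeff_X_pow]
    by_cases hu : u = Finsupp.single 1 j
    · subst hu
      simp
    · rw [if_neg hu]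
      by_cases h0 : u 0 = 0
      · have : j ≠ u 1 := by
          rintro rfl
          apply hu
          ext i
          fin_cases i
          · simp [h0]
          · simp
        simp [this]
      · simp [h0]
  | add p q hp hq => rw [map_add, Polynomial.map_add, coeff_add, hp, hq, MvPolynomial.coeff_add]

lemma resNZ {K : Type*} [Field K] (f g : K[X]) (k m : ℕ) (hf : f ≠ 0) (hk : f.natDegree = k)
    (hg : g.natDegree ≤ m) (h : IsCoprime f g) : resultant f g k m ≠ 0 := by
  obtain ⟨d, rfl⟩ := Nat.exists_eq_add_of_le hg
  subst hk
  rw [resultant_add_right_deg _ _ _ _ _ le_rfl]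
  exact mul_ne_zero (pow_ne_zero _ (by simpa using hf)) (resultant_ne_zero f g h)

lemma noCommonRoot (f g : ℂ[X]) (k m : ℕ) (hf : f.natDegree ≤ k) (hg : g.natDegree ≤ m)
    (hm : m ≠ 0) (h : resultant f g k m ≠ 0) (τ : ℂ) (h1 : f.eval τ = 0) : g.eval τ ≠ 0 := by
  intro h2
  obtain ⟨p, q, -, -, e⟩ := exists_mul_add_mul_eq_C_resultant (m := k) (n := m) f g hf hg (Or.inr hm)
  have := congrArg (eval τ) e
  simp [h1, h2] at this
  exact h this.symm

/-- Polynomial with exponent set `S`, coefficients `f`. -/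
noncomputable def pS {R : Type*} [CommRing R] (S : Finset ℕ) (f : ℕ → R) : R[X] :=
  ∑ s ∈ S, C (f s) * X ^ s

/-- Shifted version. -/
noncomputable def pT {R : Type*} [CommRing R] (S : Finset ℕ) (k : ℕ) (f : ℕ → R) : R[X] :=
  ∑ s ∈ S, C (f s) * X ^ (s - k)

lemma pS_coeff {R : Type*} [CommRing R] (S : Finset ℕ) (f : ℕ → R) (k : ℕ) :
    (pS S f).coeff k = if k ∈ S then f k else 0 := by
  simp [pS, coeff_X_pow]

lemma pS_eval {R : Type*} [CommRing R] (S : Finset ℕ) (f : ℕ → R) (x : R) :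
    (pS S f).eval x = ∑ s ∈ S, f s * x ^ s := by
  simp [pS, eval_finsetSum]

lemma pT_eval {R : Type*} [CommRing R] (S : Finset ℕ) (k : ℕ) (f : ℕ → R) (x : R) :
    (pT S k f).eval x = ∑ s ∈ S, f s * x ^ (s - k) := by
  simp [pT, eval_finsetSum]

lemma pS_map {R R' : Type*} [CommRing R] [CommRing R'] (g : R →+* R') (S : Finset ℕ)
    (f : ℕ → R) : (pS S f).map g = pS S (fun s => g (f s)) := by
  simp [pS, Polynomial.map_sum]

lemma pT_map {R R' : Type*} [CommRing R] [CommRing R'] (g : R →+* R') (S : Finset ℕ) (k : ℕ)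
    (f : ℕ → R) : (pT S k f).map g = pT S k (fun s => g (f s)) := by
  simp [pT, Polynomial.map_sum]

lemma pS_natDegree_le {R : Type*} [CommRing R] (S : Finset ℕ) (f : ℕ → R) (n : ℕ)
    (h : ∀ s ∈ S, s ≤ n) : (pS S f).natDegree ≤ n := by
  refine natDegree_sum_le_of_forall_le _ _ fun s hs => ?_
  exact (natDegree_C_mul_X_pow_le _ _).trans (h s hs)

lemma pT_natDegree_le {R : Type*} [CommRing R] (S : Finset ℕ) (f : ℕ → R) (k n : ℕ)
    (h : ∀ s ∈ S, s ≤ n) : (pT S k f).natDegree ≤ n - k := by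
  refine natDegree_sum_le_of_forall_le _ _ fun s hs => ?_
  exact (natDegree_C_mul_X_pow_le _ _).trans (Nat.sub_le_sub_right (h s hs) k)

lemma pS_eq_pT {R : Type*} [CommRing R] (S : Finset ℕ) (f : ℕ → R) (k : ℕ)
    (h : ∀ s ∈ S, k ≤ s) : pS S f = X ^ k * pT S k f := by
  rw [pS, pT, Finset.mul_sum]
  refine Finset.sum_congr rfl fun s hs => ?_
  rw [mul_left_comm, ← pow_add, Nat.add_sub_cancel' (h s hs)]

lemma pT_coeff {R : Type*} [CommRing R] (S : Finset ℕ) (f : ℕ → R) (k j : ℕ)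
    (h : ∀ s ∈ S, k ≤ s) : (pT S k f).coeff j = if j + k ∈ S then f (j + k) else 0 := by
  rw [← pS_coeff, pS_eq_pT S f k h, coeff_X_pow_mul]

/-- A finite family of nonzero polynomials has a common non-root. -/
lemma exNonroot {ι : Type*} (T : Finset ι) (b : ι → ℂ[X]) (h : ∀ i ∈ T, b i ≠ 0) :
    ∃ u : ℂ, ∀ i ∈ T, (b i).eval u ≠ 0 := by
  by_contra! hcon
  have hp : (∏ i ∈ T, b i) ≠ 0 := Finset.prod_ne_zero_iff.mpr h
  apply hp
  refine Polynomial.funext fun u => ?_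
  obtain ⟨i, hi, h0⟩ := hcon u
  rw [eval_prod, eval_zero]
  exact Finset.prod_eq_zero hi h0

lemma exB (SP SQ : Finset ℕ) (Z : Set (ℕ → ℂ)) (hZ : Z.Finite)
    (h : ∀ l ∈ Z, ∃ i ∈ SP, ∃ j ∈ SQ, l i ≠ l j) :
    ∃ p q : ℕ → ℂ, ∀ l ∈ Z,
      (∑ i ∈ SP, p i * l i) * (∑ j ∈ SQ, q j) - (∑ i ∈ SP, p i) * (∑ j ∈ SQ, q j * l j) ≠ 0 := by
  classical
  obtain ⟨N, hN⟩ : ∃ N, ∀ s ∈ SP, s < N := ⟨SP.sup id + 1, fun s hs =>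
    Nat.lt_succ_of_le (Finset.le_sup (f := id) hs)⟩
  obtain ⟨u, hu⟩ := exNonroot hZ.toFinset
    (fun l => ∑ i ∈ SP, ∑ j ∈ SQ, C (l i - l j) * X ^ (i + N * j)) (by
      intro l hl h0
      obtain ⟨i, hi, j, hj, hij⟩ := h l (by simpa using hl)
      have := congrArg (fun r => coeff r (i + N * j)) h0
      simp only [finsetSum_coeff, coeff_C_mul, coeff_X_pow, coeff_zero] at this
      rw [Finset.sum_eq_single i, Finset.sum_eq_single j] at this
      · simp [sub_eq_zero] at this
        exact hij this
      · intro j' _ hjj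
        rw [if_neg, mul_zero]
        intro e
        have hN0 : 0 < N := lt_of_le_of_lt (Nat.zero_le _) (hN i hi)
        exact hjj (Nat.eq_of_mul_eq_mul_left hN0 (by omega))
      · exact fun h => absurd hj h
      · intro i' hi' hii
        refine Finset.sum_eq_zero fun j' _ => ?_
        rw [if_neg, mul_zero]
        intro e
        apply hii
        have := congrArg (· % N) e
        simpa [Nat.mod_eq_of_lt (hN i hi), Nat.mod_eq_of_lt (hN i' hi')] using this.symm
      · exact fun h => absurd hi h)
  refine ⟨fun i => u ^ i, fun j => u ^ (N * j), fun l hl => ?_⟩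
  have := hu l (by simpa using hl)
  convert this using 1
  rw [Finset.sum_mul_sum, Finset.sum_mul_sum, ← Finset.sum_sub_distrib, eval_finsetSum]
  refine Finset.sum_congr rfl fun i _ => ?_
  rw [← Finset.sum_sub_distrib, eval_finsetSum]
  refine Finset.sum_congr rfl fun j _ => ?_
  simp [pow_add]
  ring

lemma ex23 (S T : Finset ℕ) (hS : S.Nonempty) (hT : T.Nonempty) (m : ℕ) (hm : ∀ s ∈ T, s ≤ m) :
    ∃ q : ℕ → ℂ, resultant (pT S (S.min' hS) (fun _ => (1 : ℂ))) (pS T q)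
      (S.max' hS - S.min' hS) m ≠ 0 := by
  classical
  set f := pT S (S.min' hS) (fun _ => (1 : ℂ)) with hfdef
  have hmin : ∀ s ∈ S, S.min' hS ≤ s := fun s hs => S.min'_le s hs
  have hmm : S.min' hS ≤ S.max' hS := hmin _ (S.max'_mem hS)
  have hc : f.coeff (S.max' hS - S.min' hS) = 1 := by
    rw [hfdef, pT_coeff _ _ _ _ hmin, Nat.sub_add_cancel hmm, if_pos (S.max'_mem hS)]
  have hc0 : f.coeff 0 = 1 := by
    rw [hfdef, pT_coeff _ _ _ _ hmin, zero_add, if_pos (S.min'_mem hS)]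
  have hf0 : f ≠ 0 := by
    intro h
    rw [h] at hc0
    simp at hc0
  have hd : f.natDegree = S.max' hS - S.min' hS := by
    refine le_antisymm (pT_natDegree_le _ _ _ _ fun s hs => S.le_max' s hs) ?_
    exact le_natDegree_of_ne_zero (by rw [hc]; exact one_ne_zero)
  obtain ⟨u, hu⟩ := exNonroot f.roots.toFinset (fun τ => ∑ s ∈ T, C (τ ^ s) * X ^ s) (by
    intro τ hτ h0
    have hτ0 : τ ≠ 0 := by
      rintro rfl
      have : f.IsRoot 0 := by simpa [hf0] using hτ
      rw [IsRoot, ← coeff_zero_eq_eval_zero, hc0] at this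
      exact one_ne_zero this
    obtain ⟨t, ht⟩ := hT
    have := congrArg (fun r => coeff r t) h0
    have h2 := pS_coeff T (fun s => τ ^ s) t
    rw [pS] at h2
    simp only [h2, if_pos ht, coeff_zero] at this
    exact pow_ne_zero _ hτ0 this)
  refine ⟨fun s => u ^ s, resNZ _ _ _ _ hf0 hd (pS_natDegree_le _ _ _ hm) ?_⟩
  rw [Polynomial.isCoprime_iff_aeval_ne_zero_of_isAlgClosed (k := ℂ) (K := ℂ)]
  intro a
  simp only [coe_aeval_eq_eval]
  by_cases ha : f.eval a = 0
  · right
    have := hu a (by simp [hf0, ha])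
    rw [pS_eval]
    simp [eval_finsetSum] at this
    convert this using 1
    exact Finset.sum_congr rfl fun s _ => mul_comm _ _
  · exact Or.inl ha

lemma Apt_pS_eval (S T : Finset ℕ) (p q : ℕ → ℂ) (τ : ℂ) :
    (Apt (pS S p) (pS T q) 1).eval τ =
      (∑ i ∈ S, p i * τ ^ i) * (∑ j ∈ T, q j) - (∑ i ∈ S, p i) * (∑ j ∈ T, q j * τ ^ j) := by
  simp [Apt, pS_eval, -map_sum]

lemma Apt_pS_coeff (S T : Finset ℕ) (p q : ℕ → ℂ) (n : ℕ) :
    (Apt (pS S p) (pS T q) 1).coeff n =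
      (∑ i ∈ S, p i * (if i = n then 1 else 0)) * (∑ j ∈ T, q j) -
        (∑ i ∈ S, p i) * (∑ j ∈ T, q j * (if j = n then 1 else 0)) := by
  simp [Apt, pS_eval, pS_coeff, -map_sum]

lemma Ahat_pS_one (S T : Finset ℕ) (p q : ℕ → ℂ) :
    (Ahat (pS S p) (pS T q) 1).eval 1 =
      (∑ i ∈ S, p i * (i : ℂ)) * (∑ j ∈ T, q j) -
        (∑ i ∈ S, p i) * (∑ j ∈ T, q j * (j : ℂ)) := by
  have h := congrArg (fun r => eval 1 (derivative r)) (Ahat_mul (pS S p) (pS T q) 1)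
  have hd : ∀ (S : Finset ℕ) (p : ℕ → ℂ), eval 1 (derivative (pS S p)) = ∑ i ∈ S, p i * (i : ℂ) := by
    intro S p
    simp [pS, eval_finsetSum, derivative_X_pow]
  simp only [derivative_mul] at h
  simp [Apt, hd, pS_eval, -map_sum] at h
  exact h

lemma unionConst {α : Type*} (S T : Finset ℕ) (hS : S.Nonempty) (hT : T.Nonempty) (l : ℕ → α)
    (h : ∀ i ∈ S, ∀ j ∈ T, l i = l j) : ∀ a ∈ S ∪ T, ∀ b ∈ S ∪ T, l a = l b := by
  obtain ⟨s, hs⟩ := hS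
  obtain ⟨t, ht⟩ := hT
  have key : ∀ a ∈ S ∪ T, l a = l t := by
    intro a ha
    rcases Finset.mem_union.mp ha with ha | ha
    · exact h a ha t ht
    · rw [← h s hs a ha, h s hs t ht]
  intro a ha b hb
  rw [key a ha, key b hb]

lemma exPair {α : Type*} (S T : Finset ℕ) (hS : S.Nonempty) (hT : T.Nonempty) (l : ℕ → α)
    (a b : ℕ) (ha : a ∈ S ∪ T) (hb : b ∈ S ∪ T) (hab : l a ≠ l b) :
    ∃ i ∈ S, ∃ j ∈ T, l i ≠ l j := by
  by_contra! h
  exact hab (unionConst S T hS hT l h a ha b hb)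

lemma ex4 (S₀ S₁ S₂ S₃ : Finset ℕ) (n m : ℕ)
    (hS0 : S₀.Nonempty) (hS1 : S₁.Nonempty) (hS2 : S₂.Nonempty) (hS3 : S₃.Nonempty)
    (h00 : 0 ∈ S₀ ∪ S₁) (h01 : 0 ∈ S₂ ∪ S₃)
    (hgcd : ((S₀ ∪ S₁ ∪ S₂ ∪ S₃).filter (fun s => s ≠ 0)).gcd id = 1)
    (hn : n ∈ S₀ ∪ S₁) (hnm : ∀ s ∈ S₀ ∪ S₁, s ≤ n)
    (hm : m ∈ S₂ ∪ S₃) (hmm : ∀ s ∈ S₂ ∪ S₃, s ≤ m) (hn1 : 1 ≤ n) (hm1 : 1 ≤ m) :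
    ∃ p₀ q₀ p₁ q₁ : ℕ → ℂ,
      resultant (Ahat (pS S₀ p₀) (pS S₁ q₀) 1) (Ahat (pS S₂ p₁) (pS S₃ q₁) 1) (n - 1) m ≠ 0 := by
  classical
  set E : Set (ℕ → ℂ) := (fun ζ : ℂ => fun s : ℕ => ζ ^ s) ''
    {ζ | ζ ^ m = 1 ∧ ∃ s ∈ S₀ ∪ S₁, ζ ^ s ≠ 1} with hE
  have hEfin : E.Finite := by
    apply Set.Finite.image
    apply Set.Finite.subset (nthRootsFinset m (1 : ℂ)).finite_toSet
    rintro ζ ⟨h, -⟩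
    simp [mem_nthRootsFinset (show 0 < m by omega), h]
  obtain ⟨p₀, q₀, h0⟩ := exB S₀ S₁
    (insert (fun s : ℕ => if s = n then (1 : ℂ) else 0) (insert (fun s : ℕ => (s : ℂ)) E))
    ((hEfin.insert _).insert _) (by
      rintro l (rfl | rfl | ⟨ζ, ⟨-, s, hs, hs1⟩, rfl⟩)
      · exact exPair _ _ hS0 hS1 _ 0 n h00 hn (by
          have : (0 : ℕ) ≠ n := by omega
          simp [this])
      · exact exPair _ _ hS0 hS1 _ 0 n h00 hn (by
          have : n ≠ 0 := by omega
          change ((0 : ℕ) : ℂ) ≠ (n : ℂ)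
          exact_mod_cast this.symm)
      · exact exPair _ _ hS0 hS1 _ s 0 hs h00 (by simpa using hs1))
  set A := Ahat (pS S₀ p₀) (pS S₁ q₀) 1 with hA
  have hdA : A.natDegree ≤ n - 1 := natDegree_Ahat _ _ _ _
    (pS_natDegree_le _ _ _ fun s hs => hnm s (Finset.mem_union_left _ hs))
    (pS_natDegree_le _ _ _ fun s hs => hnm s (Finset.mem_union_right _ hs))
  have hAm : (X - C 1) * A = _ := Ahat_mul (pS S₀ p₀) (pS S₁ q₀) 1
  have hA1 : A.eval 1 ≠ 0 := by
    rw [hA, Ahat_pS_one]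
    exact h0 _ (by simp)
  have hA0 : A ≠ 0 := by
    intro h
    rw [h] at hA1
    simp at hA1
  have hdA' : A.natDegree = n - 1 := by
    refine le_antisymm hdA ?_
    have h1 : (Apt (pS S₀ p₀) (pS S₁ q₀) 1).coeff n ≠ 0 := by
      rw [Apt_pS_coeff]
      exact h0 _ (by simp)
    have h2 := le_natDegree_of_ne_zero h1
    rw [← hAm, natDegree_mul (X_sub_C_ne_zero 1) hA0, natDegree_X_sub_C] at h2
    omega
  have hroot : ∀ τ, A.eval τ = 0 → ∃ i ∈ S₂, ∃ j ∈ S₃, τ ^ i ≠ τ ^ j := by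
    intro τ hτ
    have hτ1 : τ ≠ 1 := by
      rintro rfl
      exact hA1 hτ
    by_contra! hcon
    have hall := unionConst S₂ S₃ hS2 hS3 (fun s => τ ^ s) hcon
    have h1 : ∀ s ∈ S₂ ∪ S₃, τ ^ s = 1 := fun s hs => by
      simpa using hall s hs 0 h01
    have h2 : ∃ s ∈ S₀ ∪ S₁, τ ^ s ≠ 1 := by
      by_contra! h2
      have : orderOf τ ∣ 1 := by
        rw [← hgcd]
        refine Finset.dvd_gcd fun s hs => ?_
        rw [id, orderOf_dvd_iff_pow_eq_one]
        simp only [Finset.mem_filter, Finset.mem_union] at hs h1 h2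
        rcases hs.1 with ((h | h) | h) | h
        · exact h2 s (Or.inl h)
        · exact h2 s (Or.inr h)
        · exact h1 s (Or.inl h)
        · exact h1 s (Or.inr h)
      rw [orderOf_dvd_iff_pow_eq_one, pow_one] at this
      exact hτ1 this
    have h3 := h0 (fun s => τ ^ s) (Or.inr (Or.inr ⟨τ, ⟨h1 m hm, h2⟩, rfl⟩))
    apply h3
    have := Apt_pS_eval S₀ S₁ p₀ q₀ τ
    rw [← this, ← hAm, eval_mul, hτ, mul_zero]
  obtain ⟨p₁, q₁, h1⟩ := exB S₂ S₃ ((fun τ : ℂ => fun s : ℕ => τ ^ s) '' {τ | A.eval τ = 0})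
    (by
      apply Set.Finite.image
      apply Set.Finite.subset A.roots.toFinset.finite_toSet
      intro τ hτ
      simpa [hA0] using hτ)
    (by
      rintro l ⟨τ, hτ, rfl⟩
      exact hroot τ hτ)
  refine ⟨p₀, q₀, p₁, q₁, resNZ _ _ _ _ hA0 hdA' ?_ ?_⟩
  · refine (natDegree_Ahat _ _ _ m ?_ ?_).trans (Nat.sub_le _ _)
    · exact pS_natDegree_le _ _ _ fun s hs => hmm s (Finset.mem_union_left _ hs)
    · exact pS_natDegree_le _ _ _ fun s hs => hmm s (Finset.mem_union_right _ hs)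
  · rw [Polynomial.isCoprime_iff_aeval_ne_zero_of_isAlgClosed (k := ℂ) (K := ℂ)]
    intro τ
    simp only [coe_aeval_eq_eval]
    by_cases ha : A.eval τ = 0
    · right
      intro hb
      have h2 := h1 _ ⟨τ, ha, rfl⟩
      apply h2
      rw [← Apt_pS_eval, ← Ahat_mul, eval_mul, hb, mul_zero]
    · exact Or.inl ha

/-- Generic coefficient. -/
noncomputable def gen (SS : Fin 4 → Finset ℕ) (i : Fin 4) (s : ℕ) :
    MvPolynomial (Σ i : Fin 4, {s // s ∈ SS i}) ℂ :=
  if h : s ∈ SS i then MvPolynomial.X ⟨i, ⟨s, h⟩⟩ else 0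

/-- Specialised coefficient. -/
noncomputable def cf (SS : Fin 4 → Finset ℕ) (c : (Σ i : Fin 4, {s // s ∈ SS i}) → ℂ)
    (i : Fin 4) (s : ℕ) : ℂ :=
  if h : s ∈ SS i then c ⟨i, ⟨s, h⟩⟩ else 0

lemma eval_gen (SS : Fin 4 → Finset ℕ) (c : (Σ i : Fin 4, {s // s ∈ SS i}) → ℂ)
    (i : Fin 4) : (fun s => MvPolynomial.eval c (gen SS i s)) = cf SS c i := by
  funext s
  unfold gen cf
  split_ifs <;> simp

lemma poly_eq_pS (SS : Fin 4 → Finset ℕ) (c : (Σ i : Fin 4, {s // s ∈ SS i}) → ℂ)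
    (i : Fin 4) : polyOfCoeffs (SS i) (fun s => c ⟨i, s⟩) = pS (SS i) (cf SS c i) := by
  unfold polyOfCoeffs pS
  rw [← Finset.sum_attach (SS i)]
  refine Finset.sum_congr rfl fun s _ => ?_
  simp [cf]

lemma pS_congr {R : Type*} [CommRing R] (S : Finset ℕ) (f g : ℕ → R) (h : ∀ s ∈ S, f s = g s) :
    pS S f = pS S g :=
  Finset.sum_congr rfl fun s hs => by rw [h s hs]

lemma pT_congr {R : Type*} [CommRing R] (S : Finset ℕ) (k : ℕ) (f g : ℕ → R)
    (h : ∀ s ∈ S, f s = g s) : pT S k f = pT S k g :=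
  Finset.sum_congr rfl fun s hs => by rw [h s hs]

lemma cf_spec (SS : Fin 4 → Finset ℕ) (p : Fin 4 → ℕ → ℂ) (i : Fin 4) (s : ℕ) (hs : s ∈ SS i) :
    cf SS (fun v => p v.1 v.2) i s = p i s := by
  simp [cf, hs]

/-- When `SQ₀ ⊄ SP₀` and `SQ₁ ⊄ SP₁`: the implicit equation has a monomial not involving `x`,
and the smallest `j` with `(0, j)` in the support of `φ` is the stated quantity. -/
theorem implicit_xmin_ymin (SS : Fin 4 → Finset ℕ) (hne : ∀ i, (SS i).Nonempty)
    (h00 : 0 ∈ SS 0 ∪ SS 1) (h01 : 0 ∈ SS 2 ∪ SS 3)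
    (hgcd : ((SS 0 ∪ SS 1 ∪ SS 2 ∪ SS 3).filter (fun s => s ≠ 0)).gcd id = 1)
    (a0n a1m : ℕ)
    (ha0nmem : a0n ∈ SS 0 ∪ SS 1) (ha0nmax : ∀ s ∈ SS 0 ∪ SS 1, s ≤ a0n)
    (ha1mmem : a1m ∈ SS 2 ∪ SS 3) (ha1mmax : ∀ s ∈ SS 2 ∪ SS 3, s ≤ a1m)
    (ha0n1 : 1 ≤ a0n) (ha1m1 : 1 ≤ a1m)
    (hQ0 : ¬ SS 1 ⊆ SS 0) (hQ1 : ¬ SS 3 ⊆ SS 2) :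
    ∃ G : MvPolynomial (Σ i : Fin 4, {s // s ∈ SS i}) ℂ, G ≠ 0 ∧
      ∀ c : (Σ i : Fin 4, {s // s ∈ SS i}) → ℂ, MvPolynomial.eval c G ≠ 0 →
        ∀ φ : MvPolynomial (Fin 2) ℂ, Irreducible φ → vanishesDiff SS c φ →
          (∃ j : ℕ, (Finsupp.single 1 j : Fin 2 →₀ ℕ) ∈ φ.support) ∧
          IsLeast {j : ℕ | (Finsupp.single 1 j : Fin 2 →₀ ℕ) ∈ φ.support}
            ((if 0 ∈ SS 3 \ SS 2 then (SS 0).min' (hne 0) else 0) +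
              (if a1m ∈ SS 3 \ SS 2 then a0n - (SS 0).max' (hne 0) else 0)) := by
  classical
  set mn := (SS 0).min' (hne 0) with hmn
  set mx := (SS 0).max' (hne 0) with hmx
  have hmin : ∀ s ∈ SS 0, mn ≤ s := fun s hs => (SS 0).min'_le s hs
  have hmax : ∀ s ∈ SS 0, s ≤ mx := fun s hs => (SS 0).le_max' s hs
  have hmnm : mn ∈ SS 0 := (SS 0).min'_mem _
  have hmxm : mx ∈ SS 0 := (SS 0).max'_mem _
  have hb0 : ∀ s ∈ SS 0, s ≤ a0n := fun s hs => ha0nmax s (Finset.mem_union_left _ hs)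
  have hb1 : ∀ s ∈ SS 1, s ≤ a0n := fun s hs => ha0nmax s (Finset.mem_union_right _ hs)
  have hb2 : ∀ s ∈ SS 2, s ≤ a1m := fun s hs => ha1mmax s (Finset.mem_union_left _ hs)
  have hb3 : ∀ s ∈ SS 3, s ≤ a1m := fun s hs => ha1mmax s (Finset.mem_union_right _ hs)
  set G1 : MvPolynomial (Σ i : Fin 4, {s // s ∈ SS i}) ℂ := ∏ v, MvPolynomial.X v with hG1
  set G2 := resultant (pT (SS 0) mn (gen SS 0)) (pS (SS 1) (gen SS 1)) (mx - mn) a0n with hG2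
  set G3 := resultant (pT (SS 0) mn (gen SS 0)) (pS (SS 2) (gen SS 2)) (mx - mn) a1m with hG3
  set G4 := resultant (Ahat (pS (SS 0) (gen SS 0)) (pS (SS 1) (gen SS 1)) 1)
    (Ahat (pS (SS 2) (gen SS 2)) (pS (SS 3) (gen SS 3)) 1) (a0n - 1) a1m with hG4
  have e2 : ∀ c, MvPolynomial.eval c G2 = resultant (pT (SS 0) mn (cf SS c 0))
      (pS (SS 1) (cf SS c 1)) (mx - mn) a0n := by
    intro c
    rw [hG2, ← resultant_map_map, pT_map, pS_map, eval_gen, eval_gen]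
  have e3 : ∀ c, MvPolynomial.eval c G3 = resultant (pT (SS 0) mn (cf SS c 0))
      (pS (SS 2) (cf SS c 2)) (mx - mn) a1m := by
    intro c
    rw [hG3, ← resultant_map_map, pT_map, pS_map, eval_gen, eval_gen]
  have e4 : ∀ c, MvPolynomial.eval c G4 =
      resultant (Ahat (pS (SS 0) (cf SS c 0)) (pS (SS 1) (cf SS c 1)) 1)
        (Ahat (pS (SS 2) (cf SS c 2)) (pS (SS 3) (cf SS c 3)) 1) (a0n - 1) a1m := by
    intro c
    rw [hG4, ← resultant_map_map, Ahat_map, Ahat_map, pS_map, pS_map, pS_map, pS_map,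
      eval_gen, eval_gen, eval_gen, eval_gen, map_one]
  have n1 : G1 ≠ 0 := Finset.prod_ne_zero_iff.mpr fun v _ => MvPolynomial.X_ne_zero v
  have n2 : G2 ≠ 0 := by
    obtain ⟨q, hq⟩ := ex23 (SS 0) (SS 1) (hne 0) (hne 1) a0n hb1
    intro h
    apply hq
    have := e2 (fun v => (![fun _ => 1, q, q, q] : Fin 4 → ℕ → ℂ) v.1 v.2)
    rw [h, map_zero, pT_congr _ _ _ _ (cf_spec SS _ 0), pS_congr _ _ _ (cf_spec SS _ 1)] at this
    exact this.symm
  have n3 : G3 ≠ 0 := by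
    obtain ⟨q, hq⟩ := ex23 (SS 0) (SS 2) (hne 0) (hne 2) a1m hb2
    intro h
    apply hq
    have := e3 (fun v => (![fun _ => 1, q, q, q] : Fin 4 → ℕ → ℂ) v.1 v.2)
    rw [h, map_zero, pT_congr _ _ _ _ (cf_spec SS _ 0), pS_congr _ _ _ (cf_spec SS _ 2)] at this
    exact this.symm
  have n4 : G4 ≠ 0 := by
    obtain ⟨p0, q0, p1, q1, hq⟩ := ex4 (SS 0) (SS 1) (SS 2) (SS 3) a0n a1m (hne 0) (hne 1) (hne 2)
      (hne 3) h00 h01 hgcd ha0nmem ha0nmax ha1mmem ha1mmax ha0n1 ha1m1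
    intro h
    apply hq
    have := e4 (fun v => (![p0, q0, p1, q1] : Fin 4 → ℕ → ℂ) v.1 v.2)
    rw [h, map_zero, pS_congr _ _ _ (cf_spec SS _ 0), pS_congr _ _ _ (cf_spec SS _ 1),
      pS_congr _ _ _ (cf_spec SS _ 2), pS_congr _ _ _ (cf_spec SS _ 3)] at this
    exact this.symm
  refine ⟨G1 * G2 * G3 * G4, mul_ne_zero (mul_ne_zero (mul_ne_zero n1 n2) n3) n4, ?_⟩
  intro c hc φ hφ hvan
  rw [map_mul, map_mul, map_mul, mul_ne_zero_iff, mul_ne_zero_iff, mul_ne_zero_iff] at hc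
  obtain ⟨⟨⟨hc1, hc2⟩, hc3⟩, hc4⟩ := hc
  rw [e2] at hc2
  rw [e3] at hc3
  rw [e4] at hc4
  have hcv : ∀ v, c v ≠ 0 := by
    rw [hG1, map_prod, Finset.prod_ne_zero_iff] at hc1
    intro v
    simpa using hc1 v (Finset.mem_univ v)
  have hcoef : ∀ i k, (pS (SS i) (cf SS c i)).coeff k = 0 ↔ k ∉ SS i := by
    intro i k
    rw [pS_coeff]
    by_cases h : k ∈ SS i
    · simp [h, cf, hcv]
    · simp [h]
  unfold vanishesDiff ratFuncOf at hvan
  rw [poly_eq_pS SS c 0, poly_eq_pS SS c 1, poly_eq_pS SS c 2, poly_eq_pS SS c 3,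
    ← toBiv_eval] at hvan
  have hT : pS (SS 0) (cf SS c 0) = X ^ mn * pT (SS 0) mn (cf SS c 0) := pS_eq_pT _ _ _ hmin
  have hTd : (pT (SS 0) mn (cf SS c 0)).natDegree ≤ mx - mn := pT_natDegree_le _ _ _ _ hmax
  set P₀ := pS (SS 0) (cf SS c 0) with hP0
  set Q₀ := pS (SS 1) (cf SS c 1) with hQ0'
  set P₁ := pS (SS 2) (cf SS c 2) with hP1
  set Q₁ := pS (SS 3) (cf SS c 3) with hQ1'
  have hne0 : ∀ i, pS (SS i) (cf SS c i) ≠ 0 := by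
    intro i h
    obtain ⟨s, hs⟩ := hne i
    have := (hcoef i s).mp (by rw [h, coeff_zero])
    exact this hs
  have hP0d : P₀.natDegree = mx :=
    le_antisymm (pS_natDegree_le _ _ _ hmax)
      (le_natDegree_of_ne_zero fun h => (hcoef 0 mx).mp h hmxm)
  have hP0t : P₀.natTrailingDegree = mn := by
    refine le_antisymm (natTrailingDegree_le_of_ne_zero fun h => (hcoef 0 mn).mp h hmnm) ?_
    refine hmin _ ?_
    by_contra h
    exact hne0 0 (coeff_natTrailingDegree_eq_zero.mp ((hcoef 0 _).mpr h))
  have hmaxd : max P₀.natDegree Q₀.natDegree = a0n := by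
    refine le_antisymm (max_le (pS_natDegree_le _ _ _ hb0) (pS_natDegree_le _ _ _ hb1)) ?_
    rcases Finset.mem_union.mp ha0nmem with h | h
    · exact le_max_of_le_left (le_natDegree_of_ne_zero fun h' => (hcoef 0 _).mp h' h)
    · exact le_max_of_le_right (le_natDegree_of_ne_zero fun h' => (hcoef 1 _).mp h' h)
  have hroot0 : ∀ τ, P₀.eval τ = 0 → τ = 0 ∧ mn ≠ 0 ∨ (pT (SS 0) mn (cf SS c 0)).eval τ = 0 := by
    intro τ h
    rw [hT, eval_mul, eval_pow, eval_X, mul_eq_zero] at h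
    rcases h with h | h
    · exact Or.inl (pow_eq_zero_iff'.mp h)
    · exact Or.inr h
  have hcop : IsCoprime P₀ Q₀ := by
    rw [Polynomial.isCoprime_iff_aeval_ne_zero_of_isAlgClosed (k := ℂ) (K := ℂ)]
    intro τ
    simp only [coe_aeval_eq_eval]
    by_cases hτ : P₀.eval τ = 0
    · right
      rcases hroot0 τ hτ with ⟨rfl, hmn0⟩ | h
      · rw [← coeff_zero_eq_eval_zero]
        intro h
        have h1 := (hcoef 1 0).mp h
        rcases Finset.mem_union.mp h00 with h | h
        · exact hmn0 (Nat.le_zero.mp (hmin 0 h))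
        · exact h1 h
      · exact noCommonRoot _ _ _ _ hTd (pS_natDegree_le _ _ _ hb1) (by omega) hc2 τ h
    · exact Or.inl hτ
  obtain ⟨W, hW, hΦ⟩ := core P₀ Q₀ P₁ Q₁ a0n a1m ha0n1 ha1m1 hmaxd
    (pS_natDegree_le _ _ _ hb2) (pS_natDegree_le _ _ _ hb3) (hne0 0) (hne0 1) (hne0 3) hcop
    (by
      intro τ hτ0 hτ
      rcases hroot0 τ hτ with ⟨h, -⟩ | h
      · exact absurd h hτ0
      · exact noCommonRoot _ _ _ _ hTd (pS_natDegree_le _ _ _ hb2) (by omega) hc3 τ h)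
    (by
      intro h h'
      rcases Finset.mem_union.mp h01 with h1 | h1
      · exact (hcoef 2 _).mp h h1
      · exact (hcoef 3 _).mp h' h1)
    (by
      intro h h'
      rcases Finset.mem_union.mp ha1mmem with h1 | h1
      · exact (hcoef 2 _).mp h h1
      · exact (hcoef 3 _).mp h' h1)
    hc4 (toBiv φ) (toBiv_irreducible hφ) hvan
  have i1 : (P₁.coeff 0 = 0) ↔ 0 ∈ SS 3 \ SS 2 := by
    rw [hP1, hcoef 2 0, Finset.mem_sdiff]
    exact ⟨fun h => ⟨(Finset.mem_union.mp h01).resolve_left h, h⟩, fun h => h.2⟩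
  have i2 : (P₁.coeff a1m = 0) ↔ a1m ∈ SS 3 \ SS 2 := by
    rw [hP1, hcoef 2 a1m, Finset.mem_sdiff]
    exact ⟨fun h => ⟨(Finset.mem_union.mp ha1mmem).resolve_left h, h⟩, fun h => h.2⟩
  simp only [i1, i2, hP0d, hP0t] at hΦ
  set N := ((if 0 ∈ SS 3 \ SS 2 then mn else 0) +
    (if a1m ∈ SS 3 \ SS 2 then a0n - mx else 0)) with hN
  have hmem : ∀ j, (Finsupp.single 1 j : Fin 2 →₀ ℕ) ∈ φ.support ↔ (X ^ N * W).coeff j ≠ 0 := by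
    intro j
    rw [MvPolynomial.mem_support_iff, ← toBiv_coeff, hΦ]
  have hNm : (Finsupp.single 1 N : Fin 2 →₀ ℕ) ∈ φ.support := by
    rw [hmem, coeff_X_pow_mul', if_pos le_rfl, Nat.sub_self]
    exact hW
  refine ⟨⟨N, hNm⟩, hNm, ?_⟩
  intro j hj
  have hj' := (hmem j).mp hj
  rw [coeff_X_pow_mul'] at hj'
  by_contra h
  exact hj' (if_neg h)
end

section
/- Fix finite nonempty sets SP₀, SQ₀, SP₁, SQ₁ ⊂ ℕ with 0 ∈ SP₀ ∪ SQ₀, 0 ∈ SP₁ ∪ SQ₁, gcd of the nonzero elements of SP₀ ∪ SQ₀ ∪ SP₁ ∪ SQ₁ equal to 1, a₀n = max(SP₀ ∪ SQ₀) ≥ 1, a₁m = max(SP₁ ∪ SQ₁) ≥ 1, and suppose SQ₀ ⊄ SP₀ and SQ₁ ⊄ SP₁. Define E = [0 ∈ SQ₁ \ SP₁]·(min SP₀) + [a₁m ∈ SQ₁ \ SP₁]·(a₀n − max SP₀), E' = [0 ∈ SQ₀ \ SP₀]·(min SP₁) + [a₀n ∈ SQ₀ \ SP₀]·(a₁m −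 max SP₁), and δ = (a₀n − max SP₀)·(min SP₁) − (min SP₀)·(a₁m − max SP₁), and assume E ≠ 0. Then: (a) either (0 ∈ SQ₀ \ SP₀ and 0 ∈ SQ₁ \ SP₁) or (a₀n ∈ SQ₀ \ SP₀ and a₁m ∈ SQ₁ \ SP₁), and E' ≠ 0; (b) for generic coefficients, for every irreducible φ ∈ ℂ[x,y] with φ(P₀/Q₀, P₁/Q₁) = 0 in ℂ(t): the points (0, E) and (E', 0) are vertices of the Newton polygon N(φ); if it is not the case that all four conditions 0 ∈ SQ₀ \ SP₀, 0 ∈ SQ₁ \ SP₁, a₀n ∈ SQ₀ \ SP₀, a₁m ∈ SQ₁ \ SP₁ hold with δ ≠ 0, then the segment joining (0, E) and (E', 0) is contained in the boundary of N(φ) (it is an edge of N(φ)); otherwise the point p, defined as p = (min SP₁, a₀n − max SP₀) if δ < 0 and p = (a₁m − max SP₁, min SP₀) if δ > 0, is a vertex of N(φ) and the two segments joining (0, E) to p and p to (E', 0) are contained in the boundary of N(φ). -/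
open Polynomial

theorem max_mul_aux {Γ : Type*} [LinearOrderedCommGroupWithZero Γ] (a b c : Γ) :
    max a b * c = max (a * c) (b * c) := by
  rcases le_total a b with h | h
  · rw [max_eq_right h, max_eq_right (mul_le_mul' h le_rfl)]
  · rw [max_eq_left h, max_eq_left (mul_le_mul' h le_rfl)]

theorem gauss_bound {F Γ : Type*} [Field F] [LinearOrderedCommGroupWithZero Γ]
    (v : Valuation F Γ) (r : Γ) (hr : r ≠ 0) (s : Multiset F) :
    (∀ i, v ((s.map (fun y => X - C y)).prod.coeff i) * r ^ i ≤ (s.map (fun y => max r (v y))).prod) := by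
  induction s using Multiset.induction with
  | empty =>
    intro i
    rcases i with _ | i
    · simp
    · simp [coeff_one]
  | cons y s ih =>
    intro i
    simp only [Multiset.map_cons, Multiset.prod_cons]
    set f := (s.map (fun y => X - C y)).prod
    set M := (s.map (fun y => max r (v y))).prod
    rcases i with _ | i
    · simp only [mul_coeff_zero, coeff_sub, coeff_X_zero, coeff_C_zero, zero_sub, map_mul, Valuation.map_neg,
        pow_zero, mul_one]
      have := ih 0
      simp only [pow_zero, mul_one] at this
      exact mul_le_mul' (le_max_right _ _) this
    · rw [sub_mul, coeff_sub, coeff_X_mul, coeff_C_mul]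
      rw [max_mul_aux]
      have h1 : v (f.coeff i) * r ^ (i+1) ≤ r * M := by
        rw [pow_succ', mul_left_comm]; exact mul_le_mul' le_rfl (ih i)
      have h2 : v (y * f.coeff (i+1)) * r ^ (i+1) ≤ v y * M := by
        rw [map_mul, mul_assoc]; exact mul_le_mul' le_rfl (ih (i+1))
      calc _ ≤ max (v (f.coeff i)) (v (y * f.coeff (i+1))) * r ^ (i+1) :=
            mul_le_mul' (Valuation.map_sub _ _ _) le_rfl
        _ = max (v (f.coeff i) * r ^ (i+1)) (v (y * f.coeff (i+1)) * r ^ (i+1)) := by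
            rw [max_mul_aux]
        _ ≤ _ := max_le_max h1 h2

theorem gauss_M_ne {F Γ : Type*} [Field F] [LinearOrderedCommGroupWithZero Γ]
    (v : Valuation F Γ) (r : Γ) (hr : r ≠ 0) (s : Multiset F) :
    (s.map (fun y => max r (v y))).prod ≠ 0 := by
  intro h
  rw [Multiset.prod_eq_zero_iff, Multiset.mem_map] at h
  obtain ⟨y, _, hy⟩ := h
  exact hr (le_zero_iff.1 (hy ▸ le_max_left _ _))

theorem mul_lt_aux {Γ : Type*} [LinearOrderedCommGroupWithZero Γ] {a b c d : Γ}
    (h : a < b) (h' : c ≤ d) (hd : d ≠ 0) : a * c < b * d :=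
  lt_of_le_of_lt (mul_le_mul' le_rfl h') (by
    have := zero_lt_iff.2 hd
    gcongr)

theorem gauss_lt {F Γ : Type*} [Field F] [LinearOrderedCommGroupWithZero Γ]
    (v : Valuation F Γ) (r : Γ) (hr : r ≠ 0) (s : Multiset F) :
    v ((s.map (fun y => X - C y)).prod.coeff (s.countP (fun y => v y < r))) *
      r ^ (s.countP (fun y => v y < r)) = (s.map (fun y => max r (v y))).prod ∧
    ∀ i < s.countP (fun y => v y < r), v ((s.map (fun y => X - C y)).prod.coeff i) * r ^ i
      < (s.map (fun y => max r (v y))).prod := by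
  induction s using Multiset.induction with
  | empty => simp
  | cons y s ih =>
    have hb := gauss_bound v r hr s
    have hM := gauss_M_ne v r hr s
    by_cases hy : v y < r
    · rw [Multiset.countP_cons_of_pos (p := fun y => v y < r) _ hy]
      simp only [Multiset.map_cons, Multiset.prod_cons]
      set f := (s.map (fun y => X - C y)).prod
      set M := (s.map (fun y => max r (v y))).prod
      set j := s.countP (fun y => v y < r)
      rw [max_eq_left hy.le]
      have h2 : ∀ i, v (y * f.coeff i) * r ^ i < r * M := fun i => by
        rw [map_mul, mul_assoc]; exact mul_lt_aux hy (hb i) hM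
      have h1 : ∀ i, v (f.coeff i) * r ^ (i+1) = r * (v (f.coeff i) * r ^ i) := fun i => by
        rw [pow_succ', mul_left_comm]
      constructor
      · rw [sub_mul, coeff_sub, coeff_X_mul, coeff_C_mul, Valuation.map_sub_eq_of_lt_left, h1, ih.1]
        have := h2 (j+1)
        rw [← ih.1, ← h1] at this
        exact lt_of_mul_lt_mul_right this zero_le
      · intro i hi
        rcases i with _ | i
        · have := h2 0
          simpa [mul_coeff_zero] using this
        · rw [sub_mul, coeff_sub, coeff_X_mul, coeff_C_mul]
          refine lt_of_le_of_lt (mul_le_mul' (Valuation.map_sub _ _ _) le_rfl) ?_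
          rw [max_mul_aux]
          refine max_lt ?_ (h2 _)
          rw [h1]
          have := ih.2 i (by omega)
          have hr' := zero_lt_iff.2 hr
          gcongr
    · rw [Multiset.countP_cons_of_neg (p := fun y => v y < r) _ hy]
      simp only [Multiset.map_cons, Multiset.prod_cons]
      set f := (s.map (fun y => X - C y)).prod
      set M := (s.map (fun y => max r (v y))).prod
      set j := s.countP (fun y => v y < r)
      push Not at hy
      rw [max_eq_right hy]
      have hy0 : 0 < v y := lt_of_lt_of_le (zero_lt_iff.2 hr) hy
      have h2 : ∀ i, v (y * f.coeff i) * r ^ i = v y * (v (f.coeff i) * r ^ i) := fun i => by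
        rw [map_mul, mul_assoc]
      have h1 : ∀ i, i + 1 ≤ j → v (f.coeff i) * r ^ (i+1) < v y * M := fun i hi => by
        rw [pow_succ, ← mul_assoc, mul_comm (v y)]; exact mul_lt_aux (ih.2 i (by omega)) hy hy0.ne'
      constructor
      · rcases hj : j with _ | k
        · rw [hj] at ih
          rw [← ih.1]
          simp [mul_coeff_zero]
        · rw [sub_mul, coeff_sub, coeff_X_mul, coeff_C_mul, Valuation.map_sub_eq_of_lt_right, h2, ← hj, ih.1]
          have := h1 k (by omega)
          rw [← ih.1, ← h2, hj] at this
          exact lt_of_mul_lt_mul_right this zero_le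
      · intro i hi
        have h3 := ih.2 i hi
        rcases i with _ | i
        · have : v y * (v (f.coeff 0) * r ^ 0) < v y * M := by gcongr
          simpa [mul_coeff_zero] using this
        · rw [sub_mul, coeff_sub, coeff_X_mul, coeff_C_mul]
          refine lt_of_le_of_lt (mul_le_mul' (Valuation.map_sub _ _ _) le_rfl) ?_
          rw [max_mul_aux]
          refine max_lt (h1 i hi.le) ?_
          rw [h2]
          gcongr

theorem gauss_le {F Γ : Type*} [Field F] [LinearOrderedCommGroupWithZero Γ]
    (v : Valuation F Γ) (r : Γ) (hr : r ≠ 0) (s : Multiset F) :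
    v ((s.map (fun y => X - C y)).prod.coeff (s.countP (fun y => v y ≤ r))) *
      r ^ (s.countP (fun y => v y ≤ r)) = (s.map (fun y => max r (v y))).prod ∧
    ∀ i > s.countP (fun y => v y ≤ r), v ((s.map (fun y => X - C y)).prod.coeff i) * r ^ i
      < (s.map (fun y => max r (v y))).prod := by
  induction s using Multiset.induction with
  | empty => 
    simp only [Multiset.map_zero, Multiset.prod_zero, Multiset.countP_zero]
    refine ⟨by simp, fun i hi => ?_⟩
    rw [coeff_one, if_neg (by omega)]; simp
  | cons y s ih =>
    have hb := gauss_bound v r hr s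
    have hM := gauss_M_ne v r hr s
    by_cases hy : v y ≤ r
    · rw [Multiset.countP_cons_of_pos (p := fun y => v y ≤ r) _ hy]
      simp only [Multiset.map_cons, Multiset.prod_cons]
      set f := (s.map (fun y => X - C y)).prod
      set M := (s.map (fun y => max r (v y))).prod
      set j := s.countP (fun y => v y ≤ r)
      rw [max_eq_left hy]
      have hr' := zero_lt_iff.2 hr
      have h2 : ∀ i > j, v (y * f.coeff i) * r ^ i < r * M := fun i hi => by
        rw [map_mul, mul_assoc, mul_comm r, mul_comm (v y)]; exact mul_lt_aux (ih.2 i hi) hy hr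
      have h1 : ∀ i, v (f.coeff i) * r ^ (i+1) = r * (v (f.coeff i) * r ^ i) := fun i => by
        rw [pow_succ', mul_left_comm]
      constructor
      · rw [sub_mul, coeff_sub, coeff_X_mul, coeff_C_mul, Valuation.map_sub_eq_of_lt_left, h1, ih.1]
        have := h2 (j+1) (by omega)
        rw [← ih.1, ← h1] at this
        exact lt_of_mul_lt_mul_right this zero_le
      · intro i hi
        rcases i with _ | i
        · omega
        · rw [sub_mul, coeff_sub, coeff_X_mul, coeff_C_mul]
          refine lt_of_le_of_lt (mul_le_mul' (Valuation.map_sub _ _ _) le_rfl) ?_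
          rw [max_mul_aux]
          refine max_lt ?_ (h2 _ (by omega))
          rw [h1]
          have := ih.2 i (by omega)
          gcongr
    · rw [Multiset.countP_cons_of_neg (p := fun y => v y ≤ r) _ hy]
      simp only [Multiset.map_cons, Multiset.prod_cons]
      set f := (s.map (fun y => X - C y)).prod
      set M := (s.map (fun y => max r (v y))).prod
      set j := s.countP (fun y => v y ≤ r)
      push Not at hy
      rw [max_eq_right hy.le]
      have hy0 : 0 < v y := lt_of_lt_of_le (zero_lt_iff.2 hr) hy.le
      have h2 : ∀ i, v (y * f.coeff i) * r ^ i = v y * (v (f.coeff i) * r ^ i) := fun i => by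
        rw [map_mul, mul_assoc]
      have h1 : ∀ i, v (f.coeff i) * r ^ (i+1) < v y * M := fun i => by
        rw [pow_succ', mul_left_comm]; exact mul_lt_aux hy (hb i) hM
      constructor
      · rcases hj : j with _ | k
        · rw [hj] at ih
          rw [← ih.1]
          simp [mul_coeff_zero]
        · rw [sub_mul, coeff_sub, coeff_X_mul, coeff_C_mul, Valuation.map_sub_eq_of_lt_right, h2, ← hj, ih.1]
          have := h1 k
          rw [← ih.1, ← h2, hj] at this
          exact lt_of_mul_lt_mul_right this zero_le
      · intro i hi
        have h3 := ih.2 i hi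
        rcases i with _ | i
        · omega
        · rw [sub_mul, coeff_sub, coeff_X_mul, coeff_C_mul]
          refine lt_of_le_of_lt (mul_le_mul' (Valuation.map_sub _ _ _) le_rfl) ?_
          rw [max_mul_aux]
          refine max_lt (h1 i) ?_
          rw [h2]
          gcongr



theorem newton_core {F Γ : Type*} [Field F] [LinearOrderedCommGroupWithZero Γ]
    (v : Valuation F Γ) (ξ : Γ) (h0 : ξ ≠ 0) (h1 : ξ < 1) (ψ : F) (s0 s1 s2 : Multiset F)
    (f : F[X]) (hf : f = C ψ * ((s0 + s1 + s2).map (fun y => X - C y)).prod)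
    (S : ℕ → ℕ → Prop) (hS1 : ∀ i j, S i j → ξ ^ i ≤ v (f.coeff j))
    (hS2 : ∀ i j, v (f.coeff j) = ξ ^ i → S i j)
    (hle : ∀ j, v (f.coeff j) ≤ 1) (hone : ∃ j, v (f.coeff j) = 1)
    (n0 m0 n1 m1 : ℕ) (r0 r1 : Γ) (hr0 : r0 ≠ 0) (hr1 : r1 ≠ 0) (hr0' : r0 ≤ 1) (hr1' : r1 ≤ 1)
    (hp0 : r0 ^ n0 = ξ ^ m0) (hp1 : r1 ^ n1 = ξ ^ m1)
    (hz0 : n0 ≠ 0 → m0 ≠ 0) (hz1 : n1 ≠ 0 → m1 ≠ 0)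
    (hc0 : s0.card = n0) (hc1 : s1.card = n1)
    (hv0 : ∀ y ∈ s0, v y = r0) (hv1 : ∀ y ∈ s1, v y = r1) (hv2 : ∀ y ∈ s2, 1 ≤ v y) :
    (S 0 (n0 + n1) ∧ ∀ j < n0 + n1, ¬ S 0 j) ∧
    (S (m0 + m1) 0 ∧ ∀ i < m0 + m1, ¬ S i 0) ∧
    (∀ i j, S i j → n0 * m0 + min (m0 * n1) (m1 * n0) ≤ n0 * i + m0 * j) ∧
    (n1 * m0 < n0 * m1 → S m0 n1) := by
  have hξpos : 0 < ξ := zero_lt_iff.2 h0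
  have hmono : ∀ i j : ℕ, ξ ^ i ≤ ξ ^ j → j ≤ i := fun i j h =>
    (pow_le_pow_iff_right_of_lt_one₀ hξpos h1).1 h
  have hprod : ∀ r : Γ, r ≤ 1 → ((s0 + s1 + s2).map (fun y => max r (v y))).prod =
      max r r0 ^ n0 * max r r1 ^ n1 * (s2.map v).prod := by
    intro r hr
    rw [Multiset.map_add, Multiset.map_add, Multiset.prod_add, Multiset.prod_add]
    congr 1
    · congr 1
      · rw [Multiset.map_congr rfl (g := fun _ => max r r0) (fun y hy => by rw [hv0 y hy])]
        simp [hc0]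
      · rw [Multiset.map_congr rfl (g := fun _ => max r r1) (fun y hy => by rw [hv1 y hy])]
        simp [hc1]
    · rw [Multiset.map_congr rfl (fun y hy => max_eq_right (hr.trans (hv2 y hy)))]
  set g := ((s0 + s1 + s2).map (fun y => X - C y)).prod with hg
  have hfc : ∀ j, v (f.coeff j) = v ψ * v (g.coeff j) := fun j => by rw [hf, coeff_C_mul, map_mul]
  -- normalisation
  have hK : v ψ * (s2.map v).prod = 1 := by
    have hp := hprod 1 le_rfl
    rw [max_eq_left hr0', max_eq_left hr1', one_pow, one_pow, one_mul, one_mul] at hp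
    apply le_antisymm
    · have := (gauss_lt v 1 one_ne_zero (s0 + s1 + s2)).1
      rw [one_pow, mul_one, hp] at this
      rw [← this, ← hg, ← hfc]
      exact hle _
    · obtain ⟨j, hj⟩ := hone
      have := gauss_bound v 1 one_ne_zero (s0 + s1 + s2) j
      rw [one_pow, mul_one, hp] at this
      rw [← hj, hfc]
      exact mul_le_mul' le_rfl this
  have hbound : ∀ r : Γ, r ≠ 0 → r ≤ 1 → ∀ j, v (f.coeff j) * r ^ j ≤ max r r0 ^ n0 * max r r1 ^ n1 := by
    intro r hr hr' j
    have := gauss_bound v r hr (s0 + s1 + s2) j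
    rw [hprod r hr'] at this
    rw [hfc, mul_assoc]
    refine (mul_le_mul' le_rfl this).trans ?_
    rw [mul_left_comm, hK, mul_one]
  have hlt : ∀ r : Γ, r ≠ 0 → r ≤ 1 → ∀ n, (s0 + s1 + s2).countP (fun y => v y < r) = n →
      v (f.coeff n) * r ^ n = max r r0 ^ n0 * max r r1 ^ n1 ∧
      ∀ j < n, v (f.coeff j) * r ^ j < max r r0 ^ n0 * max r r1 ^ n1 := by
    intro r hr hr' n hn
    have h := gauss_lt v r hr (s0 + s1 + s2)
    rw [hprod r hr', hn] at h
    have hψ : 0 < v ψ := zero_lt_iff.2 (left_ne_zero_of_mul_eq_one hK)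
    have e : max r r0 ^ n0 * max r r1 ^ n1 =
      v ψ * (max r r0 ^ n0 * max r r1 ^ n1 * (s2.map v).prod) := by
      rw [mul_left_comm, hK, mul_one]
    rw [e]
    refine ⟨by rw [hfc, mul_assoc, h.1], fun j hj => ?_⟩
    rw [hfc, mul_assoc]
    have := h.2 j hj
    gcongr
  have hc2 : ∀ r : Γ, r ≤ 1 → s2.countP (fun y => v y < r) = 0 := fun r hr => by
    rw [Multiset.countP_eq_zero]
    intro y hy
    exact not_lt.2 (hr.trans (hv2 y hy))
  refine ⟨?_, ?_, ?_, ?_⟩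
  · have hcount : (s0 + s1 + s2).countP (fun y => v y < 1) = n0 + n1 := by
      rw [Multiset.countP_add, Multiset.countP_add, hc2 1 le_rfl, add_zero]
      congr 1
      · rw [← hc0, Multiset.countP_eq_card]
        intro y hy
        rw [hv0 y hy]
        refine lt_of_le_of_ne hr0' fun h => ?_
        have hn : n0 ≠ 0 := by
          rw [← hc0]; exact (Multiset.card_pos_iff_exists_mem.2 ⟨y, hy⟩).ne'
        rw [h, one_pow] at hp0
        exact (pow_lt_one₀ zero_le h1 (hz0 hn)).ne' hp0
      · rw [← hc1, Multiset.countP_eq_card]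
        intro y hy
        rw [hv1 y hy]
        refine lt_of_le_of_ne hr1' fun h => ?_
        have hn : n1 ≠ 0 := by
          rw [← hc1]; exact (Multiset.card_pos_iff_exists_mem.2 ⟨y, hy⟩).ne'
        rw [h, one_pow] at hp1
        exact (pow_lt_one₀ zero_le h1 (hz1 hn)).ne' hp1
    have h := hlt 1 one_ne_zero le_rfl _ hcount
    simp only [max_eq_left hr0', max_eq_left hr1', one_pow, mul_one] at h
    refine ⟨hS2 _ _ (by rw [h.1, pow_zero]), fun j hj hs => ?_⟩
    have := hS1 _ _ hs
    rw [pow_zero] at this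
    exact absurd (h.2 j hj) (not_lt.2 this)
  · have h : v (f.coeff 0) = ξ ^ (m0 + m1) := by
      have hg0 : v (g.coeff 0) = r0 ^ n0 * r1 ^ n1 * (s2.map v).prod := by
        rw [hg, coeff_zero_multiset_prod, Multiset.map_map, map_multiset_prod, Multiset.map_map]
        rw [Multiset.map_congr rfl (g := v) (fun y hy => by simp)]
        rw [Multiset.map_add, Multiset.map_add, Multiset.prod_add, Multiset.prod_add]
        congr 1
        congr 1
        · rw [Multiset.map_congr rfl (g := fun _ => r0) (fun y hy => by rw [hv0 y hy])]
          simp [hc0]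
        · rw [Multiset.map_congr rfl (g := fun _ => r1) (fun y hy => by rw [hv1 y hy])]
          simp [hc1]
      rw [hfc, hg0, mul_left_comm, hK, mul_one, hp0, hp1, pow_add]
    refine ⟨hS2 _ _ h, fun i hi hs => ?_⟩
    have := hS1 _ _ hs
    rw [h] at this
    have := hmono _ _ this
    omega
  · intro i j hs
    apply hmono
    have h := hbound r0 hr0 hr0' j
    have h' := (mul_le_mul' (hS1 _ _ hs) (le_refl (r0 ^ j))).trans h
    rw [max_self] at h'
    have h2 := pow_le_pow_left₀ zero_le h' n0
    have e1 : (ξ ^ i * r0 ^ j) ^ n0 = ξ ^ (n0 * i + m0 * j) := by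
      rw [mul_pow, ← pow_mul, ← pow_mul, mul_comm j n0, pow_mul r0, hp0, ← pow_mul, ← pow_add,
        mul_comm i]
    rw [e1] at h2
    refine h2.trans ?_
    rw [mul_pow, pow_add]
    refine mul_le_mul' ?_ ?_
    · rw [hp0, ← pow_mul, mul_comm]
    · rcases le_total r0 r1 with h | h
      · rw [max_eq_right h, hp1, ← pow_mul]
        exact pow_le_pow_of_le_one zero_le h1.le (min_le_right _ _)
      · rw [max_eq_left h, ← pow_mul, mul_comm n1 n0, pow_mul, hp0, ← pow_mul]
        exact pow_le_pow_of_le_one zero_le h1.le (min_le_left _ _)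
  · intro hlt'
    have hr : r1 < r0 := by
      apply lt_of_pow_lt_pow_left₀ (n0 * n1) zero_le
      rw [pow_mul r0, hp0, mul_comm n0 n1, pow_mul r1, hp1, ← pow_mul, ← pow_mul]
      exact pow_lt_pow_right_of_lt_one₀ hξpos h1 (by linarith [mul_comm n1 m0, mul_comm n0 m1])
    have hcount : (s0 + s1 + s2).countP (fun y => v y < r0) = n1 := by
      rw [Multiset.countP_add, Multiset.countP_add, hc2 r0 hr0', add_zero]
      have : s0.countP (fun y => v y < r0) = 0 := by
        rw [Multiset.countP_eq_zero]
        intro y hy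
        rw [hv0 y hy]
        exact lt_irrefl _
      rw [this, zero_add, ← hc1, Multiset.countP_eq_card]
      intro y hy
      rw [hv1 y hy]
      exact hr
    have h := (hlt r0 hr0 hr0' _ hcount).1
    rw [max_self, max_eq_left hr.le, hp0] at h
    exact hS2 _ _ (mul_right_cancel₀ (pow_ne_zero _ hr0) h)



theorem hull_ge (A : Set (ℝ × ℝ)) (w1 w2 h : ℝ) (hA : ∀ a ∈ A, h ≤ w1 * a.1 + w2 * a.2) :
    ∀ a ∈ convexHull ℝ A, h ≤ w1 * a.1 + w2 * a.2 := by
  have hconv : Convex ℝ {a : ℝ × ℝ | h ≤ w1 * a.1 + w2 * a.2} := by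
    intro a ha b hb s t hs ht hst
    simp only [Set.mem_ofPred_eq, Prod.fst_add, Prod.snd_add, Prod.smul_fst, Prod.smul_snd,
      smul_eq_mul] at *
    have : h = s * h + t * h := by rw [← add_mul, hst, one_mul]
    nlinarith [mul_le_mul_of_nonneg_left ha hs, mul_le_mul_of_nonneg_left hb ht]
  intro a ha
  exact convexHull_min (t := {a : ℝ × ℝ | h ≤ w1 * a.1 + w2 * a.2}) hA hconv ha

theorem seg_frontier (A : Set (ℝ × ℝ)) (w1 w2 h : ℝ) (hw : w1 ≠ 0 ∨ w2 ≠ 0)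
    (hA : ∀ a ∈ A, h ≤ w1 * a.1 + w2 * a.2) (p q : ℝ × ℝ) (hp : p ∈ A) (hq : q ∈ A)
    (hp' : w1 * p.1 + w2 * p.2 = h) (hq' : w1 * q.1 + w2 * q.2 = h) :
    segment ℝ p q ⊆ frontier (convexHull ℝ A) := by
  intro z hz
  have hzh : z ∈ convexHull ℝ A := 
    (convex_convexHull ℝ A).segment_subset (subset_convexHull ℝ A hp) (subset_convexHull ℝ A hq) hz
  have hz' : w1 * z.1 + w2 * z.2 = h := by
    obtain ⟨s, t, hs, ht, hst, rfl⟩ := hz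
    simp only [Prod.fst_add, Prod.snd_add, Prod.smul_fst, Prod.smul_snd, smul_eq_mul]
    have : h = s * h + t * h := by rw [← add_mul, hst, one_mul]
    rw [this]; nth_rw 1 [← hp']; rw [← hq']; ring
  refine ⟨subset_closure hzh, fun hintr => ?_⟩
  have hcont : Filter.Tendsto (fun e : ℝ => (z.1 - e * w1, z.2 - e * w2)) (nhdsWithin 0 (Set.Ioi 0)) (nhds z) := by
    have : Continuous (fun e : ℝ => (z.1 - e * w1, z.2 - e * w2)) := by fun_prop
    have h2 := this.tendsto 0
    simp only [zero_mul, sub_zero] at h2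
    exact h2.mono_left nhdsWithin_le_nhds
  have hev := hcont.eventually (mem_interior_iff_mem_nhds.1 hintr)
  have hev2 := hev.and self_mem_nhdsWithin
  obtain ⟨e, he, hepos⟩ := hev2.exists
  have hge := hull_ge A w1 w2 h hA _ he
  simp only at hge
  have hpos : 0 < w1 ^ 2 + w2 ^ 2 := by
    rcases hw with hw | hw
    · have := sq_pos_of_ne_zero hw; positivity
    · have := sq_pos_of_ne_zero hw; positivity
  nlinarith [mul_pos hepos hpos]

theorem ext_two (A : Set (ℝ × ℝ)) (w1 w2 h u1 u2 k : ℝ) (hdet : w1 * u2 - w2 * u1 ≠ 0)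
    (hA : ∀ a ∈ A, h ≤ w1 * a.1 + w2 * a.2) (hA' : ∀ a ∈ A, k ≤ u1 * a.1 + u2 * a.2)
    (p : ℝ × ℝ) (hp : p ∈ A) (hp1 : w1 * p.1 + w2 * p.2 = h) (hp2 : u1 * p.1 + u2 * p.2 = k) :
    p ∈ Set.extremePoints ℝ (convexHull ℝ A) := by
  refine ⟨subset_convexHull ℝ A hp, fun a ha b hb hab => ?_⟩
  obtain ⟨s, t, hs, ht, hst, rfl⟩ := hab
  have key : ∀ w1 w2 h : ℝ, (∀ a ∈ A, h ≤ w1 * a.1 + w2 * a.2) → 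
      w1 * (s • a + t • b).1 + w2 * (s • a + t • b).2 = h → w1 * a.1 + w2 * a.2 = h := by
    intro w1 w2 h hA hp
    have h1 := hull_ge A w1 w2 h hA a ha
    have h2 := hull_ge A w1 w2 h hA b hb
    simp only [Prod.fst_add, Prod.snd_add, Prod.smul_fst, Prod.smul_snd, smul_eq_mul] at hp
    have e : h = s * h + t * h := by rw [← add_mul, hst, one_mul]
    have : s * (w1 * a.1 + w2 * a.2 - h) ≤ 0 := by
      nlinarith [mul_le_mul_of_nonneg_left h2 ht.le]
    have : w1 * a.1 + w2 * a.2 - h ≤ 0 := by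
      by_contra hc
      push Not at hc
      nlinarith [mul_pos hs hc]
    linarith
  have e1 := key _ _ _ hA hp1
  have e2 := key _ _ _ hA' hp2
  rw [← hp1] at e1
  rw [← hp2] at e2
  ext
  · apply mul_left_cancel₀ hdet
    linear_combination u2 * e1 - w2 * e2
  · apply mul_left_cancel₀ hdet
    linear_combination w1 * e2 - u1 * e1


theorem geom_conclude (φ : MvPolynomial (Fin 2) ℂ) (S : ℕ → ℕ → Prop)
    (hSmem : ∀ d ∈ φ.support, S (d 0) (d 1))
    (hS : ∀ i j, S i j → ∃ d ∈ φ.support, d 0 = i ∧ d 1 = j)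
    (n0 m0 n1 m1 : ℕ) (hne : 0 < n0 + n1) (hne' : 0 < m0 + m1)
    (hz0 : n0 = 0 ↔ m0 = 0) (hz1 : n1 = 0 ↔ m1 = 0)
    (H1 : S 0 (n0 + n1) ∧ ∀ j < n0 + n1, ¬ S 0 j)
    (H2 : S (m0 + m1) 0 ∧ ∀ i < m0 + m1, ¬ S i 0)
    (H3 : ∀ i j, S i j → n0 * m0 + min (m0 * n1) (m1 * n0) ≤ n0 * i + m0 * j)
    (H3' : ∀ i j, S i j → n1 * m1 + min (m1 * n0) (m0 * n1) ≤ n1 * i + m1 * j)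
    (H4 : n1 * m0 < n0 * m1 → S m0 n1)
    (H4' : n0 * m1 < n1 * m0 → S m1 n0) :
    ((0 : ℝ), ((n0 + n1 : ℕ) : ℝ)) ∈ Set.extremePoints ℝ (newtonPolygon φ) ∧
    (((m0 + m1 : ℕ) : ℝ), (0 : ℝ)) ∈ Set.extremePoints ℝ (newtonPolygon φ) ∧
    (n1 * m0 = n0 * m1 → 
      segment ℝ ((0 : ℝ), ((n0 + n1 : ℕ) : ℝ)) (((m0 + m1 : ℕ) : ℝ), (0 : ℝ)) ⊆ frontier (newtonPolygon φ)) ∧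
    (n1 * m0 < n0 * m1 →
      ((m0 : ℝ), (n1 : ℝ)) ∈ Set.extremePoints ℝ (newtonPolygon φ) ∧
      segment ℝ ((0 : ℝ), ((n0 + n1 : ℕ) : ℝ)) ((m0 : ℝ), (n1 : ℝ)) ⊆ frontier (newtonPolygon φ) ∧
      segment ℝ ((m0 : ℝ), (n1 : ℝ)) (((m0 + m1 : ℕ) : ℝ), (0 : ℝ)) ⊆ frontier (newtonPolygon φ)) ∧
    (n0 * m1 < n1 * m0 →
      ((m1 : ℝ), (n0 : ℝ)) ∈ Set.extremePoints ℝ (newtonPolygon φ) ∧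
      segment ℝ ((0 : ℝ), ((n0 + n1 : ℕ) : ℝ)) ((m1 : ℝ), (n0 : ℝ)) ⊆ frontier (newtonPolygon φ) ∧
      segment ℝ ((m1 : ℝ), (n0 : ℝ)) (((m0 + m1 : ℕ) : ℝ), (0 : ℝ)) ⊆ frontier (newtonPolygon φ)) := by
  set A : Set (ℝ × ℝ) := ((fun d : Fin 2 →₀ ℕ => ((d 0 : ℝ), (d 1 : ℝ))) '' ↑φ.support) with hA
  have hN : newtonPolygon φ = convexHull ℝ A := rfl
  rw [hN]
  have hmem : ∀ i j, S i j → ((i : ℝ), (j : ℝ)) ∈ A := by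
    intro i j h
    obtain ⟨d, hd, rfl, rfl⟩ := hS i j h
    exact ⟨d, hd, rfl⟩
  have hall : ∀ w1 w2 h : ℕ, (∀ i j, S i j → h ≤ w1 * i + w2 * j) →
      ∀ a ∈ A, (h : ℝ) ≤ (w1 : ℝ) * a.1 + (w2 : ℝ) * a.2 := by
    rintro w1 w2 h hh _ ⟨d, hd, rfl⟩
    have := hh _ _ (hSmem d hd)
    simp only
    exact_mod_cast this
  have mE : ((0 : ℝ), ((n0 + n1 : ℕ) : ℝ)) ∈ A := by simpa using hmem _ _ H1.1
  have mE' : (((m0 + m1 : ℕ) : ℝ), (0 : ℝ)) ∈ A := by simpa using hmem _ _ H2.1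
  have B1 : ∀ i j, S i j → 0 ≤ 1 * i + 0 * j := by intros; exact Nat.zero_le _
  have B2 : ∀ i j, S i j → 0 ≤ 0 * i + 1 * j := by intros; exact Nat.zero_le _
  have B3 : ∀ i j, S i j → (n0 + n1) ≤ (n0 + n1) * i + 1 * j := by
    intro i j h
    rcases Nat.eq_zero_or_pos i with rfl | hi
    · by_contra hc
      exact H1.2 j (by omega) h
    · nlinarith
  have B4 : ∀ i j, S i j → (m0 + m1) ≤ 1 * i + (m0 + m1) * j := by
    intro i j h
    rcases Nat.eq_zero_or_pos j with rfl | hi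
    · by_contra hc
      exact H2.2 i (by omega) h
    · nlinarith
  refine ⟨?_, ?_, ?_, ?_, ?_⟩
  · refine ext_two A _ _ _ _ _ _ ?_ (hall _ _ _ B1) (hall _ _ _ B3) _ mE ?_ ?_
    · simp
    · simp
    · simp
  · refine ext_two A _ _ _ _ _ _ ?_ (hall _ _ _ B2) (hall _ _ _ B4) _ mE' ?_ ?_
    · simp
    · simp
    · simp
  · intro heq
    by_cases hn : n0 = 0
    · have hm := hz0.1 hn
      subst hn hm
      have hn1 : 0 < n1 := by omega
      refine seg_frontier A _ _ _ ?_ (hall _ _ _ H3') _ _ mE mE' ?_ ?_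
      · left; exact_mod_cast hn1.ne'
      · simp; ring
      · simp
    · refine seg_frontier A _ _ _ ?_ (hall _ _ _ H3) _ _ mE mE' ?_ ?_
      · left; exact_mod_cast hn
      · rw [min_eq_left (by linarith [mul_comm n1 m0, mul_comm m1 n0])]; push_cast; ring
      · rw [min_eq_right (by linarith [mul_comm n1 m0, mul_comm m1 n0])]; push_cast; ring
  · intro hlt
    have hc : (n1 : ℝ) * m0 < n0 * m1 := by exact_mod_cast hlt
    have n0p : n0 ≠ 0 := by rintro rfl; omega
    have m1p : m1 ≠ 0 := by rintro rfl; omega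
    have n1p : n1 ≠ 0 := fun h => m1p (hz1.1 h)
    have mp := hmem _ _ (H4 hlt)
    have e1 : min (m0 * n1) (m1 * n0) = m0 * n1 := min_eq_left (by linarith [mul_comm n1 m0, mul_comm m1 n0])
    have e2 : min (m1 * n0) (m0 * n1) = m0 * n1 := min_eq_right (by linarith [mul_comm n1 m0, mul_comm m1 n0])
    rw [e1] at H3
    rw [e2] at H3'
    refine ⟨?_, ?_, ?_⟩
    · refine ext_two A _ _ _ _ _ _ ?_ (hall _ _ _ H3) (hall _ _ _ H3') _ mp ?_ ?_
      · intro h; nlinarith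
      · push_cast; ring
      · push_cast; ring
    · refine seg_frontier A _ _ _ ?_ (hall _ _ _ H3) _ _ mE mp ?_ ?_
      · left; exact_mod_cast n0p
      · push_cast; ring
      · push_cast; ring
    · refine seg_frontier A _ _ _ ?_ (hall _ _ _ H3') _ _ mp mE' ?_ ?_
      · left; exact_mod_cast n1p
      · push_cast; ring
      · push_cast; ring
  · intro hlt
    have hc : (n0 : ℝ) * m1 < n1 * m0 := by exact_mod_cast hlt
    have n1p : n1 ≠ 0 := by rintro rfl; omega
    have m0p : m0 ≠ 0 := by rintro rfl; omega
    have n0p : n0 ≠ 0 := fun h => m0p (hz0.1 h)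
    have mp := hmem _ _ (H4' hlt)
    have e1 : min (m0 * n1) (m1 * n0) = m1 * n0 := min_eq_right (by linarith [mul_comm n1 m0, mul_comm m1 n0])
    have e2 : min (m1 * n0) (m0 * n1) = m1 * n0 := min_eq_left (by linarith [mul_comm n1 m0, mul_comm m1 n0])
    rw [e1] at H3
    rw [e2] at H3'
    refine ⟨?_, ?_, ?_⟩
    · refine ext_two A _ _ _ _ _ _ ?_ (hall _ _ _ H3) (hall _ _ _ H3') _ mp ?_ ?_
      · intro h; nlinarith
      · push_cast; ring
      · push_cast; ring
    · refine seg_frontier A _ _ _ ?_ (hall _ _ _ H3') _ _ mE mp ?_ ?_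
      · left; exact_mod_cast n1p
      · push_cast; ring
      · push_cast; ring
    · refine seg_frontier A _ _ _ ?_ (hall _ _ _ H3) _ _ mp mE' ?_ ?_
      · left; exact_mod_cast n0p
      · push_cast; ring
      · push_cast; ring



theorem exists_eval_ne {σ : Type*} (G : MvPolynomial σ ℂ) (hG : G ≠ 0) :
    ∃ c, MvPolynomial.eval c G ≠ 0 := by
  by_contra h
  push Not at h
  exact hG (MvPolynomial.funext (fun c => by rw [h c, map_zero]))

theorem eval_map_eval {σ : Type*} (f : (MvPolynomial σ ℂ)[X]) (c : σ → ℂ) (u : ℂ) :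
    (f.map (MvPolynomial.eval c)).eval u = MvPolynomial.eval c (f.eval (MvPolynomial.C u)) := by
  have : u = MvPolynomial.eval c (MvPolynomial.C u) := by simp
  conv_lhs => rw [this]
  rw [eval_map, eval₂_hom]

theorem gen_s18 {σ : Type*} (f g : (MvPolynomial σ ℂ)[X]) (B : Set σ)
    (hf : ∀ c c' : σ → ℂ, (∀ i ∈ B, c i = c' i) →
      f.map (MvPolynomial.eval c) = f.map (MvPolynomial.eval c'))
    (hg : ∀ c c' : σ → ℂ, (∀ i ∉ B, c i = c' i) →
      g.map (MvPolynomial.eval c) = g.map (MvPolynomial.eval c'))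
    (hf0 : f ≠ 0) (hg0 : g ≠ 0)
    (hbp : ∀ u : ℂ, (∃ c : σ → ℂ, (f.map (MvPolynomial.eval c)).eval u ≠ 0) ∨
      (∃ c : σ → ℂ, (g.map (MvPolynomial.eval c)).eval u ≠ 0)) :
    ∃ G : MvPolynomial σ ℂ, G ≠ 0 ∧ ∃ p q, f * p + g * q = C G := by
  classical
  -- base points of g
  obtain ⟨cg, hcg⟩ := exists_eval_ne g.leadingCoeff (leadingCoeff_ne_zero.2 hg0)
  have hcg' : g.map (MvPolynomial.eval cg) ≠ 0 := by
    intro h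
    apply hcg
    have := congrArg (fun p => coeff p g.natDegree) h
    simpa [coeff_map] using this
  set U := (g.map (MvPolynomial.eval cg)).roots.toFinset.filter
    (fun u => g.eval (MvPolynomial.C u) = 0) with hU
  have hUmem : ∀ u, g.eval (MvPolynomial.C u) = 0 → u ∈ U := by
    intro u hu
    rw [hU, Finset.mem_filter, Multiset.mem_toFinset, mem_roots hcg']
    refine ⟨?_, hu⟩
    rw [IsRoot, eval_map_eval, hu, map_zero]
  have h1 : f.leadingCoeff * ∏ u ∈ U, f.eval (MvPolynomial.C u) ≠ 0 := by
    refine mul_ne_zero (leadingCoeff_ne_zero.2 hf0) (Finset.prod_ne_zero_iff.2 fun u hu h => ?_)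
    have hu' := (Finset.mem_filter.1 hu).2
    rcases hbp u with ⟨c, hc⟩ | ⟨c, hc⟩
    · rw [eval_map_eval, h, map_zero] at hc; exact hc rfl
    · rw [eval_map_eval, hu', map_zero] at hc; exact hc rfl
  obtain ⟨c1, hc1⟩ := exists_eval_ne _ h1
  rw [map_mul, map_prod] at hc1
  have hlc := left_ne_zero_of_mul hc1
  have hfU := Finset.prod_ne_zero_iff.1 (right_ne_zero_of_mul hc1)
  have hfc : f.map (MvPolynomial.eval c1) ≠ 0 := by
    intro h
    apply hlc
    have := congrArg (fun p => coeff p f.natDegree) h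
    simpa [coeff_map] using this
  have h2 : ∏ u ∈ (f.map (MvPolynomial.eval c1)).roots.toFinset, g.eval (MvPolynomial.C u) ≠ 0 := by
    refine Finset.prod_ne_zero_iff.2 fun u hu h => ?_
    rw [Multiset.mem_toFinset, mem_roots hfc, IsRoot, eval_map_eval] at hu
    exact hfU u (hUmem u h) hu
  obtain ⟨c2, hc2⟩ := exists_eval_ne _ h2
  rw [map_prod] at hc2
  have hgR := Finset.prod_ne_zero_iff.1 hc2
  let c0 : σ → ℂ := fun i => if i ∈ B then c1 i else c2 i
  have e1 : f.map (MvPolynomial.eval c0) = f.map (MvPolynomial.eval c1) :=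
    hf _ _ (fun i hi => by simp [c0, hi])
  have e2 : g.map (MvPolynomial.eval c0) = g.map (MvPolynomial.eval c2) :=
    hg _ _ (fun i hi => by simp [c0, hi])
  refine ⟨resultant f g f.natDegree (g.natDegree + 1), ?_, ?_⟩
  · intro h
    have h3 := congrArg (MvPolynomial.eval c0) h
    rw [map_zero, ← resultant_map_map, e1, e2] at h3
    have hd : f.natDegree = (f.map (MvPolynomial.eval c1)).natDegree :=
      (natDegree_map_of_leadingCoeff_ne_zero _ hlc).symm
    rw [hd, resultant_eq_prod_eval _ _ _ (natDegree_map_le.trans (Nat.le_succ _))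
      (IsAlgClosed.splits _)] at h3
    refine mul_ne_zero (pow_ne_zero _ (leadingCoeff_ne_zero.2 hfc)) ?_ h3
    rw [Ne, Multiset.prod_eq_zero_iff, Multiset.mem_map]
    rintro ⟨u, hu, hu'⟩
    rw [eval_map_eval] at hu'
    exact hgR u (Multiset.mem_toFinset.2 hu) hu'
  · obtain ⟨p, q, -, -, h⟩ := exists_mul_add_mul_eq_C_resultant f g (m := f.natDegree)
      (n := g.natDegree + 1) le_rfl (Nat.le_succ _) (Or.inr (Nat.succ_ne_zero _))
    exact ⟨p, q, h⟩


/-- The generic polynomial with the basis `w s`, `s ∈ SS i`. -/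
noncomputable def gpw (SS : Fin 4 → Finset ℕ) (i : Fin 4) (w : ℕ → ℂ[X]) :
    (MvPolynomial (Σ i : Fin 4, {s // s ∈ SS i}) ℂ)[X] :=
  ∑ s ∈ (SS i).attach, C (MvPolynomial.X ⟨i, s⟩) * (w s).map MvPolynomial.C

/-- The polynomial `1 + X + ⋯ + X ^ (n - 1)`. -/
noncomputable def gsum (n : ℕ) : ℂ[X] := ∑ k ∈ Finset.range n, X ^ k

theorem gpw_map (SS : Fin 4 → Finset ℕ) (i : Fin 4) (w : ℕ → ℂ[X])
    (c : (Σ i : Fin 4, {s // s ∈ SS i}) → ℂ) :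
    (gpw SS i w).map (MvPolynomial.eval c) = ∑ s ∈ (SS i).attach, C (c ⟨i, s⟩) * w s := by
  rw [gpw, Polynomial.map_sum]
  refine Finset.sum_congr rfl fun s _ => ?_
  rw [Polynomial.map_mul, map_C, MvPolynomial.eval_X, Polynomial.map_map]
  congr 1
  convert Polynomial.map_id
  ext
  simp

theorem gpw_eval₂ {F : Type*} [Field F] [Algebra ℂ F] (SS : Fin 4 → Finset ℕ) (i : Fin 4)
    (w : ℕ → ℂ[X]) (c : (Σ i : Fin 4, {s // s ∈ SS i}) → F) (x : F) :
    (gpw SS i w).eval₂ (MvPolynomial.aeval c).toRingHom x =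
      ∑ s ∈ (SS i).attach, c ⟨i, s⟩ * aeval x (w s) := by
  rw [gpw, eval₂_finsetSum]
  refine Finset.sum_congr rfl fun s _ => ?_
  rw [eval₂_mul, eval₂_C, eval₂_map]
  congr 1
  · simp
  · rw [aeval_def]
    congr 1
    ext z
    simp

theorem sum_single (SS : Fin 4 → Finset ℕ) (i : Fin 4) (w : ℕ → ℂ[X]) (p : {s // s ∈ SS i})
    (c : (Σ i : Fin 4, {s // s ∈ SS i}) → ℂ) (hc : ∀ s, c ⟨i, s⟩ = if s = p then 1 else 0) :
    ∑ s ∈ (SS i).attach, C (c ⟨i, s⟩) * w s = w p := by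
  rw [Finset.sum_eq_single p]
  · simp [hc]
  · intro b _ hb
    simp [hc, hb]
  · simp

/-- The divided difference `(P(1) Q(u) - P(u) Q(1)) / (u - 1)`. -/
noncomputable def dd (SS : Fin 4 → Finset ℕ) (i j : Fin 4) :
    (MvPolynomial (Σ i : Fin 4, {s // s ∈ SS i}) ℂ)[X] :=
  gpw SS i (fun _ => 1) * gpw SS j gsum - gpw SS i gsum * gpw SS j (fun _ => 1)

theorem dd_exists (SS : Fin 4 → Finset ℕ) (i j : Fin 4) (hij : i ≠ j) (u : ℂ) (p q : ℕ)
    (hp : p ∈ SS i) (hq : q ∈ SS j) (h : (gsum p).eval u ≠ (gsum q).eval u) :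
    ∃ c, ((dd SS i j).map (MvPolynomial.eval c)).eval u ≠ 0 := by
  classical
  refine ⟨fun x => if x = ⟨i, p, hp⟩ ∨ x = ⟨j, q, hq⟩ then 1 else 0, ?_⟩
  set c : (Σ i : Fin 4, {s // s ∈ SS i}) → ℂ :=
    fun x => if x = ⟨i, p, hp⟩ ∨ x = ⟨j, q, hq⟩ then 1 else 0
  have h1 : ∀ w : ℕ → ℂ[X], ∑ s ∈ (SS i).attach, C (c ⟨i, s⟩) * w s = w p := fun w =>
    sum_single SS i w ⟨p, hp⟩ c (fun s => by simp [c, hij])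
  have h2 : ∀ w : ℕ → ℂ[X], ∑ s ∈ (SS j).attach, C (c ⟨j, s⟩) * w s = w q := fun w =>
    sum_single SS j w ⟨q, hq⟩ c (fun s => by simp [c, hij.symm])
  rw [dd, Polynomial.map_sub, Polynomial.map_mul, Polynomial.map_mul, gpw_map, gpw_map, gpw_map,
    gpw_map, h1 (fun _ => 1), h2 (fun _ => 1), h1 gsum, h2 gsum]
  simp only [one_mul, mul_one, eval_sub]
  exact sub_ne_zero.2 (Ne.symm h)

theorem dd_zero (SS : Fin 4 → Finset ℕ) (hne : ∀ i, (SS i).Nonempty) (i j : Fin 4) (hij : i ≠ j)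
    (h0 : 0 ∈ SS i ∪ SS j) (u : ℂ)
    (h : ¬ ∃ c, ((dd SS i j).map (MvPolynomial.eval c)).eval u ≠ 0) :
    ∀ e ∈ SS i ∪ SS j, (gsum e).eval u = 0 := by
  have key : ∀ p ∈ SS i, ∀ q ∈ SS j, (gsum p).eval u = (gsum q).eval u := by
    intro p hp q hq
    by_contra hc
    exact h (dd_exists SS i j hij u p q hp hq hc)
  have g0 : (gsum 0).eval u = 0 := by simp [gsum]
  obtain ⟨p0, hp0⟩ := hne i
  obtain ⟨q0, hq0⟩ := hne j
  intro e he
  rcases Finset.mem_union.1 h0 with h0 | h0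
  · have hj : ∀ q ∈ SS j, (gsum q).eval u = 0 := fun q hq => by rw [← key 0 h0 q hq, g0]
    rcases Finset.mem_union.1 he with he | he
    · rw [key e he q0 hq0, hj q0 hq0]
    · exact hj e he
  · have hj : ∀ q ∈ SS i, (gsum q).eval u = 0 := fun q hq => by rw [key q hq 0 h0, g0]
    rcases Finset.mem_union.1 he with he | he
    · exact hj e he
    · rw [← key p0 hp0 e he, hj p0 hp0]

theorem dd_ne (SS : Fin 4 → Finset ℕ) (hne : ∀ i, (SS i).Nonempty) (i j : Fin 4) (hij : i ≠ j)
    (h0 : 0 ∈ SS i ∪ SS j) (e : ℕ) (he : e ∈ SS i ∪ SS j) (he1 : 1 ≤ e) : dd SS i j ≠ 0 := by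
  intro hd
  have := dd_zero SS hne i j hij h0 0 (by simp [hd]) e he
  obtain ⟨k, rfl⟩ : ∃ k, e = k + 1 := ⟨e - 1, by omega⟩
  rw [gsum, Finset.sum_range_succ'] at this
  simp [eval_finsetSum] at this

theorem gpw_ne (SS : Fin 4 → Finset ℕ) (i : Fin 4) (w : ℕ → ℂ[X]) (u : ℂ) (p : ℕ) (hp : p ∈ SS i)
    (h : (w p).eval u ≠ 0) : ∃ c, ((gpw SS i w).map (MvPolynomial.eval c)).eval u ≠ 0 := by
  classical
  refine ⟨fun x => if x = ⟨i, p, hp⟩ then 1 else 0, ?_⟩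
  have e := sum_single SS i w ⟨p, hp⟩ (fun x => if x = ⟨i, p, hp⟩ then 1 else 0)
    (fun s => by simp)
  rw [gpw_map, e]
  exact h

theorem gpw_ne_zero (SS : Fin 4 → Finset ℕ) (i : Fin 4) (w : ℕ → ℂ[X]) (u : ℂ) (p : ℕ)
    (hp : p ∈ SS i) (h : (w p).eval u ≠ 0) : gpw SS i w ≠ 0 := by
  intro h0
  obtain ⟨c, hc⟩ := gpw_ne SS i w u p hp h
  simp [h0] at hc

theorem gpw_congr (SS : Fin 4 → Finset ℕ) (i : Fin 4) (w : ℕ → ℂ[X])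
    (c c' : (Σ i : Fin 4, {s // s ∈ SS i}) → ℂ) (h : ∀ s, c ⟨i, s⟩ = c' ⟨i, s⟩) :
    (gpw SS i w).map (MvPolynomial.eval c) = (gpw SS i w).map (MvPolynomial.eval c') := by
  rw [gpw_map, gpw_map]
  simp only [h]

theorem dd_congr (SS : Fin 4 → Finset ℕ) (i j : Fin 4)
    (c c' : (Σ i : Fin 4, {s // s ∈ SS i}) → ℂ) (h : ∀ s, c ⟨i, s⟩ = c' ⟨i, s⟩)
    (h' : ∀ s, c ⟨j, s⟩ = c' ⟨j, s⟩) :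
    (dd SS i j).map (MvPolynomial.eval c) = (dd SS i j).map (MvPolynomial.eval c') := by
  simp only [dd, Polynomial.map_sub, Polynomial.map_mul]
  rw [gpw_congr SS i _ c c' h, gpw_congr SS i _ c c' h, gpw_congr SS j _ c c' h',
    gpw_congr SS j _ c c' h']

theorem gsum_mul (n : ℕ) : gsum n * (X - 1) = X ^ n - 1 := geom_sum_mul _ _

theorem coprime_of_gen {σ : Type*} {f g p q : (MvPolynomial σ ℂ)[X]} {G : MvPolynomial σ ℂ}
    (h : f * p + g * q = C G) (c : σ → ℂ) (hc : MvPolynomial.eval c G ≠ 0) :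
    IsCoprime (f.map (MvPolynomial.eval c)) (g.map (MvPolynomial.eval c)) := by
  have := congrArg (Polynomial.map (MvPolynomial.eval c)) h
  rw [Polynomial.map_add, Polynomial.map_mul, Polynomial.map_mul, map_C] at this
  refine ⟨C (MvPolynomial.eval c G)⁻¹ * p.map (MvPolynomial.eval c),
    C (MvPolynomial.eval c G)⁻¹ * q.map (MvPolynomial.eval c), ?_⟩
  have e : C (MvPolynomial.eval c G)⁻¹ * C (MvPolynomial.eval c G) = 1 := by
    rw [← C_mul, inv_mul_cancel₀ hc, C_1]
  rw [← e, ← this]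
  ring

theorem dd_eval (SS : Fin 4 → Finset ℕ) (i j : Fin 4) (c : (Σ i : Fin 4, {s // s ∈ SS i}) → ℂ)
    {F : Type*} [Field F] [Algebra ℂ F] (t w : F) :
    (dd SS i j).eval₂ (MvPolynomial.aeval (fun x : Σ i : Fin 4, {s // s ∈ SS i} =>
        algebraMap ℂ F (c x) * t ^ (x.2 : ℕ))).toRingHom w * (w - 1) =
      aeval t (polyOfCoeffs (SS i) (fun s => c ⟨i, s⟩)) * aeval (t * w) (polyOfCoeffs (SS j) (fun s => c ⟨j, s⟩)) -
      aeval (t * w) (polyOfCoeffs (SS i) (fun s => c ⟨i, s⟩)) * aeval t (polyOfCoeffs (SS j) (fun s => c ⟨j, s⟩)) := by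
  have h1 : ∀ i, ∑ s ∈ (SS i).attach, (algebraMap ℂ F (c ⟨i, s⟩) * t ^ (s : ℕ)) * aeval w (1 : ℂ[X]) =
      aeval t (polyOfCoeffs (SS i) (fun s => c ⟨i, s⟩)) := by
    intro i
    simp [polyOfCoeffs]
  have h2 : ∀ i, (∑ s ∈ (SS i).attach, (algebraMap ℂ F (c ⟨i, s⟩) * t ^ (s : ℕ)) * aeval w (gsum s)) * (w - 1) =
      aeval (t * w) (polyOfCoeffs (SS i) (fun s => c ⟨i, s⟩)) - aeval t (polyOfCoeffs (SS i) (fun s => c ⟨i, s⟩)) := by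
    intro i
    simp only [polyOfCoeffs, map_sum, map_mul, aeval_C, map_pow, aeval_X]
    rw [Finset.sum_mul, ← Finset.sum_sub_distrib]
    refine Finset.sum_congr rfl fun s _ => ?_
    have := congrArg (aeval w) (gsum_mul s)
    simp only [map_mul, map_sub, aeval_X, map_one, map_pow] at this
    rw [mul_assoc, this, mul_pow]
    ring
  rw [dd, eval₂_sub, eval₂_mul, eval₂_mul, gpw_eval₂, gpw_eval₂, gpw_eval₂, gpw_eval₂]
  rw [h1, h1, sub_mul, mul_assoc, h2, mul_right_comm, h2]
  ring

theorem generic_conditions (SS : Fin 4 → Finset ℕ) (hne : ∀ i, (SS i).Nonempty)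
    (h00 : 0 ∈ SS 0 ∪ SS 1) (h01 : 0 ∈ SS 2 ∪ SS 3)
    (hgcd : ((SS 0 ∪ SS 1 ∪ SS 2 ∪ SS 3).filter (fun s => s ≠ 0)).gcd id = 1)
    (a0n a1m : ℕ) (ha0nmem : a0n ∈ SS 0 ∪ SS 1) (ha1mmem : a1m ∈ SS 2 ∪ SS 3) 
    (ha0n1 : 1 ≤ a0n) (ha1m1 : 1 ≤ a1m) :
    ∃ G : MvPolynomial (Σ i : Fin 4, {s // s ∈ SS i}) ℂ, G ≠ 0 ∧
      ∀ c : (Σ i : Fin 4, {s // s ∈ SS i}) → ℂ, MvPolynomial.eval c G ≠ 0 →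
      (∀ i, c i ≠ 0) ∧
      IsCoprime (polyOfCoeffs (SS 0) (fun s => c ⟨0, s⟩)) (polyOfCoeffs (SS 1) (fun s => c ⟨1, s⟩)) ∧
      IsCoprime (∑ s ∈ (SS 0).attach, C (c ⟨0, s⟩) * (X : ℂ[X]) ^ ((s : ℕ) - (SS 0).min' (hne 0)))
        (∑ s ∈ (SS 2).attach, C (c ⟨2, s⟩) * (X : ℂ[X]) ^ ((s : ℕ) - (SS 2).min' (hne 2))) ∧
      ∀ (F : Type) [Field F] [Algebra ℂ F] (t u : F), Transcendental ℂ t →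
        aeval t (polyOfCoeffs (SS 0) (fun s => c ⟨0, s⟩)) * aeval u (polyOfCoeffs (SS 1) (fun s => c ⟨1, s⟩)) =
        aeval u (polyOfCoeffs (SS 0) (fun s => c ⟨0, s⟩)) * aeval t (polyOfCoeffs (SS 1) (fun s => c ⟨1, s⟩)) →
        aeval t (polyOfCoeffs (SS 2) (fun s => c ⟨2, s⟩)) * aeval u (polyOfCoeffs (SS 3) (fun s => c ⟨3, s⟩)) =
        aeval u (polyOfCoeffs (SS 2) (fun s => c ⟨2, s⟩)) * aeval t (polyOfCoeffs (SS 3) (fun s => c ⟨3, s⟩)) →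
        t = u := by
  classical
  obtain ⟨G2, hG2, p2, q2, e2⟩ := gen_s18 (gpw SS 0 (fun s => X ^ s)) (gpw SS 1 (fun s => X ^ s))
    {x | x.1 = 0} (fun c c' h => gpw_congr _ _ _ _ _ (fun s => h _ rfl))
    (fun c c' h => gpw_congr _ _ _ _ _ (fun s => h _ (by simp)))
    (gpw_ne_zero _ _ _ 1 _ (Finset.min'_mem _ (hne 0)) (by simp))
    (gpw_ne_zero _ _ _ 1 _ (Finset.min'_mem _ (hne 1)) (by simp)) (by
      intro u
      rcases Finset.mem_union.1 h00 with h | h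
      · left; exact gpw_ne SS 0 _ u 0 h (by simp)
      · right; exact gpw_ne SS 1 _ u 0 h (by simp))
  obtain ⟨G3, hG3, p3, q3, e3⟩ := gen_s18 (gpw SS 0 (fun s => X ^ (s - (SS 0).min' (hne 0))))
    (gpw SS 2 (fun s => X ^ (s - (SS 2).min' (hne 2))))
    {x | x.1 = 0} (fun c c' h => gpw_congr _ _ _ _ _ (fun s => h _ rfl))
    (fun c c' h => gpw_congr _ _ _ _ _ (fun s => h _ (by simp)))
    (gpw_ne_zero _ _ _ 1 _ (Finset.min'_mem _ (hne 0)) (by simp))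
    (gpw_ne_zero _ _ _ 1 _ (Finset.min'_mem _ (hne 2)) (by simp)) (by
      intro u
      left; exact gpw_ne SS 0 _ u _ (Finset.min'_mem _ (hne 0)) (by simp))
  obtain ⟨G4, hG4, p4, q4, e4⟩ := gen_s18 (dd SS 0 1) (dd SS 2 3) {x | x.1 = 0 ∨ x.1 = 1}
    (fun c c' h => dd_congr _ _ _ _ _ (fun s => h _ (by simp)) (fun s => h _ (by simp)))
    (fun c c' h => dd_congr _ _ _ _ _ (fun s => h _ (by simp)) (fun s => h _ (by simp)))
    (dd_ne SS hne 0 1 (by decide) h00 _ ha0nmem ha0n1)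
    (dd_ne SS hne 2 3 (by decide) h01 _ ha1mmem ha1m1) (by
      intro u
      by_contra hcon
      rw [not_or] at hcon
      have k0 := dd_zero SS hne 0 1 (by decide) h00 u hcon.1
      have k1 := dd_zero SS hne 2 3 (by decide) h01 u hcon.2
      have hu : u = 1 := by
        have hall : ∀ e ∈ (SS 0 ∪ SS 1 ∪ SS 2 ∪ SS 3).filter (fun s => s ≠ 0), orderOf u ∣ id e := by
          intro e he
          have he := (Finset.mem_filter.1 he).1
          have hz : (gsum e).eval u = 0 := by
            rcases Finset.mem_union.1 he with he | he
            · rcases Finset.mem_union.1 he with he | he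
              · exact k0 e he
              · exact k1 e (Finset.mem_union_left _ he)
            · exact k1 e (Finset.mem_union_right _ he)
          apply orderOf_dvd_of_pow_eq_one
          have := congrArg (eval u) (gsum_mul e)
          rw [eval_mul, hz, zero_mul] at this
          simp only [eval_sub, eval_pow, eval_X, eval_one] at this
          exact (sub_eq_zero.1 this.symm)
        have := Finset.dvd_gcd hall
        rw [hgcd, Nat.dvd_one, orderOf_eq_one_iff] at this
        exact this
      have := k0 a0n ha0nmem
      rw [hu] at this
      simp [gsum, eval_finsetSum] at this
      omega)
  refine ⟨(∏ i, MvPolynomial.X i) * G2 * G3 * G4, ?_, ?_⟩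
  · refine mul_ne_zero (mul_ne_zero (mul_ne_zero ?_ hG2) hG3) hG4
    exact Finset.prod_ne_zero_iff.2 fun i _ => MvPolynomial.X_ne_zero i
  · intro c hc
    simp only [map_mul, map_prod, MvPolynomial.eval_X, mul_ne_zero_iff, Finset.prod_ne_zero_iff] at hc
    obtain ⟨⟨⟨c1, c2⟩, c3⟩, c4⟩ := hc
    refine ⟨fun i => c1 i (Finset.mem_univ _), ?_, ?_, ?_⟩
    · have := coprime_of_gen e2 c c2
      rw [gpw_map, gpw_map] at this
      exact this
    · have := coprime_of_gen e3 c c3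
      rw [gpw_map, gpw_map] at this
      exact this
    · intro F _ _ t u ht h0 h1
      have ht0 : t ≠ 0 := by
        rintro rfl
        exact ht isAlgebraic_zero
      by_contra htu
      set w := u / t with hw
      have htw : t * w = u := by rw [hw]; field_simp
      have hw1 : w - 1 ≠ 0 := by
        rw [sub_ne_zero]
        intro h
        rw [h, mul_one] at htw
        exact htu htw
      set ct := (fun x : Σ i : Fin 4, {s // s ∈ SS i} => algebraMap ℂ F (c x) * t ^ (x.2 : ℕ)) with hct
      have d0 : (dd SS 0 1).eval₂ (MvPolynomial.aeval ct).toRingHom w = 0 := by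
        have := dd_eval SS 0 1 c t w
        rw [htw, h0, sub_self] at this
        exact (mul_eq_zero.1 this).resolve_right hw1
      have d1 : (dd SS 2 3).eval₂ (MvPolynomial.aeval ct).toRingHom w = 0 := by
        have := dd_eval SS 2 3 c t w
        rw [htw, h1, sub_self] at this
        exact (mul_eq_zero.1 this).resolve_right hw1
      have hG := congrArg (eval₂ (MvPolynomial.aeval ct).toRingHom w) e4
      rw [eval₂_add, eval₂_mul, eval₂_mul, d0, d1, zero_mul, zero_mul, add_zero, eval₂_C] at hG
      set H : ℂ[X] := MvPolynomial.aeval (fun x : Σ i : Fin 4, {s // s ∈ SS i} =>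
        C (c x) * X ^ (x.2 : ℕ)) G4 with hH
      have hHt : aeval t H = 0 := by
        rw [hH, MvPolynomial.comp_aeval_apply, hG]
        change _ = (MvPolynomial.aeval ct) G4
        congr 2
        ext x
        simp [hct]
      have hH0 : H = 0 := by
        by_contra hne
        exact ht ⟨H, hne, hHt⟩
      apply c4
      have : aeval (1 : ℂ) H = 0 := by rw [hH0, map_zero]
      rw [hH, MvPolynomial.comp_aeval_apply] at this
      rw [← this, ← MvPolynomial.coe_aeval_eq_eval]
      change MvPolynomial.aeval c G4 = _
      congr 2
      ext x
      simp



theorem val_exists {F : Type} [Field F] [Algebra ℂ F] (x : F) (hx : Transcendental ℂ x) :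
    ∃ B : ValuationSubring F, (∀ c : ℂ, c ≠ 0 → B.valuation (algebraMap ℂ F c) = 1) ∧
      B.valuation x < 1 := by
  set A : Subring F := (aeval (R := ℂ) x).toRingHom.range with hA
  have hxA : x ∈ A := ⟨X, by simp⟩
  obtain ⟨B, hB, hI⟩ := Ideal.image_subset_nonunits_valuationSubring
    (Ideal.span {(⟨x, hxA⟩ : A)}) (by
      intro h
      rw [Ideal.span_singleton_eq_top] at h
      obtain ⟨⟨y, p, hp⟩, hy⟩ := h.exists_right_inv
      have hy0 : x * y = 1 := congrArg Subtype.val hy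
      change aeval x p = y at hp
      have h0 : X * p - 1 = 0 := by
        by_contra hne
        exact hx ⟨X * p - 1, hne, by simp [hp]; rw [hy0, sub_self]⟩
      have := congrArg (eval 0) h0
      simp at this)
  refine ⟨B, ?_, ?_⟩
  · have hc : ∀ c : ℂ, B.valuation (algebraMap ℂ F c) ≤ 1 := by
      intro c
      rw [ValuationSubring.valuation_le_one_iff]
      exact hB ⟨C c, by simp⟩
    intro c hc0
    apply le_antisymm (hc c)
    have := hc c⁻¹
    rw [map_inv₀, map_inv₀] at this
    have hne : B.valuation (algebraMap ℂ F c) ≠ 0 := by simp [hc0]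
    rwa [inv_le_one₀ (zero_lt_iff.2 hne)] at this
  · exact hI ⟨⟨x, hxA⟩, Ideal.subset_span rfl, rfl⟩

section
variable {F Γ : Type} [Field F] [Algebra ℂ F] [LinearOrderedCommGroupWithZero Γ]
  (v : Valuation F Γ) (hv : ∀ c : ℂ, c ≠ 0 → v (algebraMap ℂ F c) = 1)

theorem valC_le (hv : ∀ c : ℂ, c ≠ 0 → v (algebraMap ℂ F c) = 1) (c : ℂ) :
    v (algebraMap ℂ F c) ≤ 1 := by
  by_cases h : c = 0
  · simp [h]
  · exact (hv c h).le

theorem valP_le (hv : ∀ c : ℂ, c ≠ 0 → v (algebraMap ℂ F c) = 1) (t : F) (ht : v t ≤ 1)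
    (P : ℂ[X]) : v (aeval t P) ≤ 1 := by
  induction P using Polynomial.induction_on' with
  | add p q hp hq =>
    rw [map_add]
    exact (v.map_add _ _).trans (max_le hp hq)
  | monomial n a =>
    rw [aeval_monomial, map_mul, map_pow]
    exact mul_le_one' (valC_le v hv a) (pow_le_one' ht n)

theorem valP_one (hv : ∀ c : ℂ, c ≠ 0 → v (algebraMap ℂ F c) = 1) (t : F) (ht : v t < 1)
    (P : ℂ[X]) (hP : P.coeff 0 ≠ 0) : v (aeval t P) = 1 := by
  have h := congrArg (aeval t) (divX_mul_X_add P)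
  rw [map_add, map_mul, aeval_X, aeval_C] at h
  rw [← h, Valuation.map_add_eq_of_lt_right, hv _ hP]
  rw [hv _ hP, map_mul]
  exact lt_of_le_of_lt (mul_le_of_le_one_left' (valP_le v hv t ht.le _)) ht

theorem valP_lt (hv : ∀ c : ℂ, c ≠ 0 → v (algebraMap ℂ F c) = 1) (t : F) (ht : v t < 1)
    (P : ℂ[X]) (hP : P ≠ 0) : v (aeval t P) = v t ^ P.natTrailingDegree := by
  obtain ⟨R, hR⟩ : X ^ P.natTrailingDegree ∣ P :=
    X_pow_dvd_iff.2 fun d hd => coeff_eq_zero_of_lt_natTrailingDegree hd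
  have h0 : R.coeff 0 ≠ 0 := by
    have h1 : P.coeff P.natTrailingDegree ≠ 0 := by
      change P.trailingCoeff ≠ 0
      rwa [trailingCoeff_nonzero_iff_nonzero]
    rw [hR] at h1
    conv at h1 => enter [1, 2]; rw [← hR, ← zero_add P.natTrailingDegree]
    rwa [coeff_X_pow_mul] at h1
  conv_lhs => rw [hR]
  rw [map_mul, map_mul, valP_one v hv t ht R h0]
  simp

theorem valP_gt (hv : ∀ c : ℂ, c ≠ 0 → v (algebraMap ℂ F c) = 1) (t : F) (ht : 1 < v t)
    (P : ℂ[X]) (hP : P ≠ 0) : v (aeval t P) = v t ^ P.natDegree := by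
  have ht0 : t ≠ 0 := by
    rintro rfl
    simp at ht
  let _ := invertibleOfNonzero ht0
  have h := eval₂_reverse_mul_pow (algebraMap ℂ F) t P
  rw [invOf_eq_inv] at h
  rw [aeval_def, ← h, map_mul, map_pow]
  have := valP_one v hv t⁻¹ (by rw [map_inv₀]; exact inv_lt_one_of_one_lt₀ ht) P.reverse
    (by simpa using hP)
  rw [aeval_def] at this
  rw [this, one_mul]

/-- The polynomial whose roots are the parameters over `x`. -/
noncomputable def WW (P Q : ℂ[X]) (x : F) : F[X] :=
  P.map (algebraMap ℂ F) - C x * Q.map (algebraMap ℂ F)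

theorem WW_coeff (P Q : ℂ[X]) (x : F) (i : ℕ) :
    (WW P Q x).coeff i = algebraMap ℂ F (P.coeff i) - x * algebraMap ℂ F (Q.coeff i) := by
  simp [WW]

theorem WW_coeff_one (hv : ∀ c : ℂ, c ≠ 0 → v (algebraMap ℂ F c) = 1) (P Q : ℂ[X]) (x : F)
    (hx : v x < 1) (i : ℕ) : (P.coeff i ≠ 0 → v ((WW P Q x).coeff i) = 1) ∧
      (P.coeff i = 0 → v ((WW P Q x).coeff i) < 1) := by
  have h2 : v (x * algebraMap ℂ F (Q.coeff i)) < 1 := by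
    rw [map_mul]
    exact lt_of_le_of_lt (mul_le_of_le_one_right' (valC_le v hv _)) hx
  rw [WW_coeff, sub_eq_add_neg]
  constructor
  · intro h
    rw [Valuation.map_add_eq_of_lt_left, hv _ h]
    rwa [hv _ h, Valuation.map_neg]
  · intro h
    rw [h, map_zero, zero_add, Valuation.map_neg]
    exact h2

theorem root_count [IsAlgClosed F] (hv : ∀ c : ℂ, c ≠ 0 → v (algebraMap ℂ F c) = 1)
    (P Q : ℂ[X]) (x : F) (hx : v x < 1) (hP : P ≠ 0) :
    (WW P Q x).roots.countP (fun t => v t < 1) = P.natTrailingDegree ∧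
    (WW P Q x).roots.countP (fun t => v t ≤ 1) = P.natDegree := by
  set W := WW P Q x with hW
  have hsp : W = C W.leadingCoeff * (W.roots.map (fun a => X - C a)).prod :=
    (IsAlgClosed.splits W).eq_prod_roots
  set s := W.roots with hs
  set M := (s.map (fun y => max 1 (v y))).prod with hM
  have hco : ∀ i, v (W.coeff i) = v W.leadingCoeff * v ((s.map (fun a => X - C a)).prod.coeff i) := by
    intro i
    conv_lhs => rw [hsp]
    rw [coeff_C_mul, map_mul]
  have hwc := WW_coeff_one v hv P Q x hx
  have hle : ∀ i, v (W.coeff i) ≤ 1 := by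
    intro i
    by_cases h : P.coeff i = 0
    · exact ((hwc i).2 h).le
    · exact ((hwc i).1 h).le
  have hb : ∀ i, v (W.coeff i) ≤ v W.leadingCoeff * M := by
    intro i
    rw [hco]
    have := gauss_bound v 1 one_ne_zero s i
    rw [one_pow, mul_one] at this
    exact mul_le_mul' le_rfl this
  obtain ⟨g1, g2⟩ := gauss_lt v 1 one_ne_zero s
  obtain ⟨l1, l2⟩ := gauss_le v 1 one_ne_zero s
  rw [one_pow, mul_one, ← hM] at g1 l1
  have hM1 : v W.leadingCoeff * M = 1 := by
    apply le_antisymm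
    · rw [← g1, ← hco]; exact hle _
    · rw [← (hwc P.natDegree).1 (by simpa using hP)]
      exact hb _
  have hl0 : 0 < v W.leadingCoeff := by
    rw [zero_lt_iff]
    intro h
    rw [h, zero_mul] at hM1
    exact zero_ne_one hM1
  have hlt : ∀ i, v ((s.map (fun y => X - C y)).prod.coeff i) < M → P.coeff i = 0 := by
    intro i h
    by_contra hc
    have := (hwc i).1 hc
    rw [← hW, hco, ← hM1] at this
    exact h.ne (mul_left_cancel₀ hl0.ne' this)
  have heq : ∀ i, v ((s.map (fun y => X - C y)).prod.coeff i) = M → P.coeff i ≠ 0 := by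
    intro i h hc
    have := (hwc i).2 hc
    rw [← hW, hco, h, hM1] at this
    exact lt_irrefl _ this
  constructor
  · apply le_antisymm
    · by_contra! hc
      have := g2 _ hc
      rw [one_pow, mul_one] at this
      have := hlt _ this
      exact (trailingCoeff_nonzero_iff_nonzero.2 hP) this
    · exact natTrailingDegree_le_of_ne_zero (heq _ g1)
  · apply le_antisymm
    · exact le_natDegree_of_ne_zero (heq _ l1)
    · by_contra! hc
      have := l2 _ hc
      rw [one_pow, mul_one] at this
      have := hlt _ this
      simp [hP] at this

theorem WW_natDegree (P Q : ℂ[X]) (x : F) (hx : Transcendental ℂ x) (n : ℕ)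
    (hn : P.natDegree ≤ n) (hn' : Q.natDegree ≤ n) (h : P.coeff n ≠ 0 ∨ Q.coeff n ≠ 0) :
    (WW P Q x).natDegree = n := by
  apply natDegree_eq_of_le_of_coeff_ne_zero
  · rw [natDegree_le_iff_coeff_eq_zero]
    intro i hi
    rw [WW_coeff, coeff_eq_zero_of_natDegree_lt (by omega), coeff_eq_zero_of_natDegree_lt (by omega)]
    simp
  · rw [WW_coeff]
    intro h0
    have : C (P.coeff n) - C (Q.coeff n) * X = 0 := by
      by_contra hne
      exact hx ⟨_, hne, by simp only [map_sub, map_mul, aeval_C, aeval_X]; rw [mul_comm, h0]⟩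
    have e0 := congrArg (coeff · 0) this
    have e1 := congrArg (coeff · 1) this
    simp at e0
    rw [e0] at this
    simp at this
    tauto
end



section
variable {F : Type} [Field F] [Algebra ℂ F]

theorem alg_aeval (t : F) (ht : IsAlgebraic ℂ t) (P : ℂ[X]) : IsAlgebraic ℂ (aeval t P) := by
  rw [← mem_algebraicClosure_iff] at ht ⊢
  have : aeval t P = ((aeval (⟨t, ht⟩ : algebraicClosure ℂ F) P : algebraicClosure ℂ F) : F) := by
    rw [← IntermediateField.aeval_coe]
  rw [this]
  exact SetLike.coe_mem _

theorem root_eq (P Q : ℂ[X]) (x t : F) (ht : t ∈ (WW P Q x).roots) :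
    aeval t P = x * aeval t Q := by
  have := (mem_roots'.1 ht).2
  rw [IsRoot.def, WW, eval_sub, eval_mul, eval_C, eval_map_algebraMap, eval_map_algebraMap,
    sub_eq_zero] at this
  exact this

theorem root_trans (P Q : ℂ[X]) (hPQ : IsCoprime P Q) (x t : F) (hx : Transcendental ℂ x)
    (ht : t ∈ (WW P Q x).roots) : Transcendental ℂ t := by
  intro hta
  have h := root_eq P Q x t ht
  by_cases hq : aeval t Q = 0
  · rw [hq, mul_zero] at h
    obtain ⟨a, b, hab⟩ := hPQ
    have := congrArg (aeval t) hab
    simp [h, hq] at this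
  · apply hx
    have : x = aeval t P * (aeval t Q)⁻¹ := by rw [h]; field_simp
    rw [this]
    exact (alg_aeval t hta P).mul (alg_aeval t hta Q).inv

theorem trans_ne (t : F) (ht : Transcendental ℂ t) (P : ℂ[X]) (hP : P ≠ 0) : aeval t P ≠ 0 :=
  fun h => ht ⟨P, hP, h⟩

theorem roots_nodup (P Q : ℂ[X]) (hPQ : IsCoprime P Q) (x : F) (hx : Transcendental ℂ x)
    (hd : derivative P ≠ 0 ∨ derivative Q ≠ 0) : (WW P Q x).roots.Nodup := by
  classical
  rw [Multiset.nodup_iff_count_le_one]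
  intro t
  by_contra! hc
  have ht : t ∈ (WW P Q x).roots := Multiset.count_pos.1 (by omega)
  rw [count_roots] at hc
  have h := root_eq P Q x t ht
  have h' := ((one_lt_rootMultiplicity_iff_isRoot (mem_roots'.1 ht).1).1 hc).2
  rw [IsRoot.def, WW, derivative_sub, derivative_C_mul, derivative_map, derivative_map, eval_sub,
    eval_mul, eval_C, eval_map_algebraMap, eval_map_algebraMap, sub_eq_zero] at h'
  have hw : wronskian P Q = 0 := by
    by_contra hne
    apply root_trans P Q hPQ x t hx ht
    refine ⟨_, hne, ?_⟩
    rw [wronskian, map_sub, map_mul, map_mul, h, h']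
    ring
  have := hPQ.wronskian_eq_zero_iff.1 hw
  tauto

theorem Phi_root (P0 Q0 P1 Q1 : ℂ[X]) (hPQ : IsCoprime P0 Q0) (hQ0 : Q0 ≠ 0)
    (x t : F) (hx : Transcendental ℂ x) (ht : t ∈ (WW P0 Q0 x).roots) (Φ : ℂ[X][X])
    (hΦ : Φ.eval₂ (aeval (R := ℂ) (algebraMap ℂ[X] (RatFunc ℂ) P0 / algebraMap ℂ[X] (RatFunc ℂ) Q0)).toRingHom
      (algebraMap ℂ[X] (RatFunc ℂ) P1 / algebraMap ℂ[X] (RatFunc ℂ) Q1) = 0) :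
    (Φ.map (aeval (R := ℂ) x).toRingHom).eval (aeval t P1 / aeval t Q1) = 0 := by
  have htr := root_trans P0 Q0 hPQ x t hx ht
  have hinj : Function.Injective (aeval (R := ℂ) t) := transcendental_iff_injective.1 htr
  set h := RatFunc.liftAlgHom (aeval (R := ℂ) t)
    (nonZeroDivisors_le_comap_nonZeroDivisors_of_injective _ hinj) with hh
  have h1 := congrArg h hΦ
  change h.toRingHom _ = _ at h1
  rw [hom_eval₂, map_zero] at h1
  rw [eval_map, ← h1]
  have e1 : h.toRingHom (algebraMap ℂ[X] (RatFunc ℂ) P1 / algebraMap ℂ[X] (RatFunc ℂ) Q1) =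
      aeval t P1 / aeval t Q1 := RatFunc.liftAlgHom_apply_div _ _ _ _
  have e0 : h (algebraMap ℂ[X] (RatFunc ℂ) P0 / algebraMap ℂ[X] (RatFunc ℂ) Q0) = x := by
    rw [hh, RatFunc.liftAlgHom_apply_div, root_eq P0 Q0 x t ht]
    have := trans_ne t htr Q0 hQ0
    field_simp
  rw [e1]
  congr 1
  change _ = (h.comp (aeval (R := ℂ) _)).toRingHom
  congr 1
  ext
  simp [e0]

end

section
variable {F : Type} [Field F] [Algebra ℂ F] [Algebra (RatFunc ℂ) F]
  [IsScalarTower ℂ (RatFunc ℂ) F]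

theorem x_trans : Transcendental ℂ (algebraMap (RatFunc ℂ) F RatFunc.X) :=
  (transcendental_algebraMap_iff (algebraMap (RatFunc ℂ) F).injective).2 RatFunc.transcendental_X

theorem aeval_x (p : ℂ[X]) : aeval (algebraMap (RatFunc ℂ) F RatFunc.X) p =
    algebraMap (RatFunc ℂ) F (algebraMap ℂ[X] (RatFunc ℂ) p) := by
  rw [aeval_algebraMap_apply]
  congr 1
  induction p using Polynomial.induction_on' with
  | add p q hp hq => rw [map_add, map_add, hp, hq]
  | monomial n a =>
    rw [aeval_monomial, ← C_mul_X_pow_eq_monomial]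
    simp

theorem degree_bound (P0 Q0 P1 Q1 : ℂ[X]) (t : F)
    (ht : t ∈ (WW P0 Q0 (algebraMap (RatFunc ℂ) F RatFunc.X)).roots) (n : ℕ)
    (hn : (WW P0 Q0 (algebraMap (RatFunc ℂ) F RatFunc.X)).natDegree = n)
    (Φ : ℂ[X][X]) (hirr : Irreducible Φ) (hdeg : Φ.natDegree ≠ 0)
    (hy : (Φ.map (aeval (R := ℂ) (algebraMap (RatFunc ℂ) F RatFunc.X)).toRingHom).eval
      (aeval t P1 / aeval t Q1) = 0) : Φ.natDegree ≤ n := by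
  set y := aeval t P1 / aeval t Q1 with hydef
  set g := Φ.map (algebraMap ℂ[X] (RatFunc ℂ)) with hg
  have hgi : Irreducible g := (hirr.isPrimitive hdeg).irreducible_iff_irreducible_map_fraction_map.1 hirr
  have hgd : g.natDegree = Φ.natDegree :=
    natDegree_map_eq_of_injective (IsFractionRing.injective ℂ[X] (RatFunc ℂ)) _
  have hgy : aeval y g = 0 := by
    rw [hg, aeval_def, eval₂_map]
    rw [eval_map] at hy
    rw [← hy]
    congr 1
    exact RingHom.ext fun p => (aeval_x p).symm
  have hmin := minpoly.eq_of_irreducible hgi hgy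
  have hmd : (minpoly (RatFunc ℂ) y).natDegree = Φ.natDegree := by
    rw [← hmin, natDegree_mul_C (by simpa using hgi.ne_zero), hgd]
  set W : (RatFunc ℂ)[X] := P0.map (algebraMap ℂ (RatFunc ℂ)) - C RatFunc.X * Q0.map (algebraMap ℂ (RatFunc ℂ)) with hW
  have hWm : W.map (algebraMap (RatFunc ℂ) F) = WW P0 Q0 (algebraMap (RatFunc ℂ) F RatFunc.X) := by
    rw [hW, WW, Polynomial.map_sub, Polynomial.map_mul, map_C, Polynomial.map_map, Polynomial.map_map,
      ← IsScalarTower.algebraMap_eq]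
  have hWn : W.natDegree = n := by
    rw [← hn, ← hWm, natDegree_map]
  have hWt : aeval t W = 0 := by
    rw [← eval_map_algebraMap, hWm]
    exact (mem_roots'.1 ht).2
  have hW0 : W ≠ 0 := by
    intro h
    rw [h, Polynomial.map_zero] at hWm
    exact (mem_roots'.1 ht).1 hWm.symm
  have hintr : IsIntegral (RatFunc ℂ) t := IsAlgebraic.isIntegral ⟨W, hW0, hWt⟩
  have hinty : IsIntegral (RatFunc ℂ) y := IsAlgebraic.isIntegral ⟨g, hgi.ne_zero, hgy⟩
  have hd1 : (minpoly (RatFunc ℂ) t).natDegree ≤ n := by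
    rw [← hWn]
    exact natDegree_le_of_dvd (minpoly.dvd _ _ hWt) hW0
  rw [← hmd]
  refine le_trans ?_ hd1
  rw [← IntermediateField.adjoin.finrank hintr, ← IntermediateField.adjoin.finrank hinty]
  have := IntermediateField.adjoin.finiteDimensional hintr
  apply IntermediateField.finrank_le_of_le_right
  rw [IntermediateField.adjoin_simple_le_iff]
  have hmem : ∀ P : ℂ[X], aeval t P ∈ IntermediateField.adjoin (RatFunc ℂ) {t} := by
    intro P
    rw [← aeval_map_algebraMap (RatFunc ℂ) t P]
    exact IntermediateField.algebra_adjoin_le_adjoin _ _ (aeval_mem_adjoin_singleton _ _)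
  exact div_mem (hmem P1) (hmem Q1)

theorem factorisation [IsAlgClosed F] (P0 Q0 P1 Q1 : ℂ[X]) (x : F)
    (hxx : x = algebraMap (RatFunc ℂ) F RatFunc.X)
    (hPQ : IsCoprime P0 Q0) (hQ0 : Q0 ≠ 0) (hQ1 : Q1 ≠ 0)
    (n : ℕ) (hn1 : 1 ≤ n) (hn : P0.natDegree ≤ n) (hn' : Q0.natDegree ≤ n)
    (h : P0.coeff n ≠ 0 ∨ Q0.coeff n ≠ 0)
    (C4 : ∀ (t u : F), Transcendental ℂ t →
        aeval t P0 * aeval u Q0 = aeval u P0 * aeval t Q0 →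
        aeval t P1 * aeval u Q1 = aeval u P1 * aeval t Q1 → t = u)
    (Φ : ℂ[X][X]) (hirr : Irreducible Φ)
    (hΦ : Φ.eval₂ (aeval (R := ℂ) (algebraMap ℂ[X] (RatFunc ℂ) P0 / algebraMap ℂ[X] (RatFunc ℂ) Q0)).toRingHom
      (algebraMap ℂ[X] (RatFunc ℂ) P1 / algebraMap ℂ[X] (RatFunc ℂ) Q1) = 0) :
    (WW P0 Q0 x).roots.card = n ∧ Φ.natDegree = n ∧ ∃ ψ : F,
    Φ.map (aeval (R := ℂ) x).toRingHom = C ψ *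
      (((WW P0 Q0 x).roots.map (fun t => aeval t P1 / aeval t Q1)).map (fun y => X - C y)).prod := by
  have hx : Transcendental ℂ x := hxx ▸ x_trans
  have hdeg := WW_natDegree P0 Q0 x hx n hn hn' h
  have hcard : (WW P0 Q0 x).roots.card = n := by
    rw [← hdeg]
    exact ((IsAlgClosed.splits _).natDegree_eq_card_roots).symm
  set f := Φ.map (aeval (R := ℂ) x).toRingHom with hf
  have hinj : Function.Injective (aeval (R := ℂ) x).toRingHom := transcendental_iff_injective.1 hx
  have hf0 : f ≠ 0 := (Polynomial.map_ne_zero_iff hinj).2 hirr.ne_zero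
  have hfd : f.natDegree = Φ.natDegree := natDegree_map_eq_of_injective hinj _
  have hder : derivative P0 ≠ 0 ∨ derivative Q0 ≠ 0 := by
    rcases h with h | h
    · left; intro h0
      have := derivative_eq_zero.1 h0
      exact h (coeff_eq_zero_of_natDegree_lt (by omega))
    · right; intro h0
      have := derivative_eq_zero.1 h0
      exact h (coeff_eq_zero_of_natDegree_lt (by omega))
  have hnd := roots_nodup P0 Q0 hPQ x hx hder
  set ts := (WW P0 Q0 x).roots with hts
  have hroot : ∀ t ∈ ts, f.eval (aeval t P1 / aeval t Q1) = 0 := fun t ht =>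
    Phi_root P0 Q0 P1 Q1 hPQ hQ0 x t hx ht Φ hΦ
  have hnd' : (ts.map (fun t => aeval t P1 / aeval t Q1)).Nodup := by
    refine Multiset.Nodup.map_on ?_ hnd
    intro t ht u hu htu
    have tt := root_trans P0 Q0 hPQ x t hx ht
    have tu := root_trans P0 Q0 hPQ x u hx hu
    apply C4 t u tt
    · rw [root_eq P0 Q0 x t ht, root_eq P0 Q0 x u hu]; ring
    · rwa [div_eq_div_iff (trans_ne t tt _ hQ1) (trans_ne u tu _ hQ1)] at htu
  have hle : ts.map (fun t => aeval t P1 / aeval t Q1) ≤ f.roots := by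
    rw [Multiset.le_iff_subset hnd']
    intro y hy
    obtain ⟨t, ht, rfl⟩ := Multiset.mem_map.1 hy
    exact (mem_roots hf0).2 (hroot t ht)
  have hcr : f.roots.card ≤ Φ.natDegree := hfd ▸ card_roots' f
  have hge : n ≤ Φ.natDegree := by
    have := Multiset.card_le_card hle
    rw [Multiset.card_map, hcard] at this
    omega
  have hle' : Φ.natDegree ≤ n := by
    obtain ⟨t, ht⟩ : ∃ t, t ∈ ts := Multiset.card_pos_iff_exists_mem.1 (by omega)
    subst hxx
    exact degree_bound P0 Q0 P1 Q1 t ht n hdeg Φ hirr (by omega) (hroot t ht)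
  refine ⟨hcard, le_antisymm hle' hge, f.leadingCoeff, ?_⟩
  have : ts.map (fun t => aeval t P1 / aeval t Q1) = f.roots :=
    Multiset.eq_of_le_of_card_le hle (by rw [Multiset.card_map, hcard]; omega)
  rw [this]
  exact (IsAlgClosed.splits f).eq_prod_roots
end



theorem group_lemma {F Γ : Type} [Field F] [LinearOrderedCommGroupWithZero Γ]
    (v : Valuation F Γ) (ξ : Γ) (h0 : ξ ≠ 0) (T : Multiset F) (w : F → Γ) (y : F → F) (a b : ℕ)
    (hc : T.card = a) (hT : ∀ t ∈ T, w t ≤ 1 ∧ w t ^ a = ξ ∧ (b ≠ 0 → v (y t) = w t ^ b) ∧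
      (b = 0 → 1 ≤ v (y t))) :
    ∃ (U U' : Multiset F) (r : Γ), T = U + U' ∧ U.card = (if b = 0 then 0 else a) ∧ r ≠ 0 ∧ r ≤ 1 ∧
      r ^ (if b = 0 then 0 else a) = ξ ^ (if a = 0 then 0 else b) ∧ (∀ t ∈ U, v (y t) = r) ∧
      (∀ t ∈ U', 1 ≤ v (y t)) := by
  by_cases hb : b = 0
  · refine ⟨0, T, 1, by simp, by simp [hb], one_ne_zero, le_rfl, by simp [hb], by simp, ?_⟩
    intro t ht
    exact (hT t ht).2.2.2 hb
  by_cases ha : a = 0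
  · refine ⟨T, 0, 1, by simp, by simp [ha, hc], one_ne_zero, le_rfl, by simp [ha], ?_, by simp⟩
    intro t ht
    rw [ha, Multiset.card_eq_zero] at hc
    simp [hc] at ht
  obtain ⟨t0, ht0⟩ : ∃ t, t ∈ T := Multiset.card_pos_iff_exists_mem.1 (by omega)
  obtain ⟨k1, k2, k3, -⟩ := hT t0 ht0
  refine ⟨T, 0, w t0 ^ b, by simp, by simp [hb, hc], ?_, pow_le_one' k1 _, ?_, ?_, by simp⟩
  · apply pow_ne_zero
    intro h
    rw [h, zero_pow ha] at k2
    exact h0 k2.symm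
  · rw [if_neg hb, if_neg ha, ← k2, ← pow_mul, ← pow_mul, mul_comm]
  · intro t ht
    obtain ⟨l1, l2, l3, -⟩ := hT t ht
    rw [l3 hb]
    congr 1
    rw [← k2] at l2
    exact (pow_left_inj₀ zero_le zero_le ha).1 l2

section
variable {F Γ : Type} [Field F] [Algebra ℂ F] [LinearOrderedCommGroupWithZero Γ]
  (v : Valuation F Γ)

theorem yval_lt (hv : ∀ c : ℂ, c ≠ 0 → v (algebraMap ℂ F c) = 1) (P0 Q0 P1 Q1 : ℂ[X])
    (hP0 : P0 ≠ 0) (hQ0 : Q0 ≠ 0) (hP1 : P1 ≠ 0) (hQ1 : Q1 ≠ 0)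
    (h0 : P0.coeff 0 ≠ 0 ∨ Q0.coeff 0 ≠ 0) (h1 : P1.coeff 0 ≠ 0 ∨ Q1.coeff 0 ≠ 0)
    (x t : F) (hx1 : v x < 1) (ht0 : t ≠ 0)
    (hroot : aeval t P0 = x * aeval t Q0) (ht : v t < 1) :
    v t ^ P0.natTrailingDegree = v x ∧
    (P1.natTrailingDegree ≠ 0 → v (aeval t P1 / aeval t Q1) = v t ^ P1.natTrailingDegree) ∧
    (P1.natTrailingDegree = 0 → 1 ≤ v (aeval t P1 / aeval t Q1)) := by
  have htr : ∀ P : ℂ[X], P.coeff 0 ≠ 0 → P.natTrailingDegree = 0 := fun P h =>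
    natTrailingDegree_eq_zero.2 (Or.inr h)
  have hpos : 0 < v t := zero_lt_iff.2 ((v.ne_zero_iff).2 ht0)
  have e := congrArg v hroot
  rw [map_mul, valP_lt v hv t ht _ hP0, valP_lt v hv t ht _ hQ0] at e
  refine ⟨?_, ?_, ?_⟩
  · rcases h0 with h0 | h0
    · exfalso
      rw [htr _ h0, pow_zero] at e
      have : v x * v t ^ Q0.natTrailingDegree < 1 :=
        lt_of_le_of_lt (mul_le_of_le_one_right' (pow_le_one' ht.le _)) hx1
      exact this.ne e.symm
    · rw [e, htr _ h0, pow_zero, mul_one]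
  · intro hb
    have : Q1.natTrailingDegree = 0 := htr _ (h1.resolve_left fun h => hb (htr _ h))
    rw [map_div₀, valP_lt v hv t ht _ hP1, valP_lt v hv t ht _ hQ1, this, pow_zero, div_one]
  · intro hb
    rw [map_div₀, valP_lt v hv t ht _ hP1, valP_lt v hv t ht _ hQ1, hb, pow_zero, one_div]
    exact (one_le_inv₀ (pow_pos hpos _)).2 (pow_le_one' ht.le _)

theorem yval_gt (hv : ∀ c : ℂ, c ≠ 0 → v (algebraMap ℂ F c) = 1) (P0 Q0 P1 Q1 : ℂ[X])
    (hP0 : P0 ≠ 0) (hQ0 : Q0 ≠ 0) (hP1 : P1 ≠ 0) (hQ1 : Q1 ≠ 0) (n m : ℕ)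
    (hn : P0.natDegree ≤ n) (hn' : Q0.natDegree ≤ n) (h0 : P0.coeff n ≠ 0 ∨ Q0.coeff n ≠ 0)
    (hm : P1.natDegree ≤ m) (hm' : Q1.natDegree ≤ m) (h1 : P1.coeff m ≠ 0 ∨ Q1.coeff m ≠ 0)
    (x t : F) (hx1 : v x < 1)
    (hroot : aeval t P0 = x * aeval t Q0) (ht : 1 < v t) :
    (v t)⁻¹ ^ (n - P0.natDegree) = v x ∧
    (m - P1.natDegree ≠ 0 → v (aeval t P1 / aeval t Q1) = (v t)⁻¹ ^ (m - P1.natDegree)) ∧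
    (m - P1.natDegree = 0 → 1 ≤ v (aeval t P1 / aeval t Q1)) := by
  have hpos : 0 < v t := zero_lt_one.trans ht
  have e := congrArg v hroot
  rw [map_mul, valP_gt v hv t ht _ hP0, valP_gt v hv t ht _ hQ0] at e
  have hsub : ∀ d k : ℕ, d ≤ k → (v t)⁻¹ ^ (k - d) * v t ^ k = v t ^ d := by
    intro d k hd
    obtain ⟨j, rfl⟩ := Nat.exists_eq_add_of_le hd
    rw [Nat.add_sub_cancel_left, pow_add, inv_pow, mul_comm (v t ^ d),
      inv_mul_cancel_left₀ (pow_pos hpos _).ne']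
  have hle : ∀ P : ℂ[X], P.coeff n ≠ 0 → n ≤ P.natDegree := fun P h => le_natDegree_of_ne_zero h
  refine ⟨?_, ?_, ?_⟩
  · rcases h0 with h0 | h0
    · exfalso
      have h2 := le_natDegree_of_ne_zero h0
      have : v x * v t ^ Q0.natDegree < 1 * v t ^ Q0.natDegree :=
        mul_lt_mul_of_pos_right hx1 (pow_pos hpos _)
      rw [one_mul, ← e] at this
      exact absurd (pow_le_pow_right₀ ht.le (hn'.trans h2)) (not_le.2 this)
    · have h2 : Q0.natDegree = n := le_antisymm hn' (le_natDegree_of_ne_zero h0)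
      rw [h2, ← hsub _ _ hn] at e
      exact mul_right_cancel₀ (pow_pos hpos _).ne' e
  · intro hb
    have hd : Q1.natDegree = m := by
      rcases h1 with h1 | h1
      · have := le_natDegree_of_ne_zero h1
        omega
      · exact le_antisymm hm' (le_natDegree_of_ne_zero h1)
    rw [map_div₀, valP_gt v hv t ht _ hP1, valP_gt v hv t ht _ hQ1, hd, ← hsub _ _ hm,
      mul_div_assoc, div_self (pow_pos hpos _).ne', mul_one]
  · intro hb
    rw [map_div₀, valP_gt v hv t ht _ hP1, valP_gt v hv t ht _ hQ1, one_le_div₀ (pow_pos hpos _)]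
    exact pow_le_pow_right₀ ht.le (by omega)

theorem yval_eq (hv : ∀ c : ℂ, c ≠ 0 → v (algebraMap ℂ F c) = 1) (P0 Q0 P1 Q1 R0 R1 : ℂ[X])
    (a b : ℕ) (hR0 : P0 = X ^ a * R0) (hR1 : P1 = X ^ b * R1) (hcop : IsCoprime R0 R1)
    (x t : F) (hx1 : v x < 1) (hq : aeval t Q1 ≠ 0)
    (hroot : aeval t P0 = x * aeval t Q0) (ht : v t = 1) :
    1 ≤ v (aeval t P1 / aeval t Q1) := by
  have hle := valP_le v hv t ht.le
  have e : v (aeval t R0) < 1 := by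
    have : v (aeval t R0) = v (aeval t P0) := by
      rw [hR0]
      simp [ht]
    rw [this, hroot, map_mul]
    exact lt_of_le_of_lt (mul_le_of_le_one_right' (hle _)) hx1
  obtain ⟨p, q, hpq⟩ := hcop
  have h1 : v (aeval t p * aeval t R0) < 1 := by
    rw [map_mul]
    exact lt_of_le_of_lt (mul_le_of_le_one_left' (hle _)) e
  have h2 : v (aeval t q * aeval t R1) = 1 := by
    have h3 : aeval t q * aeval t R1 = 1 + -(aeval t p * aeval t R0) := by
      have := congrArg (aeval t) hpq
      rw [map_add, map_mul, map_mul, map_one] at this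
      rw [← this]; ring
    rw [h3, Valuation.map_add_eq_of_lt_left, map_one]
    rwa [Valuation.map_neg, map_one]
  have h4 : 1 ≤ v (aeval t R1) := by
    rw [← h2, map_mul]
    exact mul_le_of_le_one_left' (hle _)
  have h5 : v (aeval t P1) = v (aeval t R1) := by
    rw [hR1]
    simp [ht]
  rw [map_div₀, h5, one_le_div₀ (zero_lt_iff.2 (v.ne_zero_iff.2 hq))]
  exact (hle _).trans h4
end

theorem bivariate_monomial (m n : ℕ) (a : ℂ) :
    Polynomial.Bivariate.equivMvPolynomial ℂ (monomial n (monomial m a)) =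
      MvPolynomial.monomial (Finsupp.single 0 m + Finsupp.single 1 n) a := by
  rw [← C_mul_X_pow_eq_monomial, ← C_mul_X_pow_eq_monomial, C_mul, C_pow, map_mul, map_mul, map_pow,
    map_pow]
  simp only [Polynomial.Bivariate.equivMvPolynomial_C_C, Polynomial.Bivariate.equivMvPolynomial_C_X,
    Polynomial.Bivariate.equivMvPolynomial_X]
  rw [MvPolynomial.X_pow_eq_monomial, MvPolynomial.X_pow_eq_monomial, MvPolynomial.C_mul_monomial,
    MvPolynomial.monomial_mul]
  simp

theorem bivariate_coeff (Φ : ℂ[X][X]) (i j : ℕ) :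
    (Polynomial.Bivariate.equivMvPolynomial ℂ Φ).coeff (Finsupp.single 0 i + Finsupp.single 1 j) =
      (Φ.coeff j).coeff i := by
  induction Φ using Polynomial.induction_on' with
  | add p q hp hq => rw [map_add, MvPolynomial.coeff_add, hp, hq, coeff_add, coeff_add]
  | monomial n p =>
    induction p using Polynomial.induction_on' with
    | add p q hp hq => 
      rw [map_add, map_add, MvPolynomial.coeff_add, hp, hq, coeff_add, coeff_add]
    | monomial m a =>
      rw [bivariate_monomial, MvPolynomial.coeff_monomial, coeff_monomial]
      by_cases hn : n = j
      · by_cases hm : m = i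
        · simp [hn, hm]
        · rw [if_neg, if_pos hn, coeff_monomial, if_neg hm]
          intro h
          have := DFunLike.congr_fun h 0
          simp at this
          exact hm this
      · rw [if_neg, if_neg hn, coeff_zero]
        intro h
        have := DFunLike.congr_fun h 1
        simp at this
        exact hn this

theorem bivariate_eval (x y : RatFunc ℂ) (Φ : ℂ[X][X]) :
    MvPolynomial.aeval ![x, y] (Polynomial.Bivariate.equivMvPolynomial ℂ Φ) =
      Φ.eval₂ (aeval (R := ℂ) x).toRingHom y := by
  induction Φ using Polynomial.induction_on' with
  | add p q hp hq => rw [map_add, map_add, hp, hq, eval₂_add]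
  | monomial n p =>
    induction p using Polynomial.induction_on' with
    | add p q hp hq => 
      rw [map_add, map_add, map_add, hp, hq, eval₂_add]
    | monomial m a =>
      rw [bivariate_monomial, MvPolynomial.aeval_monomial, eval₂_monomial]
      rw [Finsupp.prod_add_index' (by simp) (by intros; rw [pow_add])]
      simp [aeval_monomial, mul_assoc]

theorem finsupp_two (d : Fin 2 →₀ ℕ) : Finsupp.single 0 (d 0) + Finsupp.single 1 (d 1) = d := by
  ext i
  fin_cases i <;> simp

theorem exists_const_coeff (Φ : ℂ[X][X]) (hirr : Irreducible Φ) (hd : Φ.natDegree ≠ 0) :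
    ∃ j, (Φ.coeff j).coeff 0 ≠ 0 := by
  by_contra! hc
  have hdvd : C (X : ℂ[X]) ∣ Φ := by
    rw [C_dvd_iff_dvd_coeff]
    intro j
    exact X_dvd_iff.2 (hc j)
  obtain ⟨g, hg⟩ := hdvd
  rcases hirr.isUnit_or_isUnit hg with h | h
  · rw [isUnit_C] at h
    exact not_isUnit_X h
  · apply hd
    rw [hg, natDegree_mul (by simp) h.ne_zero, natDegree_C, natDegree_eq_zero_of_isUnit h]



theorem newton_poly {F : Type} [Field F] [Algebra ℂ F] [Algebra (RatFunc ℂ) F]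
    [IsScalarTower ℂ (RatFunc ℂ) F] [IsAlgClosed F] (P0 Q0 P1 Q1 R0 R1 : ℂ[X])
    (hP0 : P0 ≠ 0) (hQ0 : Q0 ≠ 0) (hP1 : P1 ≠ 0) (hQ1 : Q1 ≠ 0)
    (hPQ : IsCoprime P0 Q0) (hR0 : P0 = X ^ P0.natTrailingDegree * R0)
    (hR1 : P1 = X ^ P1.natTrailingDegree * R1) (hcop : IsCoprime R0 R1)
    (h00 : P0.coeff 0 ≠ 0 ∨ Q0.coeff 0 ≠ 0) (h01 : P1.coeff 0 ≠ 0 ∨ Q1.coeff 0 ≠ 0)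
    (n m : ℕ) (hn1 : 1 ≤ n) (hn : P0.natDegree ≤ n) (hn' : Q0.natDegree ≤ n)
    (h0 : P0.coeff n ≠ 0 ∨ Q0.coeff n ≠ 0)
    (hm : P1.natDegree ≤ m) (hm' : Q1.natDegree ≤ m) (h1 : P1.coeff m ≠ 0 ∨ Q1.coeff m ≠ 0)
    (C4 : ∀ (t u : F), Transcendental ℂ t →
        aeval t P0 * aeval u Q0 = aeval u P0 * aeval t Q0 →
        aeval t P1 * aeval u Q1 = aeval u P1 * aeval t Q1 → t = u)
    (Φ : ℂ[X][X]) (hirr : Irreducible Φ)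
    (hΦ : Φ.eval₂ (aeval (R := ℂ) (algebraMap ℂ[X] (RatFunc ℂ) P0 / algebraMap ℂ[X] (RatFunc ℂ) Q0)).toRingHom
      (algebraMap ℂ[X] (RatFunc ℂ) P1 / algebraMap ℂ[X] (RatFunc ℂ) Q1) = 0)
    (S : ℕ → ℕ → Prop) (hS : ∀ i j, S i j ↔ (Φ.coeff j).coeff i ≠ 0)
    (n0 m0 n1 m1 : ℕ)
    (hn0 : n0 = if P1.natTrailingDegree = 0 then 0 else P0.natTrailingDegree)
    (hm0 : m0 = if P0.natTrailingDegree = 0 then 0 else P1.natTrailingDegree)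
    (hn1' : n1 = if m - P1.natDegree = 0 then 0 else n - P0.natDegree)
    (hm1 : m1 = if n - P0.natDegree = 0 then 0 else m - P1.natDegree) :
    (S 0 (n0 + n1) ∧ ∀ j < n0 + n1, ¬ S 0 j) ∧
    (S (m0 + m1) 0 ∧ ∀ i < m0 + m1, ¬ S i 0) ∧
    (∀ i j, S i j → n0 * m0 + min (m0 * n1) (m1 * n0) ≤ n0 * i + m0 * j) ∧
    (∀ i j, S i j → n1 * m1 + min (m1 * n0) (m0 * n1) ≤ n1 * i + m1 * j) ∧
    (n1 * m0 < n0 * m1 → S m0 n1) ∧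
    (n0 * m1 < n1 * m0 → S m1 n0) := by
  classical
  set x : F := algebraMap (RatFunc ℂ) F RatFunc.X with hxx
  have hx : Transcendental ℂ x := x_trans
  obtain ⟨B, hv, hx1⟩ := val_exists x hx
  set v := B.valuation with hvdef
  have hx0 : x ≠ 0 := by
    rintro h
    rw [h] at hx
    exact hx isAlgebraic_zero
  have hξ0 : v x ≠ 0 := v.ne_zero_iff.2 hx0
  obtain ⟨hcard, hdeg, ψ, hfac⟩ := factorisation P0 Q0 P1 Q1 x hxx hPQ hQ0 hQ1 n hn1 hn hn' h0 C4
    Φ hirr hΦ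
  obtain ⟨hc1, hc2⟩ := root_count v hv P0 Q0 x hx1 hP0
  have hroot : ∀ t ∈ (WW P0 Q0 x).roots, aeval t P0 = x * aeval t Q0 := root_eq P0 Q0 x
  have htr : ∀ t ∈ (WW P0 Q0 x).roots, Transcendental ℂ t := fun t => root_trans P0 Q0 hPQ x t hx
  set ts := (WW P0 Q0 x).roots with hts
  set T0 := ts.filter (fun t => v t < 1) with hT0
  set T1 := ts.filter (fun t => ¬ v t ≤ 1) with hT1
  set T2 := (ts.filter (fun t => v t ≤ 1)).filter (fun t => ¬ v t < 1) with hT2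
  have hsplit : ts = T0 + T1 + T2 := by
    have e1 := Multiset.filter_add_not (fun t => v t ≤ 1) ts
    have e2 := Multiset.filter_add_not (fun t => v t < 1) (ts.filter (fun t => v t ≤ 1))
    have e3 : (ts.filter (fun t => v t ≤ 1)).filter (fun t => v t < 1) = T0 := by
      rw [Multiset.filter_filter]
      apply Multiset.filter_congr
      intro t _
      exact ⟨fun h => h.1, fun h => ⟨h, h.le⟩⟩
    rw [e3] at e2
    rw [← e1, ← e2, add_right_comm]
  have hk0 : T0.card = P0.natTrailingDegree := by
    rw [hT0, ← Multiset.countP_eq_card_filter, hc1]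
  have hk1 : T1.card = n - P0.natDegree := by
    have e1 := congrArg Multiset.card (Multiset.filter_add_not (fun t => v t ≤ 1) ts)
    rw [Multiset.card_add, ← Multiset.countP_eq_card_filter, hc2, hcard] at e1
    rw [hT1]
    omega
  set y : F → F := fun t => aeval t P1 / aeval t Q1 with hy
  obtain ⟨U0, U0', r0, hU0, hUc0, hr0, hr0', hp0, hv0, hv0'⟩ := group_lemma v (v x) hξ0 T0 v y
    P0.natTrailingDegree P1.natTrailingDegree hk0 (by
      intro t ht
      obtain ⟨ht, hlt⟩ := Multiset.mem_filter.1 ht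
      refine ⟨hlt.le, yval_lt v hv P0 Q0 P1 Q1 hP0 hQ0 hP1 hQ1 h00 h01 x t hx1 ?_ (hroot t ht) hlt⟩
      rintro rfl
      exact htr 0 ht isAlgebraic_zero)
  obtain ⟨U1, U1', r1, hU1, hUc1, hr1, hr1', hp1, hv1, hv1'⟩ := group_lemma v (v x) hξ0 T1
    (fun t => (v t)⁻¹) y (n - P0.natDegree) (m - P1.natDegree) hk1 (by
      intro t ht
      obtain ⟨ht, hlt⟩ := Multiset.mem_filter.1 ht
      have hlt := not_le.1 hlt
      exact ⟨(inv_lt_one_of_one_lt₀ hlt).le, yval_gt v hv P0 Q0 P1 Q1 hP0 hQ0 hP1 hQ1 n m hn hn' h0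
        hm hm' h1 x t hx1 (hroot t ht) hlt⟩)
  have hv2 : ∀ t ∈ T2, 1 ≤ v (y t) := by
    intro t ht
    obtain ⟨ht, hlt⟩ := Multiset.mem_filter.1 ht
    obtain ⟨ht, hle⟩ := Multiset.mem_filter.1 ht
    exact yval_eq v hv P0 Q0 P1 Q1 R0 R1 _ _ hR0 hR1 hcop x t hx1 (trans_ne t (htr t ht) _ hQ1)
      (hroot t ht) (le_antisymm hle (not_lt.1 hlt))
  rw [← hn0] at hUc0 hp0
  rw [← hm0] at hp0
  rw [← hn1'] at hUc1 hp1
  rw [← hm1] at hp1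
  set f := Φ.map (aeval (R := ℂ) x).toRingHom with hf
  have hfc : ∀ j, f.coeff j = aeval x (Φ.coeff j) := fun j => by rw [hf, coeff_map]; rfl
  have hrest : ∀ z ∈ (U0' + U1' + T2).map y, 1 ≤ v z := by
    intro z hz
    obtain ⟨t, ht, rfl⟩ := Multiset.mem_map.1 hz
    rcases Multiset.mem_add.1 ht with ht | ht
    · rcases Multiset.mem_add.1 ht with ht | ht
      · exact hv0' t ht
      · exact hv1' t ht
    · exact hv2 t ht
  have hmv0 : ∀ z ∈ U0.map y, v z = r0 := by
    intro z hz
    obtain ⟨t, ht, rfl⟩ := Multiset.mem_map.1 hz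
    exact hv0 t ht
  have hmv1 : ∀ z ∈ U1.map y, v z = r1 := by
    intro z hz
    obtain ⟨t, ht, rfl⟩ := Multiset.mem_map.1 hz
    exact hv1 t ht
  have hS1 : ∀ i j, S i j → v x ^ i ≤ v (f.coeff j) := by
    intro i j h
    rw [hS] at h
    rw [hfc, valP_lt v hv x hx1 _ (by rintro h0; simp [h0] at h)]
    exact pow_le_pow_right_of_le_one' hx1.le (natTrailingDegree_le_of_ne_zero h)
  have hS2 : ∀ i j, v (f.coeff j) = v x ^ i → S i j := by
    intro i j h
    have hne : Φ.coeff j ≠ 0 := by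
      intro h0
      rw [hfc, h0, map_zero, map_zero] at h
      exact pow_ne_zero _ hξ0 h.symm
    rw [hfc, valP_lt v hv x hx1 _ hne] at h
    have hpos := zero_lt_iff.2 hξ0
    have : (Φ.coeff j).natTrailingDegree = i := by
      apply le_antisymm
      · exact (pow_le_pow_iff_right_of_lt_one₀ hpos hx1).1 h.ge
      · exact (pow_le_pow_iff_right_of_lt_one₀ hpos hx1).1 h.le
    rw [hS, ← this]
    exact trailingCoeff_nonzero_iff_nonzero.2 hne
  have hle : ∀ j, v (f.coeff j) ≤ 1 := fun j => by
    rw [hfc]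
    exact valP_le v hv x hx1.le _
  have hone : ∃ j, v (f.coeff j) = 1 := by
    obtain ⟨j, hj⟩ := exists_const_coeff Φ hirr (by omega)
    exact ⟨j, by rw [hfc]; exact valP_one v hv x hx1 _ hj⟩
  have hz0 : n0 ≠ 0 → m0 ≠ 0 := by
    rw [hn0, hm0]; clear hn0 hm0 hn1' hm1; split_ifs <;> omega
  have hz1 : n1 ≠ 0 → m1 ≠ 0 := by
    rw [hn1', hm1]; clear hn0 hm0 hn1' hm1; split_ifs <;> omega
  obtain ⟨A1, A2, A3, A4⟩ := newton_core v (v x) hξ0 hx1 ψ (U0.map y) (U1.map y) ((U0' + U1' + T2).map y) f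
    (by
      rw [hfac, hsplit, hU0, hU1]
      congr 3
      simp only [Multiset.map_add]
      ac_rfl)
    S hS1 hS2 hle hone n0 m0 n1 m1 r0 r1 hr0 hr1 hr0' hr1' hp0 hp1 hz0 hz1 (by simpa using hUc0)
    (by simpa using hUc1) hmv0 hmv1 hrest
  obtain ⟨-, -, B3, B4⟩ := newton_core v (v x) hξ0 hx1 ψ (U1.map y) (U0.map y) ((U0' + U1' + T2).map y) f
    (by
      rw [hfac, hsplit, hU0, hU1]
      congr 3
      simp only [Multiset.map_add]
      ac_rfl)
    S hS1 hS2 hle hone n1 m1 n0 m0 r1 r0 hr1 hr0 hr1' hr0' hp1 hp0 hz1 hz0 (by simpa using hUc1)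
    (by simpa using hUc0) hmv1 hmv0 hrest
  exact ⟨A1, A2, A3, B3, A4, B4⟩



theorem poly_coeff (S : Finset ℕ) (c : {s // s ∈ S} → ℂ) (n : ℕ) :
    (polyOfCoeffs S c).coeff n = if h : n ∈ S then c ⟨n, h⟩ else 0 := by
  rw [polyOfCoeffs, finsetSum_coeff]
  simp only [coeff_C_mul, coeff_X_pow]
  split_ifs with h
  · rw [Finset.sum_eq_single ⟨n, h⟩]
    · simp
    · intro b _ hb
      rw [if_neg, mul_zero]
      rintro rfl
      exact hb rfl
    · simp
  · apply Finset.sum_eq_zero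
    intro b _
    rw [if_neg, mul_zero]
    rintro rfl
    exact h b.2

theorem poly_coeff_ne (S : Finset ℕ) (c : {s // s ∈ S} → ℂ) (hc : ∀ s, c s ≠ 0) (n : ℕ) :
    (polyOfCoeffs S c).coeff n ≠ 0 ↔ n ∈ S := by
  rw [poly_coeff]
  split_ifs with h
  · simp [hc, h]
  · simp [h]

theorem poly_ne (S : Finset ℕ) (hS : S.Nonempty) (c : {s // s ∈ S} → ℂ) (hc : ∀ s, c s ≠ 0) :
    polyOfCoeffs S c ≠ 0 := by
  obtain ⟨n, hn⟩ := hS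
  intro h
  have := (poly_coeff_ne S c hc n).2 hn
  simp [h] at this

theorem poly_natDegree (S : Finset ℕ) (hS : S.Nonempty) (c : {s // s ∈ S} → ℂ) (hc : ∀ s, c s ≠ 0) :
    (polyOfCoeffs S c).natDegree = S.max' hS := by
  apply le_antisymm
  · apply Finset.le_max'
    rw [← poly_coeff_ne S c hc]
    simpa using poly_ne S hS c hc
  · apply le_natDegree_of_ne_zero
    rw [poly_coeff_ne S c hc]
    exact Finset.max'_mem _ _

theorem poly_trailing (S : Finset ℕ) (hS : S.Nonempty) (c : {s // s ∈ S} → ℂ) (hc : ∀ s, c s ≠ 0) :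
    (polyOfCoeffs S c).natTrailingDegree = S.min' hS := by
  apply le_antisymm
  · apply natTrailingDegree_le_of_ne_zero
    rw [poly_coeff_ne S c hc]
    exact Finset.min'_mem _ _
  · apply Finset.min'_le
    rw [← poly_coeff_ne S c hc]
    exact trailingCoeff_nonzero_iff_nonzero.2 (poly_ne S hS c hc)

theorem poly_factor (S : Finset ℕ) (hS : S.Nonempty) (c : {s // s ∈ S} → ℂ) :
    polyOfCoeffs S c = X ^ (S.min' hS) * ∑ s ∈ S.attach, C (c s) * X ^ ((s : ℕ) - S.min' hS) := by
  rw [polyOfCoeffs, Finset.mul_sum]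
  refine Finset.sum_congr rfl fun s _ => ?_
  rw [mul_left_comm, ← pow_add, Nat.add_sub_cancel' (Finset.min'_le _ _ s.2)]

theorem zero_mem_iff (A B : Finset ℕ) (hA : A.Nonempty) (h : 0 ∈ A ∪ B) :
    0 ∈ B \ A ↔ A.min' hA ≠ 0 := by
  rw [Finset.mem_sdiff]
  constructor
  · rintro ⟨-, h1⟩ h2
    exact h1 (h2 ▸ Finset.min'_mem _ _)
  · intro h1
    have : 0 ∉ A := fun h2 => h1 (Nat.le_zero.1 (Finset.min'_le _ _ h2))
    exact ⟨(Finset.mem_union.1 h).resolve_left this, this⟩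

theorem max_mem_iff (A B : Finset ℕ) (hA : A.Nonempty) (n : ℕ) (h : n ∈ A ∪ B)
    (hmax : ∀ s ∈ A ∪ B, s ≤ n) : n ∈ B \ A ↔ n - A.max' hA ≠ 0 := by
  rw [Finset.mem_sdiff]
  have h3 := hmax _ (Finset.mem_union_left _ (Finset.max'_mem A hA))
  constructor
  · rintro ⟨-, h1⟩ h2
    have : A.max' hA = n := by omega
    exact h1 (this ▸ Finset.max'_mem _ _)
  · intro h1
    have : n ∉ A := fun h2 => by
      have := Finset.le_max' _ _ h2
      omega
    exact ⟨(Finset.mem_union.1 h).resolve_left this, this⟩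

/-- The lower left corner of the implicit Newton polygon (different denominators).
`SS 0, SS 1, SS 2, SS 3` are the supports of `P₀, Q₀, P₁, Q₁`. -/
theorem implicit_lower_left_corner (SS : Fin 4 → Finset ℕ) (hne : ∀ i, (SS i).Nonempty)
    (h00 : 0 ∈ SS 0 ∪ SS 1) (h01 : 0 ∈ SS 2 ∪ SS 3)
    (hgcd : ((SS 0 ∪ SS 1 ∪ SS 2 ∪ SS 3).filter (fun s => s ≠ 0)).gcd id = 1)
    (a0n a1m : ℕ)
    (ha0nmem : a0n ∈ SS 0 ∪ SS 1) (ha0nmax : ∀ s ∈ SS 0 ∪ SS 1, s ≤ a0n)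
    (ha1mmem : a1m ∈ SS 2 ∪ SS 3) (ha1mmax : ∀ s ∈ SS 2 ∪ SS 3, s ≤ a1m)
    (ha0n1 : 1 ≤ a0n) (ha1m1 : 1 ≤ a1m)
    (hQ0 : ¬ SS 1 ⊆ SS 0) (hQ1 : ¬ SS 3 ⊆ SS 2)
    (E E' : ℕ) (δ : ℤ)
    (hE : E = (if 0 ∈ SS 3 \ SS 2 then (SS 0).min' (hne 0) else 0) +
      (if a1m ∈ SS 3 \ SS 2 then a0n - (SS 0).max' (hne 0) else 0))
    (hE' : E' = (if 0 ∈ SS 1 \ SS 0 then (SS 2).min' (hne 2) else 0) +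
      (if a0n ∈ SS 1 \ SS 0 then a1m - (SS 2).max' (hne 2) else 0))
    (hδ : δ = ((a0n : ℤ) - ((SS 0).max' (hne 0) : ℤ)) * ((SS 2).min' (hne 2) : ℤ) -
      ((SS 0).min' (hne 0) : ℤ) * ((a1m : ℤ) - ((SS 2).max' (hne 2) : ℤ)))
    (hEne : E ≠ 0) :
    (((0 ∈ SS 1 \ SS 0 ∧ 0 ∈ SS 3 \ SS 2) ∨
        (a0n ∈ SS 1 \ SS 0 ∧ a1m ∈ SS 3 \ SS 2)) ∧ E' ≠ 0) ∧
    ∃ G : MvPolynomial (Σ i : Fin 4, {s // s ∈ SS i}) ℂ, G ≠ 0 ∧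
      ∀ c : (Σ i : Fin 4, {s // s ∈ SS i}) → ℂ, MvPolynomial.eval c G ≠ 0 →
        ∀ φ : MvPolynomial (Fin 2) ℂ, Irreducible φ → vanishesDiff SS c φ →
          ((0 : ℝ), (E : ℝ)) ∈ Set.extremePoints ℝ (newtonPolygon φ) ∧
          ((E' : ℝ), (0 : ℝ)) ∈ Set.extremePoints ℝ (newtonPolygon φ) ∧
          (¬ ((0 ∈ SS 1 \ SS 0 ∧ 0 ∈ SS 3 \ SS 2 ∧
                a0n ∈ SS 1 \ SS 0 ∧ a1m ∈ SS 3 \ SS 2) ∧ δ ≠ 0) →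
            segment ℝ ((0 : ℝ), (E : ℝ)) ((E' : ℝ), (0 : ℝ)) ⊆ frontier (newtonPolygon φ)) ∧
          ((0 ∈ SS 1 \ SS 0 ∧ 0 ∈ SS 3 \ SS 2 ∧
                a0n ∈ SS 1 \ SS 0 ∧ a1m ∈ SS 3 \ SS 2) ∧ δ ≠ 0 →
            (if δ < 0 then
                ((((SS 2).min' (hne 2) : ℕ) : ℝ), ((a0n - (SS 0).max' (hne 0) : ℕ) : ℝ))
              else
                (((a1m - (SS 2).max' (hne 2) : ℕ) : ℝ), (((SS 0).min' (hne 0) : ℕ) : ℝ)))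
                ∈ Set.extremePoints ℝ (newtonPolygon φ) ∧
            segment ℝ ((0 : ℝ), (E : ℝ))
              (if δ < 0 then
                  ((((SS 2).min' (hne 2) : ℕ) : ℝ), ((a0n - (SS 0).max' (hne 0) : ℕ) : ℝ))
                else
                  (((a1m - (SS 2).max' (hne 2) : ℕ) : ℝ), (((SS 0).min' (hne 0) : ℕ) : ℝ)))
              ⊆ frontier (newtonPolygon φ) ∧
            segment ℝ
              (if δ < 0 then
                  ((((SS 2).min' (hne 2) : ℕ) : ℝ), ((a0n - (SS 0).max' (hne 0) : ℕ) : ℝ))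
                else
                  (((a1m - (SS 2).max' (hne 2) : ℕ) : ℝ), (((SS 0).min' (hne 0) : ℕ) : ℝ)))
              ((E' : ℝ), (0 : ℝ)) ⊆ frontier (newtonPolygon φ)) := by
  classical
  have z0 := zero_mem_iff (SS 0) (SS 1) (hne 0) h00
  have z1 := zero_mem_iff (SS 2) (SS 3) (hne 2) h01
  have w0 := max_mem_iff (SS 0) (SS 1) (hne 0) a0n ha0nmem ha0nmax
  have w1 := max_mem_iff (SS 2) (SS 3) (hne 2) a1m ha1mmem ha1mmax
  have hM0 : (SS 0).max' (hne 0) ≤ a0n :=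
    ha0nmax _ (Finset.mem_union_left _ (Finset.max'_mem _ _))
  have hM1 : (SS 2).max' (hne 2) ≤ a1m :=
    ha1mmax _ (Finset.mem_union_left _ (Finset.max'_mem _ _))
  rw [← Nat.cast_sub hM0, ← Nat.cast_sub hM1] at hδ
  simp only [z0, z1, w0, w1] at hE hE' ⊢
  obtain ⟨G, hG0, hG⟩ := generic_conditions SS hne h00 h01 hgcd a0n a1m ha0nmem ha1mmem ha0n1 ha1m1
  have main : ∀ c, MvPolynomial.eval c G ≠ 0 → ∀ φ : MvPolynomial (Fin 2) ℂ, Irreducible φ →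
      vanishesDiff SS c φ → ∀ n0 m0 n1 m1 : ℕ,
      n0 = (if (SS 2).min' (hne 2) = 0 then 0 else (SS 0).min' (hne 0)) →
      m0 = (if (SS 0).min' (hne 0) = 0 then 0 else (SS 2).min' (hne 2)) →
      n1 = (if a1m - (SS 2).max' (hne 2) = 0 then 0 else a0n - (SS 0).max' (hne 0)) →
      m1 = (if a0n - (SS 0).max' (hne 0) = 0 then 0 else a1m - (SS 2).max' (hne 2)) → 
      ∃ S : ℕ → ℕ → Prop, (∀ d ∈ φ.support, S (d 0) (d 1)) ∧
      (∀ i j, S i j → ∃ d ∈ φ.support, d 0 = i ∧ d 1 = j) ∧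
      (S 0 (n0 + n1) ∧ ∀ j < n0 + n1, ¬ S 0 j) ∧
      (S (m0 + m1) 0 ∧ ∀ i < m0 + m1, ¬ S i 0) ∧
      (∀ i j, S i j → n0 * m0 + min (m0 * n1) (m1 * n0) ≤ n0 * i + m0 * j) ∧
      (∀ i j, S i j → n1 * m1 + min (m1 * n0) (m0 * n1) ≤ n1 * i + m1 * j) ∧
      (n1 * m0 < n0 * m1 → S m0 n1) ∧
      (n0 * m1 < n1 * m0 → S m1 n0) := by
    intro c hc φ hφ hvan n0 m0 n1 m1 hn0 hm0 hn1 hm1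
    obtain ⟨C1, C2, C3, C4⟩ := hG c hc
    have t0 := poly_trailing (SS 0) (hne 0) (fun s => c ⟨0, s⟩) (fun s => C1 _)
    have t2 := poly_trailing (SS 2) (hne 2) (fun s => c ⟨2, s⟩) (fun s => C1 _)
    have d0 := poly_natDegree (SS 0) (hne 0) (fun s => c ⟨0, s⟩) (fun s => C1 _)
    have d1 := poly_natDegree (SS 1) (hne 1) (fun s => c ⟨1, s⟩) (fun s => C1 _)
    have d2 := poly_natDegree (SS 2) (hne 2) (fun s => c ⟨2, s⟩) (fun s => C1 _)
    have d3 := poly_natDegree (SS 3) (hne 3) (fun s => c ⟨3, s⟩) (fun s => C1 _)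
    have hco : ∀ i n, (polyOfCoeffs (SS i) (fun s => c ⟨i, s⟩)).coeff n ≠ 0 ↔ n ∈ SS i := fun i n =>
      poly_coeff_ne (SS i) (fun s => c ⟨i, s⟩) (fun s => C1 _) n
    have hnz : ∀ i, polyOfCoeffs (SS i) (fun s => c ⟨i, s⟩) ≠ 0 := fun i =>
      poly_ne (SS i) (hne i) (fun s => c ⟨i, s⟩) (fun s => C1 _)
    set Φ := (Polynomial.Bivariate.equivMvPolynomial ℂ).symm φ with hΦ
    have hφΦ : φ = Polynomial.Bivariate.equivMvPolynomial ℂ Φ := by simp [hΦ]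
    have hirr : Irreducible Φ :=
      (MulEquiv.irreducible_iff (Polynomial.Bivariate.equivMvPolynomial ℂ).symm).2 hφ
    rw [vanishesDiff, hφΦ, bivariate_eval] at hvan
    have hsupp : ∀ i j, (Φ.coeff j).coeff i ≠ 0 ↔
        (Finsupp.single 0 i + Finsupp.single 1 j : Fin 2 →₀ ℕ) ∈ φ.support := by
      intro i j
      rw [MvPolynomial.mem_support_iff, hφΦ, bivariate_coeff]
    refine ⟨fun i j => (Φ.coeff j).coeff i ≠ 0, ?_, ?_, ?_⟩
    · intro d hd
      rw [hsupp, finsupp_two]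
      exact hd
    · intro i j h
      rw [hsupp] at h
      exact ⟨_, h, by simp, by simp⟩
    · have f0 : polyOfCoeffs (SS 0) (fun s => c ⟨0, s⟩) =
          X ^ (polyOfCoeffs (SS 0) (fun s => c ⟨0, s⟩)).natTrailingDegree *
          ∑ s ∈ (SS 0).attach, C (c ⟨0, s⟩) * X ^ ((s : ℕ) - (SS 0).min' (hne 0)) := by
        rw [t0]
        exact poly_factor (SS 0) (hne 0) (fun s => c ⟨0, s⟩)
      have f2 : polyOfCoeffs (SS 2) (fun s => c ⟨2, s⟩) =
          X ^ (polyOfCoeffs (SS 2) (fun s => c ⟨2, s⟩)).natTrailingDegree *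
          ∑ s ∈ (SS 2).attach, C (c ⟨2, s⟩) * X ^ ((s : ℕ) - (SS 2).min' (hne 2)) := by
        rw [t2]
        exact poly_factor (SS 2) (hne 2) (fun s => c ⟨2, s⟩)
      have hC4 := C4 (AlgebraicClosure (RatFunc ℂ))
      simp only [ratFuncOf] at hvan
      refine newton_poly (F := AlgebraicClosure (RatFunc ℂ))
        (polyOfCoeffs (SS 0) (fun s => c ⟨0, s⟩)) (polyOfCoeffs (SS 1) (fun s => c ⟨1, s⟩))
        (polyOfCoeffs (SS 2) (fun s => c ⟨2, s⟩)) (polyOfCoeffs (SS 3) (fun s => c ⟨3, s⟩))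
        _ _ (hnz 0) (hnz 1) (hnz 2) (hnz 3) C2 f0
        f2 C3 ?_ ?_ a0n a1m ha0n1 ?_ ?_ ?_ ?_ ?_ ?_
        hC4 Φ hirr hvan _ (fun i j => Iff.rfl) n0 m0 n1 m1 ?_ ?_ ?_ ?_
      · rw [hco, hco]; exact Finset.mem_union.1 h00
      · rw [hco, hco]; exact Finset.mem_union.1 h01
      · rw [d0]; exact hM0
      · rw [d1]; exact ha0nmax _ (Finset.mem_union_right _ (Finset.max'_mem _ _))
      · rw [hco, hco]; exact Finset.mem_union.1 ha0nmem
      · rw [d2]; exact hM1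
      · rw [d3]; exact ha1mmax _ (Finset.mem_union_right _ (Finset.max'_mem _ _))
      · rw [hco, hco]; exact Finset.mem_union.1 ha1mmem
      · rw [t0, t2]; exact hn0
      · rw [t0, t2]; exact hm0
      · rw [d0, d2]; exact hn1
      · rw [d0, d2]; exact hm1
  generalize (SS 0).min' (hne 0) = a at *
  generalize (SS 2).min' (hne 2) = b at *
  generalize a0n - (SS 0).max' (hne 0) = a' at *
  generalize a1m - (SS 2).max' (hne 2) = b' at *
  have hE2 : E = (if b = 0 then 0 else a) + (if b' = 0 then 0 else a') := by
    rw [hE]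
    split_ifs <;> omega
  have hE2' : E' = (if a = 0 then 0 else b) + (if a' = 0 then 0 else b') := by
    rw [hE']
    split_ifs <;> omega
  clear hE hE'
  refine ⟨⟨?_, ?_⟩, G, hG0, ?_⟩
  · by_contra hcon
    apply hEne
    rw [hE2]
    split_ifs <;> omega
  · intro h
    apply hEne
    rw [hE2]
    rw [hE2'] at h
    clear hE2 hE2'
    split_ifs at h ⊢ <;> omega
  · intro c hc φ hφ hvan
    obtain ⟨S, g1, g2, g3, g4, g5, g6, g7, g8⟩ := main c hc φ hφ hvan _ _ _ _ rfl rfl rfl rfl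
    clear main hG
    have hne1 : 0 < (if b = 0 then 0 else a) + (if b' = 0 then 0 else a') := by omega
    have hne2 : 0 < (if a = 0 then 0 else b) + (if a' = 0 then 0 else b') := by
      clear hE2' 
      rw [hE2] at hEne
      split_ifs at hEne ⊢ <;> omega
    have conc := geom_conclude φ S g1 g2 (if b = 0 then 0 else a) (if a = 0 then 0 else b)
      (if b' = 0 then 0 else a') (if a' = 0 then 0 else b') hne1 hne2
      (by split_ifs <;> omega) (by split_ifs <;> omega) g3 g4 g5 g6 g7 g8
    rw [← hE2, ← hE2'] at conc
    obtain ⟨k1, k2, k3, k4, k5⟩ := conc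
    refine ⟨k1, k2, ?_, ?_⟩
    · intro hnot
      apply k3
      by_cases ha : a = 0
      · simp [ha]
      by_cases hb : b = 0
      · simp [hb]
      by_cases ha' : a' = 0
      · simp [ha']
      by_cases hb' : b' = 0
      · simp [hb']
      have hd : δ = 0 := by
        by_contra hd
        exact hnot ⟨⟨ha, hb, ha', hb'⟩, hd⟩
      rw [if_neg ha, if_neg hb, if_neg ha', if_neg hb']
      rw [hd] at hδ
      zify
      linarith
    · rintro ⟨⟨ha, hb, ha', hb'⟩, hd⟩
      rw [if_neg ha, if_neg hb, if_neg ha', if_neg hb'] at k4 k5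
      by_cases hneg : δ < 0
      · simp only [if_pos hneg]
        apply k4
        zify
        linarith
      · simp only [if_neg hneg]
        apply k5
        have : 0 < δ := lt_of_le_of_ne (not_lt.1 hneg) (Ne.symm hd)
        zify
        linarith
end
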